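/- Let Ω ⊆ ℝ³ be open and α > −1, and assume (QPD). There exist constants c₁, c₂ > 0, depending only on α and c₀, such that: if R > 0 and u ∈ H̊¹(Ω;ℝ³) satisfies Lu = 0 on Ω∩B_{2R}, then for every ρ ∈ (0,R), sup_{x ∈ Ω∩B_ρ} |u(x)|² + ∫_{Ω∩B_ρ} |Du(x)|² |x|^{−1} dx ≤ c₁ · M_{2R}(u) · exp( −c₂ ∫_ρ^R cap(B̄_r ∖ Ω) r^{−2} dr ). -/

import Mathlib

/-!
The proof is an Agmon-type exponential weight argument. Fix `ρ < R`, put `ρₖ = 2ᵏ ρ` and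
`aₖ = cap(B̄_{2ρₖ} ∖ Ω) / ρₖ` for the scales with `4 ρₖ ≤ R`, and let `η` be a cutoff which equals
`1` on `B_ρ`, is supported in `B_{2R}`, and decays by the factor `exp(-δ aₖ)` across the shell
`2ρₖ < |x| < 4ρₖ`, so that it has picked up the full factor `exp(-δ ∑ aₖ)` by the time it is cut
off at scale `R`.

The inequality (QPD) is applied to `ηv`, where `v` is a test field close to `u`. Splitting
`L(ηv) = ηLv + [L, η]v`, the commutator is bounded by a small multiple of the gradient term on the
left plus `|v|²` times derivatives of `η`. These derivatives consist of a term at scale `R`, which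
carries `exp(-2δ ∑ aₖ)` and produces the right-hand side, and of a term of size
`δ η² ∑ aₖ ρₖ⁻³ 1_{|x| < 4ρₖ}`. The capacitary Poincaré inequality on the balls `B_{4ρₖ}`, summed
over `k`, is a Hardy inequality, which absorbs the latter term on the left for small `δ`.

There remains `∫ η² Lv · Φ(·-y)v`. If `y ∉ ∂Ω`, the approximations `v` may be taken equal to `u`
near `y`, so that the singularity of `Φ` is not seen; an integration by parts and `Lu = 0` on
`Ω ∩ B_{2R}` then show that this term tends to `0` as `v → u` in `H¹`. The pole `y = x₀` bounds
`|u(x₀)|²`, and poles `y → 0` off `∂Ω` give the weighted gradient integral. Finally `∑ aₖ`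
dominates the Wiener integral up to an additive constant.
-/

open MeasureTheory Metric Real Filter

noncomputable section

/-- `ℝ³` as Euclidean space. -/
abbrev E3 : Type := EuclideanSpace ℝ (Fin 3)

/-- Partial derivative `∂ᵢ f` on `ℝ³`. -/
def pd (i : Fin 3) (f : E3 → ℝ) (x : E3) : ℝ :=
  fderiv ℝ f x (EuclideanSpace.single i 1)

/-- Laplacian on `ℝ³`. -/
def lap (f : E3 → ℝ) (x : E3) : ℝ := ∑ i, pd i (pd i f) x

/-- Divergence of a vector field on `ℝ³`. -/
def divg (u : E3 → Fin 3 → ℝ) (x : E3) : ℝ := ∑ k, pd k (fun y => u y k) x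

/-- The 3D Lamé operator `(Lu)ᵢ = -Δuᵢ - α ∂ᵢ (div u)`. -/
def lame (α : ℝ) (u : E3 → Fin 3 → ℝ) (x : E3) (i : Fin 3) : ℝ :=
  - lap (fun y => u y i) x - α * pd i (divg u) x

/-- The constant `c_α = (α+2)/(8π(α+1))`. -/
def cA (α : ℝ) : ℝ := (α + 2) / (8 * Real.pi * (α + 1))

/-- The fundamental matrix `Φ` of the 3D Lamé system:
`Φ_ij(x) = c_α |x|⁻¹ (δ_ij + (α/(α+2)) xᵢxⱼ/|x|²)`. -/
def Phi (α : ℝ) (x : E3) (i j : Fin 3) : ℝ :=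
  cA α * ‖x‖⁻¹ * ((if i = j then (1 : ℝ) else 0) + (α / (α + 2)) * (x i * x j) / ‖x‖ ^ 2)

/-- `u ∈ C₀^∞(U; ℝ³)`: smooth, compactly supported, with support inside `U`. -/
def IsTestOn (U : Set E3) (u : E3 → Fin 3 → ℝ) : Prop :=
  ContDiff ℝ (⊤ : ℕ∞) u ∧ HasCompactSupport u ∧ tsupport u ⊆ U

/-- `∫_{ℝ³} (Lu)·(Φ(·-y) u) dx`. -/
def lameEnergy (α : ℝ) (u : E3 → Fin 3 → ℝ) (y : E3) : ℝ :=
  ∫ x : E3, ∑ i, ∑ j, lame α u x i * Phi α (x - y) i j * u x j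

/-- (QPD): quantitative weighted positive definiteness of the Lamé system with weight `Φ`,
with constant `c₀`. -/
def QPDhyp (α c₀ : ℝ) : Prop :=
  ∀ u : E3 → Fin 3 → ℝ, IsTestOn Set.univ u → ∀ y : E3,
    (1 / 2) * (∑ i, (u y i) ^ 2) +
      c₀ * ∫ x : E3, (∑ i, ∑ k, (pd k (fun z => u z i) x) ^ 2) * ‖x - y‖⁻¹ ≤
    lameEnergy α u y

/-- `u ∈ H̊¹(Ω; ℝ³)`: `u` is smooth on `Ω`, `∫_Ω (|u|² + |Du|²) < ∞`, and `u` is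
approximated in this norm by test fields supported in `Ω`. -/
def MemH10 (Ω : Set E3) (u : E3 → Fin 3 → ℝ) : Prop :=
  ContDiffOn ℝ (⊤ : ℕ∞) u Ω ∧
  IntegrableOn (fun x => (∑ i, (u x i) ^ 2) +
    ∑ i, ∑ k, (pd k (fun z => u z i) x) ^ 2) Ω volume ∧
  ∃ un : ℕ → E3 → Fin 3 → ℝ, (∀ n, IsTestOn Ω (un n)) ∧
    Tendsto (fun n => ∫ x in Ω, ((∑ i, (u x i - un n x i) ^ 2) +
      ∑ i, ∑ k, (pd k (fun z => u z i - un n z i) x) ^ 2)) atTop (nhds 0)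

/-- `m_ρ(u) = ρ⁻³ ∫_{Ω ∩ S_ρ} |u|² dx`, where `S_ρ = {ρ < |x| < 2ρ}`. -/
def mRho (Ω : Set E3) (ρ : ℝ) (u : E3 → Fin 3 → ℝ) : ℝ :=
  (ρ ^ 3)⁻¹ * ∫ x in Ω ∩ {x : E3 | ρ < ‖x‖ ∧ ‖x‖ < 2 * ρ}, ∑ i, (u x i) ^ 2

/-- `M_ρ(u) = ρ⁻³ ∫_{Ω ∩ B_ρ} |u|² dx`. -/
def MRho (Ω : Set E3) (ρ : ℝ) (u : E3 → Fin 3 → ℝ) : ℝ :=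
  (ρ ^ 3)⁻¹ * ∫ x in Ω ∩ ball (0 : E3) ρ, ∑ i, (u x i) ^ 2

/-- The classical harmonic capacity of a set `K ⊆ ℝ³`:
`cap K = inf { ∫ |Df|² : f ∈ C₀^∞(ℝ³), f = 1 on a neighborhood of K }`. -/
def capa (K : Set E3) : ℝ :=
  sInf {t : ℝ | ∃ f : E3 → ℝ, ContDiff ℝ (⊤ : ℕ∞) f ∧ HasCompactSupport f ∧
    (∃ U : Set E3, IsOpen U ∧ K ⊆ U ∧ ∀ x ∈ U, f x = 1) ∧
    t = ∫ x : E3, ∑ i, (pd i f x) ^ 2}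

open scoped ContDiff Topology

/-! ### The Poincaré inequality on a convex set -/

lemma setIntegral_norm_sq_eq_toReal {X F : Type*} [TopologicalSpace X] [MeasurableSpace X]
    [OpensMeasurableSpace X] [NormedAddCommGroup F] {μ : Measure X} (S : Set X) {f : X → F}
    (hf : Continuous f) :
    ∫ x in S, ‖f x‖ ^ 2 ∂μ = (∫⁻ x in S, ‖f x‖ₑ ^ 2 ∂μ).toReal := by
  have hsq : Continuous fun x => ‖f x‖ ^ 2 := by fun_prop
  rw [integral_eq_lintegral_of_nonneg_ae (.of_forall fun x => by positivity)
    hsq.measurable.aestronglyMeasurable]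
  simp [ENNReal.ofReal_pow, ofReal_norm]

lemma setLIntegral_enorm_sq_ne_top {X F : Type*} [MetricSpace X] [ProperSpace X]
    [MeasurableSpace X] [OpensMeasurableSpace X] [NormedAddCommGroup F] {μ : Measure X}
    [IsFiniteMeasureOnCompacts μ] {S : Set X} (hS : Bornology.IsBounded S) {f : X → F}
    (hf : Continuous f) : ∫⁻ x in S, ‖f x‖ₑ ^ 2 ∂μ ≠ ⊤ := by
  have hsq : Continuous fun x => ‖f x‖ ^ 2 := by fun_prop
  have hint : IntegrableOn (fun x => ‖f x‖ ^ 2) S μ :=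
    (hsq.continuousOn.integrableOn_compact hS.isCompact_closure).mono_set subset_closure
  simpa [HasFiniteIntegral, enorm_pow] using hint.2.ne

section Poincare

variable {E F : Type*} [NormedAddCommGroup E] [NormedSpace ℝ E] [NormedAddCommGroup F]
  [NormedSpace ℝ F]

lemma sq_lintegral_le_lintegral_sq {X : Type*} [MeasurableSpace X] {μ : Measure X}
    [IsProbabilityMeasure μ] {f : X → ENNReal} (hf : AEMeasurable f μ) :
    (∫⁻ x, f x ∂μ) ^ 2 ≤ ∫⁻ x, f x ^ 2 ∂μ := by
  have hölder := ENNReal.lintegral_mul_le_Lp_mul_Lq μ Real.HolderConjugate.two_two hf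
    (aemeasurable_const (b := 1))
  simp only [Pi.mul_apply, mul_one, ENNReal.one_rpow, lintegral_const, measure_univ] at hölder
  calc (∫⁻ x, f x ∂μ) ^ 2 ≤ ((∫⁻ x, f x ^ (2 : ℝ) ∂μ) ^ (1 / 2 : ℝ)) ^ 2 := by gcongr
    _ = ∫⁻ x, f x ^ 2 ∂μ := by
      rw [← ENNReal.rpow_natCast, ← ENNReal.rpow_mul]
      simp

lemma enorm_sub_sq_le_lintegral_segment {w : E → F} (hw : ContDiff ℝ 1 w) (x y : E) :
    ‖w y - w x‖ₑ ^ 2 ≤ ‖y - x‖ₑ ^ 2 *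
      ∫⁻ t in Set.Icc (0 : ℝ) 1, ‖fderiv ℝ w ((1 - t) • x + t • y)‖ₑ ^ 2 := by
  set γ : ℝ → F := fun t => w ((1 - t) • x + t • y)
  have hderiv : ∀ t, deriv γ t = fderiv ℝ w ((1 - t) • x + t • y) (y - x) := fun t => by
    have hline : HasDerivAt (fun t : ℝ => (1 - t) • x + t • y) (y - x) t :=
      ((((hasDerivAt_id t).const_sub 1).smul_const x).add
        ((hasDerivAt_id t).smul_const y)).congr_deriv (by module)
    exact ((hw.differentiable one_ne_zero _).hasFDerivAt.comp_hasDerivAt t hline).deriv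
  have _ : Continuous (fderiv ℝ w) := hw.continuous_fderiv one_ne_zero
  have : IsProbabilityMeasure (volume.restrict (Set.Icc (0 : ℝ) 1)) := ⟨by simp⟩
  calc ‖w y - w x‖ₑ ^ 2 = ‖γ 1 - γ 0‖ₑ ^ 2 := by simp [γ]
    _ ≤ (∫⁻ t in Set.Icc (0 : ℝ) 1, ‖deriv γ t‖ₑ) ^ 2 := by
      gcongr
      exact enorm_sub_le_lintegral_deriv_of_contDiffOn_Icc
        (ContDiff.contDiffOn (by fun_prop)) zero_le_one
    _ ≤ (∫⁻ t in Set.Icc (0 : ℝ) 1, ‖y - x‖ₑ * ‖fderiv ℝ w ((1 - t) • x + t • y)‖ₑ) ^ 2 := by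
      gcongr with t
      rw [hderiv, mul_comm]
      exact ContinuousLinearMap.le_opENorm _ _
    _ ≤ ∫⁻ t in Set.Icc (0 : ℝ) 1, (‖y - x‖ₑ * ‖fderiv ℝ w ((1 - t) • x + t • y)‖ₑ) ^ 2 :=
      sq_lintegral_le_lintegral_sq (by fun_prop)
    _ = _ := by
      simp only [mul_pow]
      rw [lintegral_const_mul' _ _ (by finiteness)]

variable [FiniteDimensional ℝ E] [MeasurableSpace E] [BorelSpace E] {μ : Measure E}
  [μ.IsAddHaarMeasure]

lemma lintegral_comp_smul_add {G : E → ENNReal} (hG : Measurable G) {c : ℝ} (hc : c ≠ 0) (b : E) :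
    ∫⁻ x, G (c • x + b) ∂μ =
      ENNReal.ofReal |(c ^ Module.finrank ℝ E)⁻¹| * ∫⁻ x, G x ∂μ := by
  calc ∫⁻ x, G (c • x + b) ∂μ = ∫⁻ x, G (x + b) ∂(Measure.map (c • ·) μ) := by
        rw [lintegral_map (by fun_prop) (by fun_prop)]
    _ = _ := by
      rw [Measure.map_addHaar_smul _ hc, lintegral_smul_measure, lintegral_add_right_eq_self,
        smul_eq_mul]

lemma setLIntegral_lineMap_left_le {S : Set E} (hS : Convex ℝ S) (hSm : MeasurableSet S)
    {G : E → ENNReal} (hG : Measurable G) {t : ℝ} (ht₀ : 0 ≤ t) (ht : t ≤ 1 / 2) {y : E}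
    (hy : y ∈ S) :
    ∫⁻ x in S, G ((1 - t) • x + t • y) ∂μ ≤ 2 ^ Module.finrank ℝ E * ∫⁻ x in S, G x ∂μ := by
  have hjac : ENNReal.ofReal |((1 - t) ^ Module.finrank ℝ E)⁻¹| ≤ 2 ^ Module.finrank ℝ E := by
    rw [abs_of_nonneg (inv_nonneg.2 (pow_nonneg (by linarith) _)), ← inv_pow,
      ENNReal.ofReal_pow (inv_nonneg.2 (by linarith))]
    gcongr
    rw [← ENNReal.ofReal_ofNat]
    exact ENNReal.ofReal_le_ofReal (inv_le_of_inv_le₀ two_pos (by linarith))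
  calc ∫⁻ x in S, G ((1 - t) • x + t • y) ∂μ
      ≤ ∫⁻ x in S, S.indicator G ((1 - t) • x + t • y) ∂μ := by
        refine setLIntegral_mono' hSm fun x hx => ?_
        rw [Set.indicator_of_mem (hS hx hy (by linarith) ht₀ (by ring))]
    _ ≤ ∫⁻ x, S.indicator G ((1 - t) • x + t • y) ∂μ := setLIntegral_le_lintegral _ _
    _ = ENNReal.ofReal |((1 - t) ^ Module.finrank ℝ E)⁻¹| * ∫⁻ x in S, G x ∂μ := by
      rw [lintegral_comp_smul_add (hG.indicator hSm) (by linarith), lintegral_indicator hSm]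
    _ ≤ _ := by gcongr

/-- Whichever of the coefficients `1 - t` and `t` is at least `1 / 2` belongs to the variable
that may be substituted with Jacobian at most `2 ^ d`. -/
lemma setLIntegral_setLIntegral_lineMap_le {S : Set E} (hS : Convex ℝ S) (hSm : MeasurableSet S)
    {G : E → ENNReal} (hG : Measurable G) {t : ℝ} (ht : t ∈ Set.Icc (0 : ℝ) 1) :
    ∫⁻ x in S, ∫⁻ y in S, G ((1 - t) • x + t • y) ∂μ ∂μ ≤
      2 ^ Module.finrank ℝ E * μ S * ∫⁻ x in S, G x ∂μ := by
  have bound : ∀ f : E → ENNReal, (∀ x ∈ S, f x ≤ 2 ^ Module.finrank ℝ E * ∫⁻ z in S, G z ∂μ) →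
      ∫⁻ x in S, f x ∂μ ≤ 2 ^ Module.finrank ℝ E * μ S * ∫⁻ x in S, G x ∂μ := fun f hf => by
    refine (setLIntegral_mono' hSm hf).trans_eq ?_
    rw [setLIntegral_const]
    ring
  rcases le_total t (1 / 2) with hle | hge
  · have hcomp : Measurable fun p : E × E => G ((1 - t) • p.1 + t • p.2) :=
      hG.comp (by fun_prop)
    rw [lintegral_lintegral_swap hcomp.aemeasurable]
    exact bound _ fun y hy => setLIntegral_lineMap_left_le hS hSm hG ht.1 hle hy
  · refine bound _ fun x hx => ?_
    have := setLIntegral_lineMap_left_le (μ := μ) hS hSm hG (sub_nonneg.2 ht.2) (by linarith) hx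
    simpa only [sub_sub_cancel, add_comm] using this

lemma setLIntegral_setLIntegral_setLIntegral_lineMap_le {S : Set E} (hS : Convex ℝ S)
    (hSm : MeasurableSet S) {G : E → ENNReal} (hG : Measurable G) :
    ∫⁻ x in S, ∫⁻ y in S, (∫⁻ t in Set.Icc (0 : ℝ) 1, G ((1 - t) • x + t • y)) ∂μ ∂μ ≤
      2 ^ Module.finrank ℝ E * μ S * ∫⁻ x in S, G x ∂μ := by
  have hcomp : Measurable fun p : (E × ℝ) × E => G ((1 - p.1.2) • p.1.1 + p.1.2 • p.2) :=
    hG.comp (by fun_prop)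
  calc ∫⁻ x in S, ∫⁻ y in S, (∫⁻ t in Set.Icc (0 : ℝ) 1, G ((1 - t) • x + t • y)) ∂μ ∂μ
      = ∫⁻ x in S, (∫⁻ t in Set.Icc (0 : ℝ) 1, ∫⁻ y in S, G ((1 - t) • x + t • y) ∂μ) ∂μ := by
        refine lintegral_congr fun x => lintegral_lintegral_swap ?_
        exact (hcomp.comp (by fun_prop : Measurable fun p : E × ℝ => ((x, p.2), p.1))).aemeasurable
    _ = ∫⁻ t in Set.Icc (0 : ℝ) 1, ∫⁻ x in S, ∫⁻ y in S, G ((1 - t) • x + t • y) ∂μ ∂μ :=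
        lintegral_lintegral_swap hcomp.lintegral_prod_right'.aemeasurable
    _ ≤ ∫⁻ _ in Set.Icc (0 : ℝ) 1, 2 ^ Module.finrank ℝ E * μ S * ∫⁻ x in S, G x ∂μ :=
        setLIntegral_mono' measurableSet_Icc fun t ht =>
          setLIntegral_setLIntegral_lineMap_le hS hSm hG ht
    _ = _ := by simp

lemma setLIntegral_setLIntegral_enorm_sub_sq_le {S : Set E} (hS : Convex ℝ S)
    (hSm : MeasurableSet S) (hSb : Bornology.IsBounded S) {w : E → F} (hw : ContDiff ℝ 1 w) :
    ∫⁻ x in S, ∫⁻ y in S, ‖w y - w x‖ₑ ^ 2 ∂μ ∂μ ≤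
      2 ^ Module.finrank ℝ E * ediam S ^ 2 * μ S * ∫⁻ x in S, ‖fderiv ℝ w x‖ₑ ^ 2 ∂μ := by
  have hcont : Continuous fun x => ‖fderiv ℝ w x‖ₑ ^ 2 :=
    ENNReal.continuous_pow 2 |>.comp (hw.continuous_fderiv one_ne_zero).enorm
  have hpair : ∀ x ∈ S, ∀ y ∈ S, ‖w y - w x‖ₑ ^ 2 ≤ ediam S ^ 2 *
      ∫⁻ t in Set.Icc (0 : ℝ) 1, ‖fderiv ℝ w ((1 - t) • x + t • y)‖ₑ ^ 2 := fun x hx y hy => by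
    refine (enorm_sub_sq_le_lintegral_segment hw x y).trans (mul_le_mul_left ?_ _)
    gcongr
    rw [← edist_eq_enorm_sub]
    exact edist_le_ediam_of_mem hy hx
  have hfin : ediam S ^ 2 ≠ ⊤ := ENNReal.pow_ne_top hSb.ediam_ne_top
  calc ∫⁻ x in S, ∫⁻ y in S, ‖w y - w x‖ₑ ^ 2 ∂μ ∂μ
      ≤ ∫⁻ x in S, ∫⁻ y in S, (ediam S ^ 2 *
          ∫⁻ t in Set.Icc (0 : ℝ) 1, ‖fderiv ℝ w ((1 - t) • x + t • y)‖ₑ ^ 2) ∂μ ∂μ :=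
        setLIntegral_mono' hSm fun x hx => setLIntegral_mono' hSm fun y hy => hpair x hx y hy
    _ = ediam S ^ 2 * ∫⁻ x in S, ∫⁻ y in S,
          (∫⁻ t in Set.Icc (0 : ℝ) 1, ‖fderiv ℝ w ((1 - t) • x + t • y)‖ₑ ^ 2) ∂μ ∂μ := by
        simp_rw [lintegral_const_mul' _ _ hfin]
    _ ≤ ediam S ^ 2 * (2 ^ Module.finrank ℝ E * μ S * ∫⁻ x in S, ‖fderiv ℝ w x‖ₑ ^ 2 ∂μ) := by
        refine mul_le_mul_right ?_ _
        exact setLIntegral_setLIntegral_setLIntegral_lineMap_le hS hSm hcont.measurable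
    _ = _ := by ring

lemma setIntegral_setIntegral_norm_sub_sq_le {S : Set E} (hS : Convex ℝ S)
    (hSm : MeasurableSet S) (hSb : Bornology.IsBounded S) {w : E → F} (hw : ContDiff ℝ 1 w) :
    ∫ x in S, ∫ y in S, ‖w y - w x‖ ^ 2 ∂μ ∂μ ≤
      2 ^ Module.finrank ℝ E * diam S ^ 2 * μ.real S * ∫ x in S, ‖fderiv ℝ w x‖ ^ 2 ∂μ := by
  have hw' : Continuous w := hw.continuous
  have hDw : Continuous (fderiv ℝ w) := hw.continuous_fderiv one_ne_zero
  have hinner : ∀ x, ∫⁻ y in S, ‖w y - w x‖ₑ ^ 2 ∂μ ≠ ⊤ := fun x =>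
    setLIntegral_enorm_sq_ne_top hSb (by fun_prop)
  have hmeas : Measurable fun p : E × E => ‖w p.2 - w p.1‖ₑ ^ 2 :=
    (by fun_prop : Continuous fun p : E × E => ‖w p.2 - w p.1‖ₑ).measurable.pow_const 2
  calc ∫ x in S, ∫ y in S, ‖w y - w x‖ ^ 2 ∂μ ∂μ
      = ∫ x in S, (∫⁻ y in S, ‖w y - w x‖ₑ ^ 2 ∂μ).toReal ∂μ :=
        integral_congr_ae (.of_forall fun x => setIntegral_norm_sq_eq_toReal S (by fun_prop))
    _ = (∫⁻ x in S, ∫⁻ y in S, ‖w y - w x‖ₑ ^ 2 ∂μ ∂μ).toReal :=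
        integral_toReal hmeas.lintegral_prod_right'.aemeasurable
          (.of_forall fun x => (hinner x).lt_top)
    _ ≤ (2 ^ Module.finrank ℝ E * ediam S ^ 2 * μ S *
          ∫⁻ x in S, ‖fderiv ℝ w x‖ₑ ^ 2 ∂μ).toReal := by
        refine ENNReal.toReal_mono ?_ (setLIntegral_setLIntegral_enorm_sub_sq_le hS hSm hSb hw)
        have := setLIntegral_enorm_sq_ne_top (μ := μ) hSb hDw
        have := hSb.ediam_ne_top
        have := hSb.measure_lt_top (μ := μ)
        finiteness
    _ = _ := by
        rw [setIntegral_norm_sq_eq_toReal S hDw]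
        simp [diam, Measure.real]

end Poincare

/-! ### Calculus of partial derivatives -/

lemma pd_congr {i : Fin 3} {f g : E3 → ℝ} {x : E3} (h : f =ᶠ[𝓝 x] g) : pd i f x = pd i g x := by
  simp only [pd, h.fderiv_eq]

lemma pd_eventuallyEq {i : Fin 3} {f g : E3 → ℝ} {x : E3} (h : f =ᶠ[𝓝 x] g) :
    pd i f =ᶠ[𝓝 x] pd i g :=
  h.eventuallyEq_nhds.mono fun _ => pd_congr

lemma pd_add {i : Fin 3} {f g : E3 → ℝ} {x : E3} (hf : DifferentiableAt ℝ f x)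
    (hg : DifferentiableAt ℝ g x) :
    pd i (fun y => f y + g y) x = pd i f x + pd i g x := by
  simp [pd, fderiv_fun_add hf hg]

lemma pd_sub {i : Fin 3} {f g : E3 → ℝ} {x : E3} (hf : DifferentiableAt ℝ f x)
    (hg : DifferentiableAt ℝ g x) :
    pd i (fun y => f y - g y) x = pd i f x - pd i g x := by
  simp [pd, fderiv_fun_sub hf hg]

lemma pd_mul {i : Fin 3} {f g : E3 → ℝ} {x : E3} (hf : DifferentiableAt ℝ f x)
    (hg : DifferentiableAt ℝ g x) :
    pd i (fun y => f y * g y) x = f x * pd i g x + pd i f x * g x := by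
  simp [pd, fderiv_fun_mul hf hg, mul_comm]

lemma pd_const_mul (i : Fin 3) (c : ℝ) (f : E3 → ℝ) :
    pd i (fun y => c * f y) = fun x => c * pd i f x := by
  ext x
  simp only [pd, ← smul_eq_mul]
  exact DFunLike.congr_fun (congrFun (fderiv_const_smul_field c) x) _

lemma pd_exp {i : Fin 3} {f : E3 → ℝ} {x : E3} (hf : DifferentiableAt ℝ f x) :
    pd i (fun y => exp (f y)) x = exp (f x) * pd i f x := by
  simp [pd, fderiv_exp hf]

lemma pd_sum {ι : Type*} {s : Finset ι} {i : Fin 3} {f : ι → E3 → ℝ} {x : E3}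
    (hf : ∀ j ∈ s, DifferentiableAt ℝ (f j) x) :
    pd i (fun y => ∑ j ∈ s, f j y) x = ∑ j ∈ s, pd i (f j) x := by
  simp [pd, fderiv_fun_sum hf]

lemma contDiff_pd {i : Fin 3} {f : E3 → ℝ} (hf : ContDiff ℝ ∞ f) : ContDiff ℝ ∞ (pd i f) :=
  (hf.fderiv_right (m := ∞) (by norm_num)).clm_apply contDiff_const

lemma contDiffOn_pd {i : Fin 3} {f : E3 → ℝ} {Ω : Set E3} (hΩ : IsOpen Ω)
    (hf : ContDiffOn ℝ ∞ f Ω) : ContDiffOn ℝ ∞ (pd i f) Ω :=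
  (hf.fderiv_of_isOpen (m := ∞) hΩ (by norm_num)).clm_apply contDiffOn_const

lemma tsupport_pd_subset (i : Fin 3) (f : E3 → ℝ) : tsupport (pd i f) ⊆ tsupport f :=
  tsupport_fderiv_apply_subset ℝ _

lemma hasCompactSupport_pd {i : Fin 3} {f : E3 → ℝ} (hf : HasCompactSupport f) :
    HasCompactSupport (pd i f) :=
  hf.fderiv_apply ℝ _

lemma pd_eq_zero_of_notMem {i : Fin 3} {f : E3 → ℝ} {x : E3} (h : x ∉ tsupport f) :
    pd i f x = 0 :=
  image_eq_zero_of_notMem_tsupport fun h' => h (tsupport_pd_subset i f h')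

lemma sum_pd_sq (f : E3 → ℝ) (x : E3) : ∑ i, pd i f x ^ 2 = ‖fderiv ℝ f x‖ ^ 2 := by
  rw [← (InnerProductSpace.toDual ℝ E3).symm.norm_map (fderiv ℝ f x), EuclideanSpace.norm_sq_eq]
  refine Finset.sum_congr rfl fun i _ => ?_
  rw [Real.norm_eq_abs, sq_abs, pd, ← InnerProductSpace.toDual_symm_apply,
    EuclideanSpace.inner_single_right]
  simp

lemma tsupport_comp_apply_subset (v : E3 → Fin 3 → ℝ) (i : Fin 3) :
    tsupport (fun y => v y i) ⊆ tsupport v :=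
  tsupport_comp_subset (g := fun a : Fin 3 → ℝ => a i) rfl v

/-- `|v|²`. -/
def normSq (v : E3 → Fin 3 → ℝ) (x : E3) : ℝ := ∑ i, v x i ^ 2

/-- `|Dv|²`, the sum of the squares of all first order partial derivatives. -/
def gradSq (v : E3 → Fin 3 → ℝ) (x : E3) : ℝ := ∑ i, ∑ k, pd k (fun z => v z i) x ^ 2

lemma normSq_nonneg (v : E3 → Fin 3 → ℝ) (x : E3) : 0 ≤ normSq v x := by
  unfold normSq; positivity

lemma gradSq_nonneg (v : E3 → Fin 3 → ℝ) (x : E3) : 0 ≤ gradSq v x := by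
  unfold gradSq; positivity

lemma continuous_normSq {v : E3 → Fin 3 → ℝ} (hv : Continuous v) : Continuous (normSq v) := by
  unfold normSq; fun_prop

lemma continuous_gradSq {v : E3 → Fin 3 → ℝ} (hv : ContDiff ℝ ∞ v) : Continuous (gradSq v) :=
  continuous_finsetSum _ fun i _ => continuous_finsetSum _ fun _ _ =>
    (contDiff_pd (contDiff_pi.1 hv i)).continuous.pow 2

lemma normSq_eq_zero_of_notMem {v : E3 → Fin 3 → ℝ} {x : E3} (h : x ∉ tsupport v) :
    normSq v x = 0 := by
  simp [normSq, image_eq_zero_of_notMem_tsupport h]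

lemma gradSq_eq_zero_of_notMem {v : E3 → Fin 3 → ℝ} {x : E3} (h : x ∉ tsupport v) :
    gradSq v x = 0 :=
  Finset.sum_eq_zero fun i _ => Finset.sum_eq_zero fun _ _ => by
    simp [pd_eq_zero_of_notMem fun h' => h (tsupport_comp_apply_subset v i h')]

lemma hasCompactSupport_gradSq {v : E3 → Fin 3 → ℝ} (hv : HasCompactSupport v) :
    HasCompactSupport (gradSq v) := .intro hv fun _ hx => gradSq_eq_zero_of_notMem hx

/-! ### The Newtonian weight -/

section NewtonianWeight

variable {E : Type*} [NormedAddCommGroup E] [NormedSpace ℝ E] [FiniteDimensional ℝ E]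
  [MeasurableSpace E] [BorelSpace E] {μ : Measure E} [μ.IsAddHaarMeasure]

lemma locallyIntegrable_norm_inv (hE : 2 ≤ Module.finrank ℝ E) :
    LocallyIntegrable (fun x : E => ‖x‖⁻¹) μ := by
  refine locallyIntegrable_of_norm_le_rpow (by lia) (C := 1) (α := 1) (by exact_mod_cast hE)
    (.of_forall fun x => ?_) (by fun_prop)
  simp [Real.rpow_neg_one]

lemma integrable_mul_norm_sub_inv (hE : 2 ≤ Module.finrank ℝ E) {f : E → ℝ} (hf : Continuous f)
    (hc : HasCompactSupport f) (y : E) : Integrable (fun x => f x * ‖x - y‖⁻¹) μ := by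
  have hint : Integrable (fun x => f (x + y) * ‖x‖⁻¹) μ :=
    (locallyIntegrable_norm_inv hE).integrable_smul_left_of_hasCompactSupport (by fun_prop)
      (hc.comp_homeomorph (Homeomorph.addRight y))
  simpa using hint.comp_sub_right y

end NewtonianWeight

/-! ### Smooth cutoffs -/

/-- The smooth radial cutoff at scale `s`: it equals `1` for `‖x‖ ≤ 5 s / 4` and `0` for
`‖x‖ ≥ 3 s / 2`. -/
def cutoff (s : ℝ) (x : E3) : ℝ :=
  (⟨5 / 4, 3 / 2, by norm_num, by norm_num⟩ : ContDiffBump (0 : E3)) (s⁻¹ • x)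

lemma contDiff_cutoff (s : ℝ) : ContDiff ℝ ∞ (cutoff s) :=
  (ContDiffBump.contDiff _).comp (contDiff_const_smul s⁻¹)

lemma cutoff_nonneg (s : ℝ) (x : E3) : 0 ≤ cutoff s x := ContDiffBump.nonneg _

lemma cutoff_le_one (s : ℝ) (x : E3) : cutoff s x ≤ 1 := ContDiffBump.le_one _

section Cutoff

variable {s : ℝ}

lemma cutoff_eq_one (hs : 0 < s) {x : E3} (hx : ‖x‖ ≤ 5 / 4 * s) : cutoff s x = 1 := by
  refine ContDiffBump.one_of_mem_closedBall _ ?_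
  rwa [mem_closedBall_zero_iff, norm_smul, norm_inv, norm_of_nonneg hs.le,
    inv_mul_le_iff₀' hs]

lemma tsupport_cutoff_subset (hs : 0 < s) : tsupport (cutoff s) ⊆ ball 0 (2 * s) := by
  refine Set.Subset.trans (closure_minimal (t := closedBall 0 (3 / 2 * s)) ?_ isClosed_closedBall)
    (closedBall_subset_ball (by linarith))
  intro x hx
  have hx' : s⁻¹ • x ∈ Function.support _ := hx
  rw [ContDiffBump.support_eq, mem_ball_zero_iff, norm_smul, norm_inv, norm_of_nonneg hs.le,
    inv_mul_lt_iff₀' hs] at hx'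
  exact mem_closedBall_zero_iff.2 hx'.le

lemma hasCompactSupport_of_tsupport_subset_ball {X : Type*} [PseudoMetricSpace X] [ProperSpace X]
    {f : X → ℝ} {x : X} {r : ℝ} (h : tsupport f ⊆ ball x r) : HasCompactSupport f :=
  isCompact_of_isClosed_isBounded (isClosed_tsupport f) (isBounded_ball.subset h)

lemma hasCompactSupport_cutoff (hs : 0 < s) : HasCompactSupport (cutoff s) :=
  hasCompactSupport_of_tsupport_subset_ball (tsupport_cutoff_subset hs)

lemma exists_forall_abs_le {ι X : Type*} [Finite ι] [TopologicalSpace X] {f : ι → X → ℝ}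
    (hf : ∀ i, Continuous (f i)) (hc : ∀ i, HasCompactSupport (f i)) :
    ∃ K > 0, ∀ i x, |f i x| ≤ K := by
  choose C hC using fun i => (hf i).bounded_above_of_compact_support (hc i)
  obtain ⟨M, hM⟩ := (Set.finite_range C).bddAbove
  exact ⟨max M 1, by positivity, fun i x => (hC i x).trans (le_max_of_le_left (hM ⟨i, rfl⟩))⟩

lemma pd_comp_smul (i : Fin 3) (f : E3 → ℝ) (c : ℝ) :
    pd i (fun x => f (c • x)) = fun x => c * pd i f (c • x) := by
  ext x
  simp [pd, fderiv_comp_smul]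

lemma exists_abs_pd_cutoff_le : ∃ K > 0, ∀ s > 0, (∀ i x, |pd i (cutoff s) x| ≤ K / s) ∧
    ∀ i j x, |pd j (pd i (cutoff s)) x| ≤ K / s ^ 2 := by
  have hb := contDiff_cutoff 1
  have hc := hasCompactSupport_cutoff one_pos
  obtain ⟨K₁, hK₁, h₁⟩ := exists_forall_abs_le (f := fun i => pd i (cutoff 1))
    (fun i => (contDiff_pd hb).continuous) fun i => hasCompactSupport_pd hc
  obtain ⟨K₂, -, h₂⟩ := exists_forall_abs_le
    (f := fun ij : Fin 3 × Fin 3 => pd ij.2 (pd ij.1 (cutoff 1)))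
    (fun ij => (contDiff_pd (contDiff_pd hb)).continuous)
    fun ij => hasCompactSupport_pd (hasCompactSupport_pd hc)
  refine ⟨max K₁ K₂, by positivity, fun s hs => ?_⟩
  have hscale : cutoff s = fun x => cutoff 1 (s⁻¹ • x) := by ext x; simp [cutoff]
  have hpd : ∀ i, pd i (cutoff s) = fun x => s⁻¹ * pd i (cutoff 1) (s⁻¹ • x) := fun i => by
    rw [hscale, pd_comp_smul]
  constructor
  · intro i x
    rw [hpd, abs_mul, abs_of_pos (inv_pos.2 hs), div_eq_inv_mul]
    gcongr
    exact (h₁ i _).trans (le_max_left _ _)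
  · intro i j x
    simp only [hpd, pd_const_mul, pd_comp_smul]
    rw [← mul_assoc, abs_mul, abs_of_pos (by positivity), div_eq_inv_mul, pow_two, mul_inv]
    gcongr
    exact (h₂ (i, j) _).trans (le_max_right _ _)

end Cutoff

/-! ### Capacity and the capacitary Poincaré inequality -/

lemma integrableOn_ball_of_continuous {X F : Type*} [MetricSpace X] [ProperSpace X]
    [MeasurableSpace X] [OpensMeasurableSpace X] {μ : Measure X} [IsFiniteMeasureOnCompacts μ]
    [NormedAddCommGroup F] {f : X → F} (hf : Continuous f) (x : X) (r : ℝ) :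
    IntegrableOn f (ball x r) μ :=
  (hf.continuousOn.integrableOn_compact (isCompact_closedBall x r)).mono_set
    ball_subset_closedBall

lemma integral_sum_pd_sq_eq_setIntegral {f : E3 → ℝ} {S : Set E3} (h : tsupport f ⊆ S) :
    ∫ x, ∑ i, pd i f x ^ 2 = ∫ x in S, ∑ i, pd i f x ^ 2 :=
  (setIntegral_eq_integral_of_forall_compl_eq_zero fun x hx => by
    simp [pd_eq_zero_of_notMem fun h' => hx (h h')]).symm

lemma volume_real_ball_zero_le {r : ℝ} (hr : 0 ≤ r) :
    volume.real (ball (0 : E3) r) ≤ 5 * r ^ 3 := by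
  rw [Measure.real, EuclideanSpace.volume_ball_fin_three, ← ENNReal.ofReal_pow hr,
    ← ENNReal.ofReal_mul (by positivity), ENNReal.toReal_ofReal (by positivity)]
  nlinarith [Real.pi_lt_d2, pow_nonneg hr 3]

lemma capa_nonneg (K : Set E3) : 0 ≤ capa K := by
  refine Real.sInf_nonneg ?_
  rintro t ⟨f, -, -, -, rfl⟩
  positivity

lemma capa_le {K U : Set E3} {f : E3 → ℝ} (hf : ContDiff ℝ ∞ f) (hc : HasCompactSupport f)
    (hU : IsOpen U) (hKU : K ⊆ U) (h1 : ∀ x ∈ U, f x = 1) :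
    capa K ≤ ∫ x, ∑ i, pd i f x ^ 2 := by
  refine csInf_le ⟨0, ?_⟩ ⟨f, hf, hc, ⟨U, hU, hKU, h1⟩, rfl⟩
  rintro t ⟨f, -, -, -, rfl⟩
  positivity

/-- Boundedness of `L` provides a competitor for `L`, without which `capa L` would be the junk
value `sInf ∅ = 0`. -/
lemma capa_mono {K L : Set E3} {r : ℝ} (hr : 0 < r) (hL : L ⊆ closedBall 0 r) (h : K ⊆ L) :
    capa K ≤ capa L := by
  refine le_csInf ⟨_, cutoff r, contDiff_cutoff r, hasCompactSupport_cutoff hr,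
    ⟨ball 0 (5 / 4 * r), isOpen_ball, hL.trans (closedBall_subset_ball (by linarith)),
      fun x hx => cutoff_eq_one hr (mem_ball_zero_iff.1 hx).le⟩, rfl⟩ ?_
  rintro t ⟨f, hf, hc, ⟨U, hU, hLU, h1⟩, rfl⟩
  exact capa_le hf hc hU (h.trans hLU) h1

lemma capa_mul_sq_le {K U : Set E3} {f : E3 → ℝ} {c : ℝ} (hf : ContDiff ℝ ∞ f)
    (hc : HasCompactSupport f) (hU : IsOpen U) (hKU : K ⊆ U) (h : ∀ x ∈ U, f x = c) :
    capa K * c ^ 2 ≤ ∫ x, ∑ i, pd i f x ^ 2 := by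
  rcases eq_or_ne c 0 with rfl | hc0
  · rw [zero_pow two_ne_zero, mul_zero]
    positivity
  have hpd : ∀ i x, pd i (fun x => c⁻¹ * f x) x ^ 2 = (c ^ 2)⁻¹ * pd i f x ^ 2 := fun i x => by
    rw [pd_const_mul, mul_pow, inv_pow]
  have hle := capa_le (contDiff_const.mul hf) (hc.mul_left (f := fun _ => c⁻¹)) hU hKU
    fun x hx => by rw [h x hx, inv_mul_cancel₀ hc0]
  simp_rw [hpd, ← Finset.mul_sum] at hle
  rwa [integral_const_mul, inv_mul_eq_div, le_div_iff₀ (by positivity)] at hle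

lemma exists_capa_le : ∃ C > 0, ∀ (K : Set E3) (r : ℝ), 0 < r → K ⊆ closedBall 0 r →
    capa K ≤ C * r := by
  obtain ⟨M, hM, h⟩ := exists_abs_pd_cutoff_le
  refine ⟨120 * M ^ 2, by positivity, fun K r hr hK => ?_⟩
  have hpd : ∀ x, ∑ i, pd i (cutoff r) x ^ 2 ≤ 3 * (M / r) ^ 2 := fun x =>
    (Finset.sum_le_card_nsmul _ _ _ fun i _ => sq_le_sq' (abs_le.1 ((h r hr).1 i x)).1
      (abs_le.1 ((h r hr).1 i x)).2).trans_eq (by simp)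
  calc capa K ≤ ∫ x, ∑ i, pd i (cutoff r) x ^ 2 :=
        capa_le (contDiff_cutoff r) (hasCompactSupport_cutoff hr) isOpen_ball
          (hK.trans (closedBall_subset_ball (by linarith : r < 5 / 4 * r)))
          fun x hx => cutoff_eq_one hr (mem_ball_zero_iff.1 hx).le
    _ = ∫ x in ball 0 (2 * r), ∑ i, pd i (cutoff r) x ^ 2 :=
        integral_sum_pd_sq_eq_setIntegral (tsupport_cutoff_subset hr)
    _ ≤ ∫ _ in ball (0 : E3) (2 * r), 3 * (M / r) ^ 2 := by
        refine setIntegral_mono (integrableOn_ball_of_continuous ?_ _ _)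
          (integrableOn_ball_of_continuous continuous_const _ _) hpd
        exact continuous_finsetSum _ fun i _ => (contDiff_pd (contDiff_cutoff r)).continuous.pow 2
    _ = volume.real (ball (0 : E3) (2 * r)) * (3 * (M / r) ^ 2) := by simp
    _ ≤ 5 * (2 * r) ^ 3 * (3 * (M / r) ^ 2) := by
        gcongr
        exact volume_real_ball_zero_le (by positivity)
    _ = 120 * M ^ 2 * r := by field_simp; norm_num

lemma sum_pd_cutoff_mul_sub_sq_le {s b : ℝ} (hb : ∀ i x, |pd i (cutoff s) x| ≤ b) {w : E3 → ℝ}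
    (hw : ContDiff ℝ ∞ w) (c : ℝ) (x : E3) :
    ∑ i, pd i (fun x => cutoff s x * (c - w x)) x ^ 2 ≤
      2 * ∑ i, pd i w x ^ 2 + 6 * b ^ 2 * (w x - c) ^ 2 := by
  have hwx : DifferentiableAt ℝ w x := hw.differentiable (by simp) x
  have hterm : ∀ i, pd i (fun x => cutoff s x * (c - w x)) x ^ 2 ≤
      2 * pd i w x ^ 2 + 2 * b ^ 2 * (w x - c) ^ 2 := fun i => by
    rw [pd_mul ((contDiff_cutoff s).differentiable (by simp) x) (by fun_prop),
      pd_sub (by fun_prop) hwx]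
    have hleft : (cutoff s x * pd i w x) ^ 2 ≤ pd i w x ^ 2 := by
      rw [mul_pow]
      exact mul_le_of_le_one_left (sq_nonneg _)
        (pow_le_one₀ (cutoff_nonneg s x) (cutoff_le_one s x))
    have hright : (pd i (cutoff s) x * (c - w x)) ^ 2 ≤ b ^ 2 * (w x - c) ^ 2 := by
      rw [mul_pow, ← sq_abs (pd i _ x), ← neg_sub, neg_sq]
      gcongr
      exact hb i x
    have hconst : pd i (fun _ => c) x = 0 := by simp [pd]
    rw [hconst]
    nlinarith [sq_nonneg (cutoff s x * pd i w x + pd i (cutoff s) x * (c - w x))]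
  calc _ ≤ ∑ i, (2 * pd i w x ^ 2 + 2 * b ^ 2 * (w x - c) ^ 2) :=
        Finset.sum_le_sum fun i _ => hterm i
    _ = _ := by
        rw [Finset.sum_add_distrib, ← Finset.mul_sum]
        simp
        ring

/-- The competitor is `cutoff s * (1 - w / c)`, scaled by `c`. -/
lemma capa_mul_sq_le_setIntegral {Ω : Set E3} {s b : ℝ} (hs : 0 < s)
    (hb : ∀ i x, |pd i (cutoff s) x| ≤ b) {w : E3 → ℝ} (hw : ContDiff ℝ ∞ w)
    (hwΩ : tsupport w ⊆ Ω) (c : ℝ) :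
    capa (closedBall 0 s \ Ω) * c ^ 2 ≤ 2 * (∫ x in ball 0 (2 * s), ∑ i, pd i w x ^ 2) +
      6 * b ^ 2 * ∫ x in ball 0 (2 * s), (w x - c) ^ 2 := by
  have hw' : Continuous w := hw.continuous
  have hg : ContDiff ℝ ∞ fun x => cutoff s x * (c - w x) :=
    (contDiff_cutoff s).mul (contDiff_const.sub hw)
  have hsub : closedBall 0 s \ Ω ⊆ ball 0 (5 / 4 * s) ∩ (tsupport w)ᶜ := fun x hx =>
    ⟨closedBall_subset_ball (by linarith) hx.1, fun h => hx.2 (hwΩ h)⟩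
  have hcont : ∀ {f : E3 → ℝ}, ContDiff ℝ ∞ f → Continuous fun x => ∑ i, pd i f x ^ 2 :=
    fun hf => continuous_finsetSum _ fun i _ => (contDiff_pd hf).continuous.pow 2
  have hI₁ : IntegrableOn (fun x => 2 * ∑ i, pd i w x ^ 2) (ball 0 (2 * s)) :=
    integrableOn_ball_of_continuous (continuous_const.mul (hcont hw)) _ _
  have hI₂ : IntegrableOn (fun x => 6 * b ^ 2 * (w x - c) ^ 2) (ball 0 (2 * s)) :=
    integrableOn_ball_of_continuous (by fun_prop) _ _
  calc capa (closedBall 0 s \ Ω) * c ^ 2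
      ≤ ∫ x, ∑ i, pd i (fun x => cutoff s x * (c - w x)) x ^ 2 := by
        refine capa_mul_sq_le hg ((hasCompactSupport_cutoff hs).mul_right)
          (isOpen_ball.inter (isClosed_tsupport w).isOpen_compl) hsub fun x hx => ?_
        rw [cutoff_eq_one hs (mem_ball_zero_iff.1 hx.1).le, image_eq_zero_of_notMem_tsupport hx.2]
        ring
    _ = ∫ x in ball 0 (2 * s), ∑ i, pd i (fun x => cutoff s x * (c - w x)) x ^ 2 :=
        integral_sum_pd_sq_eq_setIntegral
          (tsupport_mul_subset_left.trans (tsupport_cutoff_subset hs))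
    _ ≤ ∫ x in ball 0 (2 * s), (2 * ∑ i, pd i w x ^ 2 + 6 * b ^ 2 * (w x - c) ^ 2) :=
        setIntegral_mono (integrableOn_ball_of_continuous (hcont hg) _ _)
          (hI₁.add hI₂) (sum_pd_cutoff_mul_sub_sq_le hb hw c)
    _ = _ := by
        rw [integral_add hI₁ hI₂, integral_const_mul, integral_const_mul]

lemma setIntegral_ball_setIntegral_ball_sub_sq_le {r : ℝ} (hr : 0 < r) {w : E3 → ℝ}
    (hw : ContDiff ℝ 1 w) :
    ∫ z in ball 0 r, ∫ x in ball 0 r, (w x - w z) ^ 2 ≤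
      160 * r ^ 5 * ∫ x in ball 0 r, ∑ i, pd i w x ^ 2 := by
  have hP := setIntegral_setIntegral_norm_sub_sq_le (μ := volume) (convex_ball (0 : E3) r)
    measurableSet_ball isBounded_ball hw
  simp only [Real.norm_eq_abs, sq_abs, finrank_euclideanSpace_fin, ← sum_pd_sq] at hP
  refine hP.trans ?_
  calc _ ≤ 2 ^ 3 * (2 * r) ^ 2 * (5 * r ^ 3) * ∫ x in ball 0 r, ∑ i, pd i w x ^ 2 := by
        gcongr
        · exact diam_ball hr.le
        · exact volume_real_ball_zero_le hr.le
    _ = _ := by ring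

lemma integrableOn_setIntegral_ball_sub_sq {w : E3 → ℝ} (hw : Continuous w) (r : ℝ) :
    IntegrableOn (fun z => ∫ x in ball 0 r, (w x - w z) ^ 2) (ball 0 r) := by
  refine Integrable.integral_prod_left (f := fun p : E3 × E3 => (w p.2 - w p.1) ^ 2) ?_
  rw [Measure.prod_restrict, ball_prod_same]
  exact integrableOn_ball_of_continuous (by fun_prop) _ _

lemma exists_capa_mul_setIntegral_sq_le : ∃ C > 0, ∀ (Ω : Set E3) (s : ℝ), 0 < s →
    ∀ w : E3 → ℝ, ContDiff ℝ ∞ w → tsupport w ⊆ Ω →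
      capa (closedBall 0 s \ Ω) * ∫ x in ball 0 (2 * s), w x ^ 2 ≤
        C * s ^ 3 * ∫ x in ball 0 (2 * s), ∑ i, pd i w x ^ 2 := by
  obtain ⟨M, hM, hcut⟩ := exists_abs_pd_cutoff_le
  refine ⟨80 + 6 * M ^ 2 * 5120, by positivity, fun Ω s hs w hw hwΩ => ?_⟩
  have hw' : Continuous w := hw.continuous
  have hI := (integrableOn_setIntegral_ball_sub_sq hw' (2 * s)).const_mul (6 * (M / s) ^ 2)
  have hconst := integrableOn_ball_of_continuous (μ := volume)
    (continuous_const (y := 2 * ∫ x in ball (0 : E3) (2 * s), ∑ i, pd i w x ^ 2))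
    (0 : E3) (2 * s)
  rw [← integral_const_mul]
  calc ∫ z in ball 0 (2 * s), capa (closedBall 0 s \ Ω) * w z ^ 2
      ≤ ∫ z in ball 0 (2 * s), (2 * (∫ x in ball 0 (2 * s), ∑ i, pd i w x ^ 2) +
          6 * (M / s) ^ 2 * ∫ x in ball 0 (2 * s), (w x - w z) ^ 2) :=
        setIntegral_mono (integrableOn_ball_of_continuous (by fun_prop) _ _) (hconst.add hI)
          fun z => capa_mul_sq_le_setIntegral hs (hcut s hs).1 hw hwΩ (w z)
    _ = volume.real (ball (0 : E3) (2 * s)) * (2 * ∫ x in ball 0 (2 * s), ∑ i, pd i w x ^ 2) +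
          6 * (M / s) ^ 2 * ∫ z in ball 0 (2 * s), ∫ x in ball 0 (2 * s), (w x - w z) ^ 2 := by
        rw [integral_add hconst hI, setIntegral_const, smul_eq_mul, integral_const_mul]
    _ ≤ 5 * (2 * s) ^ 3 * (2 * ∫ x in ball 0 (2 * s), ∑ i, pd i w x ^ 2) +
          6 * (M / s) ^ 2 * (160 * (2 * s) ^ 5 *
            ∫ x in ball 0 (2 * s), ∑ i, pd i w x ^ 2) := by
        gcongr
        · exact volume_real_ball_zero_le (by positivity)
        · exact setIntegral_ball_setIntegral_ball_sub_sq_le (by positivity) (hw.of_le (by simp))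
    _ = _ := by field_simp; ring

/-! ### Agmon cutoffs -/

/-- The size `|∇η|² + η |D²η|` of the terms produced by commuting a second order operator with
multiplication by `η`. -/
def cutoffSize (η : E3 → ℝ) (x : E3) : ℝ :=
  ∑ i, pd i η x ^ 2 + η x * ∑ i, ∑ j, |pd j (pd i η) x|

lemma cutoffSize_congr {f g : E3 → ℝ} {x : E3} (h : f =ᶠ[𝓝 x] g) :
    cutoffSize f x = cutoffSize g x := by
  simp only [cutoffSize, pd_congr h, pd_congr (pd_eventuallyEq h), h.eq_of_nhds]

lemma cutoffSize_le {η : E3 → ℝ} {x : E3} {K L : ℝ} (hη : 0 ≤ η x) (hK : ∀ i, |pd i η x| ≤ K)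
    (hL : ∀ i j, |pd j (pd i η) x| ≤ L) : cutoffSize η x ≤ 3 * K ^ 2 + η x * (9 * L) := by
  have h₁ : ∑ i, pd i η x ^ 2 ≤ ∑ _i : Fin 3, K ^ 2 :=
    Finset.sum_le_sum fun i _ => sq_le_sq' (abs_le.1 (hK i)).1 (abs_le.1 (hK i)).2
  have h₂ : ∑ i, ∑ j, |pd j (pd i η) x| ≤ ∑ _i : Fin 3, ∑ _j : Fin 3, L :=
    Finset.sum_le_sum fun i _ => Finset.sum_le_sum fun j _ => hL i j
  refine add_le_add (h₁.trans_eq (by simp)) (mul_le_mul_of_nonneg_left (h₂.trans_eq ?_) hη)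
  simp
  ring

lemma cutoffSize_exp_le {q : E3 → ℝ} (hq : ContDiff ℝ ∞ q) {x : E3} {K L : ℝ}
    (hK : ∀ i, |pd i q x| ≤ K) (hL : ∀ i j, |pd j (pd i q) x| ≤ L) :
    cutoffSize (fun z => exp (q z)) x ≤ exp (q x) ^ 2 * (12 * K ^ 2 + 9 * L) := by
  have hqd : Differentiable ℝ q := hq.differentiable (by simp)
  have hpd : ∀ i, pd i (fun z => exp (q z)) = fun z => exp (q z) * pd i q z :=
    fun i => funext fun z => pd_exp (hqd z)
  have hpd₂ : ∀ i j, pd j (pd i fun z => exp (q z)) x =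
      exp (q x) * (pd j (pd i q) x + pd j q x * pd i q x) := fun i j => by
    rw [hpd, pd_mul (hqd x).exp ((contDiff_pd hq).differentiable (by simp) x), pd_exp (hqd x)]
    ring
  refine (cutoffSize_le (K := exp (q x) * K) (L := exp (q x) * (L + K * K)) (exp_nonneg _)
    (fun i => ?_) fun i j => ?_).trans_eq (by ring)
  · rw [hpd, abs_mul, abs_exp]
    gcongr
    exact hK i
  · rw [hpd₂, abs_mul, abs_exp]
    gcongr
    refine (abs_add_le _ _).trans (add_le_add (hL i j) ?_)
    rw [abs_mul]
    exact mul_le_mul (hK j) (hK i) (abs_nonneg _) ((abs_nonneg _).trans (hK j))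

/-- The step function `∑ₖ aₖ 1_{|x| < 4ρₖ}` on the dyadic scales `ρₖ = 2ᵏ ρ`, `k < N`. -/
def dyadicWeight (ρ : ℝ) (N : ℕ) (a : ℕ → ℝ) (x : E3) : ℝ :=
  ∑ k ∈ Finset.range N, (ball 0 (4 * (ρ * 2 ^ k))).indicator (fun _ => a k) x

lemma dyadicWeight_nonneg {ρ : ℝ} {N : ℕ} {a : ℕ → ℝ} (ha : ∀ k, 0 ≤ a k) (x : E3) :
    0 ≤ dyadicWeight ρ N a x :=
  Finset.sum_nonneg fun k _ => Set.indicator_nonneg (fun _ _ => ha k) x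

lemma le_dyadicWeight {ρ : ℝ} {N k : ℕ} {a : ℕ → ℝ} (ha : ∀ k, 0 ≤ a k) (hk : k < N) {x : E3}
    (hx : ‖x‖ < 4 * (ρ * 2 ^ k)) : a k ≤ dyadicWeight ρ N a x := by
  rw [← Set.indicator_of_mem (mem_ball_zero_iff.2 hx) fun _ => a k]
  exact Finset.single_le_sum
    (f := fun k => (ball (0 : E3) (4 * (ρ * 2 ^ k))).indicator (fun _ => a k) x)
    (fun k _ => Set.indicator_nonneg (fun _ _ => ha k) x) (Finset.mem_range.2 hk)

/-- The exponent `-∑ₖ bₖ (1 - χₖ)` of the Agmon weight, `χₖ` being the cutoff at scale `2ρₖ`,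
`ρₖ = 2ᵏ ρ`: crossing the shell `2ρₖ < |x| < 4ρₖ` outwards lowers it by `bₖ`. -/
def agmonExponent (ρ : ℝ) (N : ℕ) (b : ℕ → ℝ) (x : E3) : ℝ :=
  ∑ k ∈ Finset.range N, b k * (cutoff (2 * (ρ * 2 ^ k)) x - 1)

/-- The Agmon cutoff: the exponential weight with exponent `agmonExponent`, localized to the ball of
radius `2R`. -/
def agmonCutoff (ρ R : ℝ) (N : ℕ) (b : ℕ → ℝ) (x : E3) : ℝ :=
  cutoff R x * exp (agmonExponent ρ N b x)

lemma pd_cutoff_eventuallyEq_zero {s : ℝ} (hs : 0 < s) {x : E3} (hx : ‖x‖ ≤ s ∨ 2 * s ≤ ‖x‖)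
    (i : Fin 3) : pd i (cutoff s) =ᶠ[𝓝 x] 0 := by
  rcases hx with hx | hx
  · have hone : cutoff s =ᶠ[𝓝 x] fun _ => 1 := by
      filter_upwards [isOpen_ball.mem_nhds (mem_ball_zero_iff.2 (by linarith : ‖x‖ < 5 / 4 * s))]
        with z hz
      exact cutoff_eq_one hs (mem_ball_zero_iff.1 hz).le
    refine (pd_eventuallyEq hone).trans (.of_eq ?_)
    ext
    simp [pd]
  · have hmem : x ∉ tsupport (cutoff s) := fun h =>
      (mem_ball_zero_iff.1 (tsupport_cutoff_subset hs h)).not_ge hx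
    exact notMem_tsupport_iff_eventuallyEq.1 fun h => hmem (tsupport_pd_subset i _ h)

section AgmonCutoff

variable {ρ R : ℝ} {N : ℕ} {b : ℕ → ℝ} {x : E3}

lemma contDiff_agmonExponent : ContDiff ℝ ∞ (agmonExponent ρ N b) :=
  ContDiff.sum fun _ _ => contDiff_const.mul ((contDiff_cutoff _).sub contDiff_const)

lemma contDiff_agmonCutoff : ContDiff ℝ ∞ (agmonCutoff ρ R N b) :=
  (contDiff_cutoff R).mul contDiff_agmonExponent.exp

lemma tsupport_agmonCutoff_subset (hR : 0 < R) :
    tsupport (agmonCutoff ρ R N b) ⊆ ball 0 (2 * R) :=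
  tsupport_mul_subset_left.trans (tsupport_cutoff_subset hR)

lemma agmonCutoff_nonneg : 0 ≤ agmonCutoff ρ R N b x :=
  mul_nonneg (cutoff_nonneg R x) (exp_nonneg _)

lemma agmonExponent_eq_zero (hρ : 0 < ρ) (hx : ‖x‖ ≤ ρ) : agmonExponent ρ N b x = 0 := by
  refine Finset.sum_eq_zero fun k _ => ?_
  have hk : ρ ≤ ρ * 2 ^ k := le_mul_of_one_le_right hρ.le (one_le_pow₀ one_le_two)
  rw [cutoff_eq_one (by positivity) (by linarith), sub_self, mul_zero]

lemma agmonExponent_eq_neg_sum (hρ : 0 < ρ) (hx : ∀ k < N, 4 * (ρ * 2 ^ k) ≤ ‖x‖) :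
    agmonExponent ρ N b x = -∑ k ∈ Finset.range N, b k := by
  rw [agmonExponent, ← Finset.sum_neg_distrib]
  refine Finset.sum_congr rfl fun k hk => ?_
  have hmem : x ∉ tsupport (cutoff (2 * (ρ * 2 ^ k))) := fun h => by
    have := mem_ball_zero_iff.1 (tsupport_cutoff_subset (by positivity) h)
    linarith [hx k (Finset.mem_range.1 hk)]
  rw [image_eq_zero_of_notMem_tsupport hmem]
  ring

lemma agmonCutoff_eq_one (hρ : 0 < ρ) (hρR : ρ < R) (hx : ‖x‖ ≤ ρ) :
    agmonCutoff ρ R N b x = 1 := by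
  rw [agmonCutoff, agmonExponent_eq_zero hρ hx, exp_zero, mul_one,
    cutoff_eq_one (by linarith) (by linarith)]

lemma pd_agmonExponent (i : Fin 3) : pd i (agmonExponent ρ N b) =
    fun x => ∑ k ∈ Finset.range N, b k * pd i (cutoff (2 * (ρ * 2 ^ k))) x := by
  ext x
  have hdiff : ∀ k, DifferentiableAt ℝ (cutoff (2 * (ρ * 2 ^ k))) x := fun k =>
    (contDiff_cutoff _).differentiable (by simp) x
  unfold agmonExponent
  rw [pd_sum fun k _ => by fun_prop]
  refine Finset.sum_congr rfl fun k _ => ?_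
  simp only [pd_const_mul, pd_sub (hdiff k) (differentiableAt_const 1)]
  simp [pd]

lemma pd_pd_agmonExponent (i j : Fin 3) : pd j (pd i (agmonExponent ρ N b)) x =
    ∑ k ∈ Finset.range N, b k * pd j (pd i (cutoff (2 * (ρ * 2 ^ k)))) x := by
  have hdiff : ∀ k, DifferentiableAt ℝ (pd i (cutoff (2 * (ρ * 2 ^ k)))) x := fun k =>
    (contDiff_pd (contDiff_cutoff _)).differentiable (by simp) x
  rw [pd_agmonExponent, pd_sum fun k _ => by fun_prop]
  simp only [pd_const_mul]

/-- The shells where the summands vary are disjoint. -/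
lemma pd_agmonExponent_eq_of_mem_shell (hρ : 0 < ρ) {m : ℕ} (hm : m < N)
    (hx₁ : 2 * (ρ * 2 ^ m) < ‖x‖) (hx₂ : ‖x‖ < 4 * (ρ * 2 ^ m)) (i : Fin 3) :
    pd i (agmonExponent ρ N b) x = b m * pd i (cutoff (2 * (ρ * 2 ^ m))) x ∧
      ∀ j, pd j (pd i (agmonExponent ρ N b)) x =
        b m * pd j (pd i (cutoff (2 * (ρ * 2 ^ m)))) x := by
  have hzero : ∀ k ≠ m, pd i (cutoff (2 * (ρ * 2 ^ k))) =ᶠ[𝓝 x] 0 := fun k hk => by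
    refine pd_cutoff_eventuallyEq_zero (by positivity) ?_ i
    rcases hk.lt_or_gt with hlt | hgt
    · have : ρ * 2 ^ (k + 1) ≤ ρ * 2 ^ m := by gcongr; exacts [one_le_two, hlt]
      exact .inr (by rw [pow_succ] at this; linarith)
    · have : ρ * 2 ^ (m + 1) ≤ ρ * 2 ^ k := by gcongr; exacts [one_le_two, hgt]
      exact .inl (by rw [pow_succ] at this; linarith)
  refine ⟨?_, fun j => ?_⟩
  · rw [pd_agmonExponent]
    refine Finset.sum_eq_single_of_mem m (Finset.mem_range.2 hm) fun k _ hk => ?_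
    rw [(hzero k hk).eq_of_nhds, Pi.zero_apply, mul_zero]
  · rw [pd_pd_agmonExponent]
    refine Finset.sum_eq_single_of_mem m (Finset.mem_range.2 hm) fun k _ hk => ?_
    rw [pd_congr (hzero k hk)]
    simp [pd]

lemma pd_agmonExponent_eq_zero (hρ : 0 < ρ)
    (hx : ∀ k < N, ‖x‖ ≤ 2 * (ρ * 2 ^ k) ∨ 4 * (ρ * 2 ^ k) ≤ ‖x‖) (i : Fin 3) :
    pd i (agmonExponent ρ N b) x = 0 ∧ ∀ j, pd j (pd i (agmonExponent ρ N b)) x = 0 := by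
  have hzero : ∀ k ∈ Finset.range N, pd i (cutoff (2 * (ρ * 2 ^ k))) =ᶠ[𝓝 x] 0 := fun k hk =>
    pd_cutoff_eventuallyEq_zero (by positivity)
      ((hx k (Finset.mem_range.1 hk)).imp_right fun h => by linarith) i
  refine ⟨?_, fun j => ?_⟩
  · rw [pd_agmonExponent]
    exact Finset.sum_eq_zero fun k hk => by rw [(hzero k hk).eq_of_nhds, Pi.zero_apply, mul_zero]
  · rw [pd_pd_agmonExponent]
    exact Finset.sum_eq_zero fun k hk => by rw [pd_congr (hzero k hk)]; simp [pd]

lemma cutoffSize_exp_agmonExponent_le_of_mem_shell {K : ℝ}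
    (hK : ∀ s > 0, (∀ i x, |pd i (cutoff s) x| ≤ K / s) ∧
      ∀ i j x, |pd j (pd i (cutoff s)) x| ≤ K / s ^ 2)
    (hρ : 0 < ρ) {m : ℕ} (hm : m < N) (hb : 0 ≤ b m)
    (hx₁ : 2 * (ρ * 2 ^ m) < ‖x‖) (hx₂ : ‖x‖ < 4 * (ρ * 2 ^ m)) :
    cutoffSize (fun z => exp (agmonExponent ρ N b z)) x ≤ exp (agmonExponent ρ N b x) ^ 2 *
      (12 * (b m * (K / (2 * (ρ * 2 ^ m)))) ^ 2 + 9 * (b m * (K / (2 * (ρ * 2 ^ m)) ^ 2))) := by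
  obtain ⟨hK₁, hK₂⟩ := hK (2 * (ρ * 2 ^ m)) (by positivity)
  refine cutoffSize_exp_le contDiff_agmonExponent (fun i => ?_) fun i j => ?_
  · rw [(pd_agmonExponent_eq_of_mem_shell hρ hm hx₁ hx₂ i).1, abs_mul, abs_of_nonneg hb]
    gcongr
    exact hK₁ i x
  · rw [(pd_agmonExponent_eq_of_mem_shell hρ hm hx₁ hx₂ i).2, abs_mul, abs_of_nonneg hb]
    gcongr
    exact hK₂ i j x

lemma exists_cutoffSize_exp_agmonExponent_le (B : ℝ) : ∃ C > 0, ∀ (ρ : ℝ) (N : ℕ) (b : ℕ → ℝ),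
    0 < ρ → (∀ k, 0 ≤ b k) → (∀ k, b k ≤ B) → ∀ x y : E3, ‖y‖ < ρ →
      cutoffSize (fun z => exp (agmonExponent ρ N b z)) x * ‖x - y‖⁻¹ ≤
        C * exp (agmonExponent ρ N b x) ^ 2 *
          dyadicWeight ρ N (fun k => b k / (ρ * 2 ^ k) ^ 3) x := by
  obtain ⟨K, hK, hcut⟩ := exists_abs_pd_cutoff_le
  refine ⟨3 * |B| * K ^ 2 + 3 * K, by positivity, fun ρ N b hρ hb0 hbB x y hy => ?_⟩
  have hweight : ∀ k, 0 ≤ b k / (ρ * 2 ^ k) ^ 3 := fun k => div_nonneg (hb0 k) (by positivity)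
  by_cases hx : ∀ k < N, ‖x‖ ≤ 2 * (ρ * 2 ^ k) ∨ 4 * (ρ * 2 ^ k) ≤ ‖x‖
  · have hsize := cutoffSize_exp_le (K := 0) (L := 0) (contDiff_agmonExponent (b := b))
      (fun i => by rw [(pd_agmonExponent_eq_zero hρ hx i).1, abs_zero])
      fun i j => by rw [(pd_agmonExponent_eq_zero hρ hx i).2 j, abs_zero]
    calc _ ≤ exp (agmonExponent ρ N b x) ^ 2 * (12 * 0 ^ 2 + 9 * 0) * ‖x - y‖⁻¹ := by gcongr
      _ = 0 := by ring
      _ ≤ _ := by have := dyadicWeight_nonneg (ρ := ρ) (N := N) hweight x; positivity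
  push Not at hx
  obtain ⟨k, hk, hx₁, hx₂⟩ := hx
  have hscale : ρ ≤ ρ * 2 ^ k := le_mul_of_one_le_right hρ.le (one_le_pow₀ one_le_two)
  have hdx := le_dyadicWeight hweight hk hx₂
  have hsize := cutoffSize_exp_agmonExponent_le_of_mem_shell hcut hρ hk (hb0 k) hx₁ hx₂
  set r := ρ * 2 ^ k
  have hr : 0 < r := hρ.trans_le hscale
  have hb := hb0 k
  calc _ ≤ exp (agmonExponent ρ N b x) ^ 2 *
          (12 * (b k * (K / (2 * r))) ^ 2 + 9 * (b k * (K / (2 * r) ^ 2))) * r⁻¹ := by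
        gcongr
        linarith [norm_sub_norm_le x y]
    _ = (3 * b k * K ^ 2 + 9 / 4 * K) * exp (agmonExponent ρ N b x) ^ 2 * (b k / r ^ 3) := by
        field_simp
        ring
    _ ≤ _ := by
        gcongr
        · exact (hbB k).trans (le_abs_self B)
        · norm_num

lemma exists_cutoffSize_exp_mul_cutoff_le : ∃ C > 0, ∀ R > 0, ∀ (c : ℝ) (x y : E3),
    5 / 4 * R ≤ ‖x‖ → ‖y‖ < R →
      cutoffSize (fun z => exp c * cutoff R z) x * ‖x - y‖⁻¹ ≤
        C * (ball 0 (2 * R)).indicator (fun _ => exp (2 * c) / R ^ 3) x := by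
  obtain ⟨K, hK, hcut⟩ := exists_abs_pd_cutoff_le
  refine ⟨12 * K ^ 2 + 36 * K, by positivity, fun R hR c x y hx hy => ?_⟩
  obtain ⟨hK₁, hK₂⟩ := hcut R hR
  by_cases hxR : x ∈ ball 0 (2 * R)
  · have hsize := cutoffSize_le (η := fun z => exp c * cutoff R z) (x := x)
      (K := exp c * (K / R)) (L := exp c * (K / R ^ 2))
      (mul_nonneg (exp_nonneg _) (cutoff_nonneg _ _))
      (fun i => by
        rw [pd_const_mul, abs_mul, abs_exp]
        gcongr
        exact hK₁ i x)
      fun i j => by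
        simp only [pd_const_mul, abs_mul, abs_exp]
        gcongr
        exact hK₂ i j x
    rw [Set.indicator_of_mem hxR, two_mul c, exp_add]
    calc _ ≤ (3 * (exp c * (K / R)) ^ 2 + exp c * 1 * (9 * (exp c * (K / R ^ 2)))) *
            (R / 4)⁻¹ := by
          gcongr
          · refine hsize.trans ?_
            gcongr
            exact cutoff_le_one R x
          · linarith [norm_sub_norm_le x y]
      _ = _ := by field_simp; ring
  · have hmem : x ∉ tsupport (cutoff R) := fun h => hxR (tsupport_cutoff_subset hR h)
    have hzero : (fun z => exp c * cutoff R z) =ᶠ[𝓝 x] fun _ => 0 := by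
      filter_upwards [notMem_tsupport_iff_eventuallyEq.1 hmem] with z hz
      simp [hz]
    rw [cutoffSize_congr hzero, Set.indicator_of_notMem hxR]
    simp [cutoffSize, pd]

/-- The first term lives where the weight decays, and is controlled by its rate of decay. The
second lives at scale `R`, where the weight has reached its minimum. -/
lemma exists_cutoffSize_agmonCutoff_le (B : ℝ) :
    ∃ C > 0, ∀ (ρ R : ℝ) (N : ℕ) (b : ℕ → ℝ), 0 < ρ → ρ < R → (∀ k, 0 ≤ b k) → (∀ k, b k ≤ B) →
      (∀ k < N, 4 * (ρ * 2 ^ k) ≤ R) → ∀ x y : E3, ‖y‖ < ρ →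
        cutoffSize (agmonCutoff ρ R N b) x * ‖x - y‖⁻¹ ≤
          C * (agmonCutoff ρ R N b x ^ 2 * dyadicWeight ρ N (fun k => b k / (ρ * 2 ^ k) ^ 3) x +
            (ball 0 (2 * R)).indicator
              (fun _ => exp (-2 * ∑ k ∈ Finset.range N, b k) / R ^ 3) x) := by
  obtain ⟨C₁, hC₁, hinner⟩ := exists_cutoffSize_exp_agmonExponent_le B
  obtain ⟨C₂, hC₂, houter⟩ := exists_cutoffSize_exp_mul_cutoff_le
  refine ⟨C₁ + C₂, by positivity, fun ρ R N b hρ hρR hb0 hbB hN x y hy => ?_⟩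
  have hR : 0 < R := hρ.trans hρR
  have hw := dyadicWeight_nonneg (ρ := ρ) (N := N) (a := fun k => b k / (ρ * 2 ^ k) ^ 3)
    (fun k => div_nonneg (hb0 k) (by positivity)) x
  have hball : 0 ≤ (ball 0 (2 * R)).indicator
      (fun _ => exp (-2 * ∑ k ∈ Finset.range N, b k) / R ^ 3) x :=
    Set.indicator_nonneg (fun _ _ => by positivity) x
  rcases lt_or_ge ‖x‖ (5 / 4 * R) with hx | hx
  · have hloc : agmonCutoff ρ R N b =ᶠ[𝓝 x] fun z => exp (agmonExponent ρ N b z) := by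
      filter_upwards [isOpen_ball.mem_nhds (mem_ball_zero_iff.2 hx)] with z hz
      rw [agmonCutoff, cutoff_eq_one hR (mem_ball_zero_iff.1 hz).le, one_mul]
    rw [cutoffSize_congr hloc, hloc.eq_of_nhds]
    refine (hinner ρ N b hρ hb0 hbB x y hy).trans ?_
    rw [mul_assoc]
    gcongr <;> linarith
  · have hloc : agmonCutoff ρ R N b =ᶠ[𝓝 x]
        fun z => exp (-∑ k ∈ Finset.range N, b k) * cutoff R z := by
      filter_upwards [(isOpen_lt continuous_const continuous_norm).mem_nhds
        (by linarith : R < ‖x‖)] with z hz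
      rw [agmonCutoff, agmonExponent_eq_neg_sum hρ fun k hk => (hN k hk).trans hz.le, mul_comm]
    rw [cutoffSize_congr hloc]
    have hout := houter R hR (-∑ k ∈ Finset.range N, b k) x y hx (hy.trans hρR)
    rw [mul_neg, ← neg_mul] at hout
    refine hout.trans ?_
    gcongr
    · linarith
    · exact le_add_of_nonneg_left (by positivity)

end AgmonCutoff

/-! ### The commutator of the Lamé operator with a cutoff -/

lemma exists_abs_Phi_le (α : ℝ) : ∃ C : ℝ, 0 < C ∧ ∀ z i j, |Phi α z i j| ≤ C * ‖z‖⁻¹ := by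
  refine ⟨|cA α| * (1 + |α / (α + 2)|) + 1, by positivity, fun z i j => ?_⟩
  have hz (k : Fin 3) : |z k| ≤ ‖z‖ := by simpa using PiLp.norm_apply_le z k
  have hdyad : |α / (α + 2) * (z i * z j) / ‖z‖ ^ 2| ≤ |α / (α + 2)| := by
    rw [abs_div, abs_mul, abs_mul, abs_of_nonneg (sq_nonneg ‖z‖)]
    refine div_le_of_le_mul₀ (by positivity) (by positivity) ?_
    rw [sq]
    gcongr <;> apply hz
  have hδ : |if i = j then (1 : ℝ) else 0| ≤ 1 := by split_ifs <;> simp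
  rw [Phi, abs_mul, abs_mul, abs_of_nonneg (by positivity : 0 ≤ ‖z‖⁻¹)]
  calc |cA α| * ‖z‖⁻¹ * _ ≤ |cA α| * ‖z‖⁻¹ * (1 + |α / (α + 2)|) := by
        gcongr; exact (abs_add_le _ _).trans (add_le_add hδ hdyad)
    _ = |cA α| * (1 + |α / (α + 2)|) * ‖z‖⁻¹ := by ring
    _ ≤ (|cA α| * (1 + |α / (α + 2)|) + 1) * ‖z‖⁻¹ := by gcongr; linarith

/-- The commutator `L(ηv) - ηLv`, expanded by the Leibniz rule. -/
def lameComm (α : ℝ) (η : E3 → ℝ) (v : E3 → Fin 3 → ℝ) (x : E3) (i : Fin 3) : ℝ :=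
  -∑ k, (2 * (pd k η x * pd k (fun z => v z i) x) + pd k (pd k η) x * v x i)
    - α * (pd i η x * divg v x +
      ∑ k, (pd i (pd k η) x * v x k + pd k η x * pd i (fun z => v z k) x))

section Leibniz

variable {η f : E3 → ℝ} {v : E3 → Fin 3 → ℝ}

lemma pd_mul_eq (hη : ContDiff ℝ ∞ η) (hf : ContDiff ℝ ∞ f) (k : Fin 3) :
    pd k (fun z => η z * f z) = fun z => η z * pd k f z + pd k η z * f z :=
  funext fun z => pd_mul (hη.differentiable (by simp) z) (hf.differentiable (by simp) z)

lemma pd_add_eq (hη : ContDiff ℝ ∞ η) (hf : ContDiff ℝ ∞ f) (k : Fin 3) :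
    pd k (fun z => η z + f z) = fun z => pd k η z + pd k f z :=
  funext fun z => pd_add (hη.differentiable (by simp) z) (hf.differentiable (by simp) z)

lemma pd_pd_mul (hη : ContDiff ℝ ∞ η) (hf : ContDiff ℝ ∞ f) (k l : Fin 3) :
    pd l (pd k (fun z => η z * f z)) = fun z =>
      η z * pd l (pd k f) z + pd l η z * pd k f z +
        (pd k η z * pd l f z + pd l (pd k η) z * f z) := by
  rw [pd_mul_eq hη hf, pd_add_eq (hη.mul (contDiff_pd hf)) ((contDiff_pd hη).mul hf),
    pd_mul_eq hη (contDiff_pd hf), pd_mul_eq (contDiff_pd hη) hf]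

lemma contDiff_divg (hv : ContDiff ℝ ∞ v) : ContDiff ℝ ∞ (divg v) :=
  ContDiff.sum fun k _ => contDiff_pd (contDiff_pi.1 hv k)

lemma pd_divg (hv : ContDiff ℝ ∞ v) (i : Fin 3) (x : E3) :
    pd i (divg v) x = ∑ k, pd i (pd k fun z => v z k) x :=
  pd_sum fun k _ => (contDiff_pd (contDiff_pi.1 hv k)).differentiable (by simp) x

lemma lame_smul (α : ℝ) (hη : ContDiff ℝ ∞ η) (hv : ContDiff ℝ ∞ v) (x : E3) (i : Fin 3) :
    lame α (η • v) x i = η x * lame α v x i + lameComm α η v x i := by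
  have hv' := contDiff_pi.1 hv
  have hcomp (k : Fin 3) : (fun z => (η • v) z k) = fun z => η z * v z k := rfl
  simp only [lame, lap, lameComm, pd_divg hv, pd_divg (hη.smul hv : ContDiff ℝ ∞ (η • v)), hcomp,
    pd_pd_mul hη (hv' _), divg]
  simp only [Fin.sum_univ_three]
  ring

end Leibniz

section CommutatorBound

lemma abs_le_sum_abs {ι : Type*} [Fintype ι] (f : ι → ℝ) (i : ι) : |f i| ≤ ∑ k, |f k| :=
  Finset.single_le_sum (f := fun k => |f k|) (fun _ _ => abs_nonneg _) (Finset.mem_univ i)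

lemma abs_le_sum_sum_abs {ι κ : Type*} [Fintype ι] [Fintype κ] (f : ι → κ → ℝ) (i : ι) (k : κ) :
    |f i k| ≤ ∑ i, ∑ k, |f i k| :=
  (abs_le_sum_abs (f i) k).trans <| Finset.single_le_sum (f := fun i => ∑ k, |f i k|)
    (fun _ _ => by positivity) (Finset.mem_univ i)

lemma abs_sum_le_card_mul {ι : Type*} [Fintype ι] {f : ι → ℝ} {b : ℝ} (h : ∀ i, |f i| ≤ b) :
    |∑ i, f i| ≤ Fintype.card ι * b :=
  (Finset.abs_sum_le_sum_abs f _).trans <|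
    (Finset.sum_le_card_nsmul _ _ b fun i _ => h i).trans_eq (nsmul_eq_mul _ _)

lemma sum_abs_sq_le {ι : Type*} [Fintype ι] (f : ι → ℝ) :
    (∑ k, |f k|) ^ 2 ≤ Fintype.card ι * ∑ k, f k ^ 2 := by
  simpa using sq_sum_le_card_mul_sum_sq (s := Finset.univ) (f := fun k => |f k|)

lemma sum_sum_abs_sq_le {ι κ : Type*} [Fintype ι] [Fintype κ] (f : ι → κ → ℝ) :
    (∑ i, ∑ k, |f i k|) ^ 2 ≤ Fintype.card (ι × κ) * ∑ i, ∑ k, f i k ^ 2 := by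
  simpa only [Fintype.sum_prod_type] using sum_abs_sq_le fun q : ι × κ => f q.1 q.2

variable {η : E3 → ℝ} {v : E3 → Fin 3 → ℝ} {x : E3}

lemma abs_lameComm_le (α : ℝ) (η : E3 → ℝ) (v : E3 → Fin 3 → ℝ) (x : E3) (i : Fin 3) :
    |lameComm α η v x i| ≤ 6 * (1 + |α|) *
      ((∑ k, |pd k η x|) * (∑ j, ∑ k, |pd k (fun z => v z j) x|) +
        (∑ j, ∑ k, |pd k (pd j η) x|) * ∑ j, |v x j|) := by
  set p := ∑ k, |pd k η x|
  set m := ∑ j, ∑ k, |pd k (pd j η) x|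
  set n := ∑ j, |v x j|
  set D := ∑ j, ∑ k, |pd k (fun z => v z j) x|
  have hp (k) : |pd k η x| ≤ p := abs_le_sum_abs (fun k => pd k η x) k
  have hn (k) : |v x k| ≤ n := abs_le_sum_abs (v x) k
  have hm (j k) : |pd k (pd j η) x| ≤ m := abs_le_sum_sum_abs (fun j k => pd k (pd j η) x) j k
  have hD (j k) : |pd k (fun z => v z j) x| ≤ D :=
    abs_le_sum_sum_abs (fun j k => pd k (fun z => v z j) x) j k
  have hdiv : |divg v x| ≤ 3 * D := by simpa [divg] using abs_sum_le_card_mul fun k => hD k k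
  have hlap : |∑ k, (2 * (pd k η x * pd k (fun z => v z i) x) + pd k (pd k η) x * v x i)| ≤
      3 * (2 * (p * D) + m * n) := by
    refine mod_cast abs_sum_le_card_mul fun k => (abs_add_le _ _).trans ?_
    rw [abs_mul, abs_mul, abs_mul, abs_two]
    gcongr
    exacts [hp k, hD i k, hm k k, hn i]
  have hgrad : |∑ k, (pd i (pd k η) x * v x k + pd k η x * pd i (fun z => v z k) x)| ≤
      3 * (m * n + p * D) := by
    refine mod_cast abs_sum_le_card_mul fun k => (abs_add_le _ _).trans ?_
    rw [abs_mul, abs_mul]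
    gcongr
    exacts [hm k i, hn k, hp k, hD k i]
  have hmn : 0 ≤ m * n := by positivity
  calc |lameComm α η v x i|
      ≤ 3 * (2 * (p * D) + m * n) + |α| * (p * (3 * D) + 3 * (m * n + p * D)) := by
        refine (abs_sub _ _).trans (add_le_add (by rwa [abs_neg]) ?_)
        rw [abs_mul]
        gcongr
        refine (abs_add_le _ _).trans (add_le_add ?_ hgrad)
        rw [abs_mul]
        gcongr
        exact hp i
    _ ≤ 6 * (1 + |α|) * (p * D + m * n) := by nlinarith [mul_nonneg (abs_nonneg α) hmn]

/-- `η Dv = D(ηv) - v Dη`. -/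
lemma mul_sum_abs_pd_le (hη : ContDiff ℝ ∞ η) (hv : ContDiff ℝ ∞ v) (hηx : 0 ≤ η x) :
    η x * ∑ i, ∑ k, |pd k (fun z => v z i) x| ≤
      ∑ i, ∑ k, |pd k (fun z => (η • v) z i) x| + (∑ k, |pd k η x|) * ∑ j, |v x j| := by
  rw [mul_comm (∑ k, _), Finset.sum_mul_sum, Finset.mul_sum, ← Finset.sum_add_distrib]
  refine Finset.sum_le_sum fun i _ => ?_
  rw [Finset.mul_sum, ← Finset.sum_add_distrib]
  refine Finset.sum_le_sum fun k _ => ?_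
  have hpd : pd k (fun z => (η • v) z i) x = η x * pd k (fun z => v z i) x + pd k η x * v x i :=
    congrFun (pd_mul_eq hη (contDiff_pi.1 hv i) k) x
  calc η x * |pd k (fun z => v z i) x|
      = |pd k (fun z => (η • v) z i) x - v x i * pd k η x| := by
        rw [hpd, mul_comm (v x i), add_sub_cancel_right, abs_mul, abs_of_nonneg hηx]
    _ ≤ |pd k (fun z => (η • v) z i) x| + |v x i| * |pd k η x| := by
        simpa only [abs_mul] using abs_sub (pd k (fun z => (η • v) z i) x) (v x i * pd k η x)

lemma mul_le_mul_sq_add_sq_div {τ : ℝ} (hτ : 0 < τ) (a b : ℝ) :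
    a * b ≤ τ * b ^ 2 + a ^ 2 / (4 * τ) := by
  have h : τ * b ^ 2 + a ^ 2 / (4 * τ) - a * b = (2 * τ * b - a) ^ 2 / (4 * τ) := by
    field_simp; ring
  have : 0 ≤ (2 * τ * b - a) ^ 2 / (4 * τ) := by positivity
  linarith

/-- The first order part `Dη · Dv` of the commutator comes with a factor `η`, and `η Dv` is
controlled by `D(ηv)`, so that the Young inequality applies. -/
lemma commutator_young {τ : ℝ} (hτ : 0 < τ) (hη : ContDiff ℝ ∞ η) (hv : ContDiff ℝ ∞ v)
    (hηx : 0 ≤ η x) :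
    ((∑ k, |pd k η x|) * (∑ i, ∑ k, |pd k (fun z => v z i) x|) +
        (∑ i, ∑ j, |pd j (pd i η) x|) * ∑ j, |v x j|) * (η x * ∑ j, |v x j|) ≤
      9 * τ * gradSq (η • v) x + (9 / (4 * τ) + 9) * cutoffSize η x * normSq v x := by
  have hprod := mul_sum_abs_pd_le hη hv hηx
  have hpp : (∑ k, |pd k η x|) ^ 2 ≤ 3 * ∑ k, pd k η x ^ 2 := by
    simpa using sum_abs_sq_le fun k => pd k η x
  have hnn : (∑ j, |v x j|) ^ 2 ≤ 3 * normSq v x := by simpa [normSq] using sum_abs_sq_le (v x)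
  have hWW : (∑ i, ∑ k, |pd k (fun z => (η • v) z i) x|) ^ 2 ≤ 9 * gradSq (η • v) x := by
    have := sum_sum_abs_sq_le fun i k => pd k (fun z => (η • v) z i) x
    norm_num at this
    exact this
  have hN := normSq_nonneg v x
  unfold cutoffSize
  set p := ∑ k, |pd k η x|
  set m := ∑ i, ∑ j, |pd j (pd i η) x|
  set n := ∑ j, |v x j|
  set D := ∑ i, ∑ k, |pd k (fun z => v z i) x|
  set W := ∑ i, ∑ k, |pd k (fun z => (η • v) z i) x|
  set P := ∑ k, pd k η x ^ 2
  have hpn : (p * n) ^ 2 ≤ 9 * P * normSq v x := by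
    rw [mul_pow]
    calc p ^ 2 * n ^ 2 ≤ (3 * P) * (3 * normSq v x) := by gcongr
      _ = 9 * P * normSq v x := by ring
  calc (p * D + m * n) * (η x * n) = (p * n) * (η x * D) + η x * m * n ^ 2 := by ring
    _ ≤ (p * n) * (W + p * n) + η x * m * n ^ 2 := by gcongr
    _ = (p * n) * W + (p * n) ^ 2 + η x * m * n ^ 2 := by ring
    _ ≤ (τ * W ^ 2 + (p * n) ^ 2 / (4 * τ)) + (p * n) ^ 2 + η x * m * n ^ 2 := by
        gcongr; exact mul_le_mul_sq_add_sq_div hτ _ _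
    _ ≤ τ * (9 * gradSq (η • v) x) + 9 * P * normSq v x / (4 * τ) + 9 * P * normSq v x +
        η x * m * (3 * normSq v x) := by gcongr
    _ = 9 * τ * gradSq (η • v) x + (9 / (4 * τ) + 9) * P * normSq v x +
        3 * (η x * m) * normSq v x := by ring
    _ ≤ 9 * τ * gradSq (η • v) x + (9 / (4 * τ) + 9) * P * normSq v x +
        (9 / (4 * τ) + 9) * (η x * m) * normSq v x := by
        gcongr
        linarith [show 0 < 9 / (4 * τ) by positivity]
    _ = _ := by ring

lemma exists_abs_sum_lameComm_mul_Phi_le (α : ℝ) {ε : ℝ} (hε : 0 < ε) : ∃ C : ℝ, 0 < C ∧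
    ∀ (η : E3 → ℝ) (v : E3 → Fin 3 → ℝ), ContDiff ℝ ∞ η → ContDiff ℝ ∞ v → ∀ x, 0 ≤ η x → ∀ y,
      |∑ i, ∑ j, lameComm α η v x i * Phi α (x - y) i j * (η • v) x j| ≤
        ε * (gradSq (η • v) x * ‖x - y‖⁻¹) + C * (cutoffSize η x * ‖x - y‖⁻¹) * normSq v x := by
  obtain ⟨CΦ, hCΦ, hΦ⟩ := exists_abs_Phi_le α
  set M := 54 * (1 + |α|) * CΦ with hM
  have hM0 : 0 < M := by positivity
  set τ := ε / (9 * M) with hτ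
  refine ⟨M * (9 / (4 * τ) + 9), by positivity, fun η v hη hv x hηx y => ?_⟩
  have hyoung := commutator_young (x := x) (by positivity : 0 < τ) hη hv hηx
  have hcomm := abs_lameComm_le α η v x
  set n := ∑ j, |v x j|
  set T := (∑ k, |pd k η x|) * (∑ i, ∑ k, |pd k (fun z => v z i) x|) +
    (∑ i, ∑ j, |pd j (pd i η) x|) * n
  have hw (j : Fin 3) : |(η • v) x j| ≤ η x * n := by
    simp only [Pi.smul_apply', Pi.smul_apply, smul_eq_mul, abs_mul, abs_of_nonneg hηx]
    gcongr
    exact abs_le_sum_abs (v x) j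
  have hMτ : M * (9 * τ) = ε := by rw [hτ]; field_simp
  calc |∑ i, ∑ j, lameComm α η v x i * Phi α (x - y) i j * (η • v) x j|
      ≤ 3 * (3 * (6 * (1 + |α|) * T * (CΦ * ‖x - y‖⁻¹) * (η x * n))) := by
        refine mod_cast abs_sum_le_card_mul fun i => mod_cast abs_sum_le_card_mul fun j => ?_
        rw [abs_mul, abs_mul]
        gcongr
        exacts [hcomm i, hΦ _ i j, hw j]
    _ = M * ‖x - y‖⁻¹ * (T * (η x * n)) := by rw [hM]; ring
    _ ≤ M * ‖x - y‖⁻¹ * (9 * τ * gradSq (η • v) x +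
          (9 / (4 * τ) + 9) * cutoffSize η x * normSq v x) := by gcongr
    _ = _ := by rw [← hMτ]; ring

end CommutatorBound

/-! ### Weak form of the Lamé operator -/

lemma integrable_mul_of_tsupport_subset {X : Type*} [TopologicalSpace X] [MeasurableSpace X]
    [OpensMeasurableSpace X] {μ : Measure X} [IsFiniteMeasureOnCompacts μ] {Ω : Set X}
    (hΩ : IsOpen Ω) {f g : X → ℝ} (hf : ContinuousOn f Ω) (hg : Continuous g)
    (hc : HasCompactSupport g) (hs : tsupport g ⊆ Ω) : Integrable (fun x => f x * g x) μ := by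
  have hsub : tsupport (fun x => f x * g x) ⊆ tsupport g := tsupport_mul_subset_right
  exact (ContinuousOn.continuous_of_tsupport_subset (hf.mul hg.continuousOn) hΩ
    (hsub.trans hs)).integrable_of_hasCompactSupport (hc.mono' (subset_tsupport _ |>.trans hsub))

section WeakForm

variable {Ω : Set E3} {f ψ : E3 → Fin 3 → ℝ}

lemma integral_pd_mul_eq_neg (hΩ : IsOpen Ω) {F g : E3 → ℝ} (hF : ContDiffOn ℝ ∞ F Ω)
    (hg : ContDiff ℝ ∞ g) (hc : HasCompactSupport g) (hs : tsupport g ⊆ Ω) (k : Fin 3) :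
    ∫ x, pd k F x * g x = -∫ x, F x * pd k g x := by
  refine neg_eq_iff_eq_neg.1 (integral_mul_fderiv_eq_neg_fderiv_mul_of_integrable ?_ ?_ ?_
    (fun x hx => (hF.contDiffAt (hΩ.mem_nhds (hs hx))).differentiableAt (by simp))
    fun x _ => hg.differentiable (by simp) x).symm
  · exact integrable_mul_of_tsupport_subset hΩ (contDiffOn_pd (i := k) hΩ hF).continuousOn
      hg.continuous hc hs
  · exact integrable_mul_of_tsupport_subset hΩ hF.continuousOn (contDiff_pd (i := k) hg).continuous
      (hasCompactSupport_pd hc) ((tsupport_pd_subset k g).trans hs)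
  · exact integrable_mul_of_tsupport_subset hΩ hF.continuousOn hg.continuous hc hs

lemma contDiffOn_divg (hΩ : IsOpen Ω) (hf : ContDiffOn ℝ ∞ f Ω) : ContDiffOn ℝ ∞ (divg f) Ω :=
  ContDiffOn.sum fun k _ => contDiffOn_pd hΩ (contDiffOn_pi.1 hf k)

/-- The integrand of the bilinear form of the Lamé operator. -/
def lameForm (α : ℝ) (f ψ : E3 → Fin 3 → ℝ) (x : E3) : ℝ :=
  ∑ i, (∑ k, pd k (fun z => f z i) x * pd k (fun z => ψ z i) x +
    α * (divg f x * pd i (fun z => ψ z i) x))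

lemma IsTestOn.apply (hψ : IsTestOn Ω ψ) (i : Fin 3) :
    ContDiff ℝ ∞ (fun z => ψ z i) ∧ HasCompactSupport (fun z => ψ z i) ∧
      tsupport (fun z => ψ z i) ⊆ Ω :=
  ⟨contDiff_pi.1 hψ.1 i, hψ.2.1.comp_left (g := fun a : Fin 3 → ℝ => a i) rfl,
    (tsupport_comp_apply_subset ψ i).trans hψ.2.2⟩

lemma IsTestOn.integrable_mul_pd (hψ : IsTestOn Ω ψ) (hΩ : IsOpen Ω) {F : E3 → ℝ}
    (hF : ContDiffOn ℝ ∞ F Ω) (i k : Fin 3) :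
    Integrable (fun x => F x * pd k (fun z => ψ z i) x) := by
  obtain ⟨hg, hc, hs⟩ := hψ.apply i
  exact integrable_mul_of_tsupport_subset hΩ hF.continuousOn (contDiff_pd hg).continuous
    (hasCompactSupport_pd hc) ((tsupport_pd_subset k _).trans hs)

lemma integrable_lameForm (α : ℝ) (hΩ : IsOpen Ω) (hf : ContDiffOn ℝ ∞ f Ω)
    (hψ : IsTestOn Ω ψ) : Integrable (lameForm α f ψ) :=
  integrable_finsetSum _ fun i _ => (integrable_finsetSum _ fun k _ =>
    hψ.integrable_mul_pd hΩ (contDiffOn_pd hΩ (contDiffOn_pi.1 hf i)) i k).add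
      ((hψ.integrable_mul_pd hΩ (contDiffOn_divg hΩ hf) i i).const_mul α)

lemma integral_sum_lame_mul (α : ℝ) (hΩ : IsOpen Ω) (hf : ContDiffOn ℝ ∞ f Ω)
    (hψ : IsTestOn Ω ψ) : ∫ x, ∑ i, lame α f x i * ψ x i = ∫ x, lameForm α f ψ x := by
  have hDf (i k : Fin 3) := contDiffOn_pd (i := k) hΩ (contDiffOn_pi.1 hf i)
  have hdiv := contDiffOn_divg hΩ hf
  have hint {F : E3 → ℝ} (hF : ContDiffOn ℝ ∞ F Ω) (i : Fin 3) :
      Integrable fun x => F x * ψ x i :=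
    integrable_mul_of_tsupport_subset hΩ hF.continuousOn (hψ.apply i).1.continuous
      (hψ.apply i).2.1 (hψ.apply i).2.2
  have hparts {F : E3 → ℝ} (hF : ContDiffOn ℝ ∞ F Ω) (i k : Fin 3) :
      ∫ x, pd k F x * ψ x i = -∫ x, F x * pd k (fun z => ψ z i) x :=
    integral_pd_mul_eq_neg hΩ hF (hψ.apply i).1 (hψ.apply i).2.1 (hψ.apply i).2.2 k
  have hlap (i : Fin 3) : Integrable fun x => ∑ k, pd k (pd k fun z => f z i) x * ψ x i :=
    integrable_finsetSum _ fun k _ => hint (contDiffOn_pd hΩ (hDf i k)) i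
  have hgrad (i : Fin 3) : Integrable fun x => α * (pd i (divg f) x * ψ x i) :=
    (hint (contDiffOn_pd hΩ hdiv) i).const_mul α
  have hform (i : Fin 3) : Integrable fun x =>
      ∑ k, pd k (fun z => f z i) x * pd k (fun z => ψ z i) x :=
    integrable_finsetSum _ fun k _ => hψ.integrable_mul_pd hΩ (hDf i k) i k
  have hform' (i : Fin 3) : Integrable fun x => α * (divg f x * pd i (fun z => ψ z i) x) :=
    (hψ.integrable_mul_pd hΩ hdiv i i).const_mul α
  have hneg (i : Fin 3) : Integrable fun x => -∑ k, pd k (pd k fun z => f z i) x * ψ x i :=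
    (hlap i).neg
  have hstrong (i : Fin 3) : Integrable fun x => -(∑ k, pd k (pd k fun z => f z i) x * ψ x i) -
      α * (pd i (divg f) x * ψ x i) := (hneg i).sub (hgrad i)
  have hweak (i : Fin 3) : Integrable fun x =>
      ∑ k, pd k (fun z => f z i) x * pd k (fun z => ψ z i) x +
        α * (divg f x * pd i (fun z => ψ z i) x) := (hform i).add (hform' i)
  simp only [lame, lap, lameForm, sub_mul, neg_mul, Finset.sum_mul, mul_assoc α]
  rw [integral_finsetSum _ fun i _ => hstrong i, integral_finsetSum _ fun i _ => hweak i]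
  refine Finset.sum_congr rfl fun i _ => ?_
  rw [integral_sub (hneg i) (hgrad i), integral_add (hform i) (hform' i), integral_neg,
    integral_finsetSum _ fun k _ => hint (contDiffOn_pd hΩ (hDf i k)) i,
    integral_finsetSum _ fun k _ => hψ.integrable_mul_pd hΩ (hDf i k) i k,
    integral_const_mul, integral_const_mul, hparts hdiv i i]
  simp only [hparts (hDf i _), Finset.sum_neg_distrib, neg_neg, mul_neg, sub_neg_eq_add]

lemma lameForm_sub (α : ℝ) {u v : E3 → Fin 3 → ℝ} {x : E3}
    (hu : ∀ i, DifferentiableAt ℝ (fun z => u z i) x)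
    (hv : ∀ i, DifferentiableAt ℝ (fun z => v z i) x) :
    lameForm α (u - v) ψ x = lameForm α u ψ x - lameForm α v ψ x := by
  have hpd (i k : Fin 3) : pd k (fun z => (u - v) z i) x =
      pd k (fun z => u z i) x - pd k (fun z => v z i) x := pd_sub (hu i) (hv i)
  simp only [lameForm, divg, hpd, ← Finset.sum_sub_distrib]
  refine Finset.sum_congr rfl fun i _ => ?_
  simp only [sub_mul, Finset.sum_sub_distrib]
  ring

lemma lameForm_eq_zero_of_notMem (α : ℝ) (f : E3 → Fin 3 → ℝ) {x : E3} (hx : x ∉ tsupport ψ) :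
    lameForm α f ψ x = 0 := by
  have hpd (i k : Fin 3) : pd k (fun z => ψ z i) x = 0 :=
    pd_eq_zero_of_notMem fun h => hx (tsupport_comp_apply_subset ψ i h)
  simp [lameForm, hpd]

lemma sq_pd_le_gradSq (v : E3 → Fin 3 → ℝ) (x : E3) (i k : Fin 3) :
    pd k (fun z => v z i) x ^ 2 ≤ gradSq v x :=
  (Finset.single_le_sum (f := fun k => pd k (fun z => v z i) x ^ 2)
    (fun _ _ => sq_nonneg _) (Finset.mem_univ k)).trans <|
    Finset.single_le_sum (f := fun i => ∑ k, pd k (fun z => v z i) x ^ 2)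
      (fun _ _ => by positivity) (Finset.mem_univ i)

lemma abs_mul_le_inv_mul_sq_add {τ : ℝ} (hτ : 0 < τ) (a b : ℝ) :
    |a * b| ≤ τ⁻¹ * a ^ 2 + τ * b ^ 2 := by
  have h := mul_le_mul_sq_add_sq_div hτ |a| |b|
  rw [sq_abs, sq_abs, ← abs_mul] at h
  have : a ^ 2 / (4 * τ) = τ⁻¹ * a ^ 2 / 4 := by field_simp
  have : 0 ≤ τ⁻¹ * a ^ 2 := by positivity
  linarith

lemma abs_lameForm_le (α : ℝ) (f ψ : E3 → Fin 3 → ℝ) (x : E3) {τ : ℝ} (hτ : 0 < τ) :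
    |lameForm α f ψ x| ≤ 9 * (1 + |α|) * (τ⁻¹ * gradSq f x + τ * gradSq ψ x) := by
  set T := τ⁻¹ * gradSq f x + τ * gradSq ψ x
  have hprod (i k j l : Fin 3) : |pd k (fun z => f z i) x * pd l (fun z => ψ z j) x| ≤ T :=
    (abs_mul_le_inv_mul_sq_add hτ _ _).trans <| by
      dsimp only [T]
      gcongr <;> exact sq_pd_le_gradSq _ x _ _
  calc |lameForm α f ψ x| ≤ 3 * (3 * T + |α| * (3 * T)) := by
        refine mod_cast abs_sum_le_card_mul fun i => (abs_add_le _ _).trans (add_le_add ?_ ?_)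
        · exact mod_cast abs_sum_le_card_mul fun k => hprod i k i k
        · rw [abs_mul, divg, Finset.sum_mul]
          gcongr
          exact mod_cast abs_sum_le_card_mul fun k => hprod k k i i
    _ = 9 * (1 + |α|) * T := by ring

lemma differentiableAt_component (hΩ : IsOpen Ω) (hf : ContDiffOn ℝ ∞ f Ω) {x : E3} (hx : x ∈ Ω)
    (i : Fin 3) : DifferentiableAt ℝ (fun z => f z i) x :=
  ((contDiffOn_pi.1 hf i).contDiffAt (hΩ.mem_nhds hx)).differentiableAt (by simp)

lemma abs_integral_sum_lame_mul_le (α : ℝ) (hΩ : IsOpen Ω) {u v : E3 → Fin 3 → ℝ}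
    (hu : ContDiffOn ℝ ∞ u Ω) (hv : ContDiff ℝ ∞ v) (hψ : IsTestOn Ω ψ)
    (hLu : ∀ x i, lame α u x i * ψ x i = 0) (hint : IntegrableOn (gradSq (u - v)) Ω)
    {τ : ℝ} (hτ : 0 < τ) :
    |∫ x, ∑ i, lame α v x i * ψ x i| ≤
      9 * (1 + |α|) * (τ⁻¹ * (∫ x in Ω, gradSq (u - v) x) + τ * ∫ x in Ω, gradSq ψ x) := by
  have hψint : IntegrableOn (gradSq ψ) Ω :=
    ((continuous_gradSq hψ.1).integrable_of_hasCompactSupport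
    (hasCompactSupport_gradSq hψ.2.1)).integrableOn
  have hu0 : ∫ x, lameForm α u ψ x = 0 := by
    simp [← integral_sum_lame_mul α hΩ hu hψ, hLu]
  have hdiff : ∫ x, ∑ i, lame α v x i * ψ x i = -∫ x in Ω, lameForm α (u - v) ψ x := by
    rw [integral_sum_lame_mul α hΩ hv.contDiffOn hψ,
      setIntegral_congr_fun hΩ.measurableSet fun x hx => lameForm_sub α
        (differentiableAt_component hΩ hu hx) (differentiableAt_component hΩ hv.contDiffOn hx),
      setIntegral_eq_integral_of_forall_compl_eq_zero fun x hx => by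
        simp [lameForm_eq_zero_of_notMem α _ fun h => hx (hψ.2.2 h)],
      integral_sub (integrable_lameForm α hΩ hu hψ)
        (integrable_lameForm α hΩ hv.contDiffOn hψ), hu0, zero_sub, neg_neg]
  have hsum : IntegrableOn (fun x => τ⁻¹ * gradSq (u - v) x + τ * gradSq ψ x) Ω :=
    (hint.const_mul _).add (hψint.const_mul _)
  rw [hdiff, abs_neg, ← integral_const_mul, ← integral_const_mul,
    ← integral_add (hint.const_mul _) (hψint.const_mul _), ← integral_const_mul,
    ← norm_eq_abs]
  refine norm_integral_le_of_norm_le (hsum.const_mul _) (.of_forall fun x => ?_)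
  exact abs_lameForm_le α (u - v) ψ x hτ

end WeakForm

/-! ### The error term -/

lemma contDiffAt_Phi (α : ℝ) {z : E3} (hz : z ≠ 0) (i j : Fin 3) :
    ContDiffAt ℝ ∞ (fun z => Phi α z i j) z := by
  have hn : ContDiffAt ℝ ∞ (fun z : E3 => ‖z‖) z := contDiffAt_norm ℝ hz
  have hn0 : ‖z‖ ≠ 0 := norm_ne_zero_iff.2 hz
  have hc (i : Fin 3) : ContDiffAt ℝ ∞ (fun z : E3 => z i) z :=
    (EuclideanSpace.proj (𝕜 := ℝ) i).contDiff.contDiffAt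
  exact (contDiffAt_const.mul (hn.inv hn0)).mul (contDiffAt_const.add
    ((contDiffAt_const.mul ((hc i).mul (hc j))).div (hn.pow 2) (pow_ne_zero 2 hn0)))

lemma lame_congr {α : ℝ} {f g : E3 → Fin 3 → ℝ} {x : E3} (h : f =ᶠ[𝓝 x] g) :
    lame α f x = lame α g x := by
  have hpd (i k : Fin 3) : pd k (fun z => f z i) =ᶠ[𝓝 x] pd k fun z => g z i :=
    pd_eventuallyEq (h.fun_comp (· i))
  have hdiv : divg f =ᶠ[𝓝 x] divg g := by
    filter_upwards [eventually_all.2 fun k => hpd k k] with z hz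
    exact Finset.sum_congr rfl fun k _ => hz k
  funext i
  simp only [lame, lap, pd_congr hdiv, pd_congr (hpd i _)]

/-- The pointwise `H¹` density `|v|² + |Dv|²` of a vector field. -/
def h1Density (v : E3 → Fin 3 → ℝ) (x : E3) : ℝ := normSq v x + gradSq v x

lemma h1Density_nonneg (v : E3 → Fin 3 → ℝ) (x : E3) : 0 ≤ h1Density v x :=
  add_nonneg (normSq_nonneg v x) (gradSq_nonneg v x)

lemma normSq_le_h1Density (v : E3 → Fin 3 → ℝ) (x : E3) : normSq v x ≤ h1Density v x :=
  le_add_of_nonneg_right (gradSq_nonneg v x)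

lemma gradSq_le_h1Density (v : E3 → Fin 3 → ℝ) (x : E3) : gradSq v x ≤ h1Density v x :=
  le_add_of_nonneg_left (normSq_nonneg v x)

lemma sum_sq_pd_add_sq_le (v : E3 → Fin 3 → ℝ) (x : E3) (k : Fin 3) :
    ∑ j, (pd k (fun z => v z j) x ^ 2 + v x j ^ 2) ≤ h1Density v x := by
  rw [Finset.sum_add_distrib, add_comm, h1Density, normSq, gradSq]
  gcongr with j
  exact Finset.single_le_sum (f := fun k => pd k (fun z => v z j) x ^ 2)
    (fun _ _ => sq_nonneg _) (Finset.mem_univ k)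

lemma sq_sum_mul_add_mul_le {ι : Type*} [Fintype ι] {a b p q : ι → ℝ} {K : ℝ}
    (ha : ∀ j, |a j| ≤ K) (hb : ∀ j, |b j| ≤ K) :
    (∑ j, (a j * p j + b j * q j)) ^ 2 ≤
      Fintype.card ι * (2 * K ^ 2 * ∑ j, (p j ^ 2 + q j ^ 2)) := by
  have hsq {c : ℝ} (hc : |c| ≤ K) : c ^ 2 ≤ K ^ 2 := sq_abs c ▸ by gcongr
  refine sq_sum_le_card_mul_sum_sq.trans (mul_le_mul_of_nonneg_left ?_ (by positivity))
  rw [Finset.mul_sum]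
  refine Finset.sum_le_sum fun j _ => ?_
  calc (a j * p j + b j * q j) ^ 2 ≤ 2 * (a j ^ 2 * p j ^ 2 + b j ^ 2 * q j ^ 2) := by
        rw [← mul_pow, ← mul_pow]; exact add_sq_le
    _ ≤ 2 * (K ^ 2 * p j ^ 2 + K ^ 2 * q j ^ 2) := by
        gcongr 2 * (?_ * _ + ?_ * _)
        exacts [hsq (ha j), hsq (hb j)]
    _ = 2 * K ^ 2 * (p j ^ 2 + q j ^ 2) := by ring

open Matrix in
lemma h1Density_mulVec_le {A : E3 → Matrix (Fin 3) (Fin 3) ℝ} {q : E3 → Fin 3 → ℝ} {x : E3}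
    {K : ℝ} (hA : ∀ i j, DifferentiableAt ℝ (fun z => A z i j) x)
    (hq : ∀ i, DifferentiableAt ℝ (fun z => q z i) x) (hAK : ∀ i j, |A x i j| ≤ K)
    (hpdK : ∀ i j k, |pd k (fun z => A z i j) x| ≤ K) :
    h1Density (fun z => A z *ᵥ q z) x ≤ 72 * K ^ 2 * h1Density q x := by
  set B := 6 * K ^ 2 * h1Density q x
  have hsum (k : Fin 3) := sum_sq_pd_add_sq_le q x k
  have hval (i : Fin 3) : (A x *ᵥ q x) i ^ 2 ≤ B := by
    calc (A x *ᵥ q x) i ^ 2 = (∑ j, (A x i j * 0 + A x i j * q x j)) ^ 2 := by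
          simp [mulVec, dotProduct]
      _ ≤ 3 * (2 * K ^ 2 * ∑ j, ((0 : ℝ) ^ 2 + q x j ^ 2)) :=
          mod_cast sq_sum_mul_add_mul_le (p := fun _ => 0) (q := q x) (hAK i) (hAK i)
      _ ≤ B := by
          rw [show B = 3 * (2 * K ^ 2 * h1Density q x) by ring]
          gcongr
          simpa [normSq] using normSq_le_h1Density q x
  have hpd (i k : Fin 3) : pd k (fun z => (A z *ᵥ q z) i) x ^ 2 ≤ B := by
    have h : pd k (fun z => (A z *ᵥ q z) i) x =
        ∑ j, (A x i j * pd k (fun z => q z j) x + pd k (fun z => A z i j) x * q x j) := by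
      simp only [mulVec, dotProduct]
      rw [pd_sum fun j _ => (hA i j).fun_mul (hq j)]
      exact Finset.sum_congr rfl fun j _ => pd_mul (hA i j) (hq j)
    rw [h, show B = 3 * (2 * K ^ 2 * h1Density q x) by ring]
    refine (sq_sum_mul_add_mul_le (hAK i) fun j => hpdK i j k).trans ?_
    rw [Fintype.card_fin, Nat.cast_ofNat]
    gcongr
    exact hsum k
  calc h1Density (fun z => A z *ᵥ q z) x ≤ ∑ _i : Fin 3, B + ∑ _i : Fin 3, ∑ _k : Fin 3, B := by
        unfold h1Density normSq gradSq
        gcongr with i _ i _ k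
        exacts [hval i, hpd i k]
    _ = 72 * K ^ 2 * h1Density q x := by simp [B]; ring

lemma exists_contDiff_eq_sq_mul_Phi (α : ℝ) {η : E3 → ℝ} (hη : ContDiff ℝ ∞ η)
    (hηc : HasCompactSupport η) (y : E3) {d : ℝ} (hd : 0 < d) :
    ∃ A : E3 → Matrix (Fin 3) (Fin 3) ℝ, (∀ i j, ContDiff ℝ ∞ fun x => A x i j) ∧
      (∀ i j, HasCompactSupport fun x => A x i j) ∧ (∀ x, η x = 0 → A x = 0) ∧
      ∀ x, d ≤ dist x y → ∀ i j, A x i j = η x ^ 2 * Phi α (x - y) i j := by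
  let b : ContDiffBump y := ⟨d / 2, d, by positivity, by linarith⟩
  refine ⟨fun x i j => η x ^ 2 * ((1 - b x) * Phi α (x - y) i j), fun i j => ?_, fun i j => ?_,
    fun x hx => ?_, fun x hx i j => ?_⟩
  · refine contDiff_iff_contDiffAt.2 fun x => (hη.contDiffAt.pow 2).mul ?_
    rcases eq_or_ne x y with rfl | hxy
    · have hzero : (fun z => (1 - b z) * Phi α (z - x) i j) =ᶠ[𝓝 x] fun _ => 0 := by
        filter_upwards [b.eventuallyEq_one] with z hz
        simp [hz]
      exact contDiffAt_const.congr_of_eventuallyEq hzero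
    · exact (contDiffAt_const.sub b.contDiffAt).mul <|
        (contDiffAt_Phi α (sub_ne_zero.2 hxy) i j).comp (f := fun z => z - y) x (by fun_prop)
  · exact (hηc.comp_left (g := (· ^ 2)) (zero_pow two_ne_zero)).mul_right
  · ext i j
    simp [hx]
  · simp [b.zero_of_le_dist hx]

section Error

open Matrix

variable {Ω U : Set E3} {u v : E3 → Fin 3 → ℝ} {A : E3 → Matrix (Fin 3) (Fin 3) ℝ}
  {η : E3 → ℝ} {y : E3} {d : ℝ}

/-- The part `∫ η² (Lv)·(Φ(·-y) v)` of the energy of `ηv` in which `L` falls on `v` alone. -/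
def lameError (α : ℝ) (η : E3 → ℝ) (v : E3 → Fin 3 → ℝ) (y : E3) : ℝ :=
  ∫ x, ∑ i, ∑ j, (η x * lame α v x i) * Phi α (x - y) i j * (η • v) x j

lemma IsTestOn.mulVec (hv : IsTestOn Ω v) (hA : ∀ i j, ContDiff ℝ ∞ fun x => A x i j) :
    IsTestOn Ω fun x => A x *ᵥ v x := by
  have hzero : ∀ x, x ∉ tsupport v → A x *ᵥ v x = 0 := fun x hx => by
    simp [image_eq_zero_of_notMem_tsupport hx]
  refine ⟨contDiff_pi.2 fun i =>
      ContDiff.sum (s := Finset.univ) fun j _ => (hA i j).mul (contDiff_pi.1 hv.1 j),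
    .intro hv.2.1 hzero, (closure_minimal (fun x hx => ?_) (isClosed_tsupport v)).trans hv.2.2⟩
  exact not_imp_comm.1 (hzero x) hx

lemma IsTestOn.integrable_h1Density (hv : IsTestOn Ω v) : Integrable (h1Density v) :=
  ((continuous_normSq hv.1.continuous).add (continuous_gradSq hv.1)).integrable_of_hasCompactSupport
    <| .intro hv.2.1 fun x hx => by
      simp [normSq_eq_zero_of_notMem hx, gradSq_eq_zero_of_notMem hx]

lemma setIntegral_gradSq_mulVec_le (hv : IsTestOn Ω v) (hA : ∀ i j, ContDiff ℝ ∞ fun x => A x i j)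
    {K : ℝ} (hAK : ∀ i j x, |A x i j| ≤ K) (hpdK : ∀ i j k x, |pd k (fun z => A z i j) x| ≤ K) :
    ∫ x in Ω, gradSq (fun z => A z *ᵥ v z) x ≤ 72 * K ^ 2 * ∫ x in Ω, h1Density v x := by
  rw [← integral_const_mul]
  refine integral_mono_of_nonneg (.of_forall fun x => gradSq_nonneg _ x)
    (hv.integrable_h1Density.integrableOn.const_mul _) (.of_forall fun x => ?_)
  exact (gradSq_le_h1Density _ x).trans <| h1Density_mulVec_le
    (fun i j => (hA i j).differentiable (by simp) x)
    (fun i => (contDiff_pi.1 hv.1 i).differentiable (by simp) x)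
    (fun i j => hAK i j x) fun i j k => hpdK i j k x

lemma lame_mul_mulVec_eq_zero (α : ℝ) (hv : IsTestOn Ω v) (hLu : ∀ x ∈ Ω ∩ U, lame α u x = 0)
    (hηU : tsupport η ⊆ U) (hA₀ : ∀ x, η x = 0 → A x = 0) (x : E3) (i : Fin 3) :
    lame α u x i * (A x *ᵥ v x) i = 0 := by
  by_cases hx : x ∈ Ω ∩ U
  · simp [hLu x hx]
  rcases not_and_or.1 hx with hx | hx
  · simp [image_eq_zero_of_notMem_tsupport fun h => hx (hv.2.2 h)]
  · simp [hA₀ x (image_eq_zero_of_notMem_tsupport fun h => hx (hηU h))]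

lemma lameError_eq_integral (α : ℝ) (hΩ : IsOpen Ω) (hv : IsTestOn Ω v)
    (hLu : ∀ x ∈ Ω ∩ U, lame α u x = 0) (hηU : tsupport η ⊆ U)
    (hvu : ∀ x ∈ Ω, dist x y < d → v x = u x) (hA₀ : ∀ x, η x = 0 → A x = 0)
    (hA : ∀ x, d ≤ dist x y → ∀ i j, A x i j = η x ^ 2 * Phi α (x - y) i j) :
    lameError α η v y = ∫ x, ∑ i, lame α v x i * (A x *ᵥ v x) i := by
  refine integral_congr_ae (.of_forall fun x => Finset.sum_congr rfl fun i _ => ?_)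
  by_cases hxv : x ∈ tsupport v
  swap
  · simp [image_eq_zero_of_notMem_tsupport hxv]
  rcases eq_or_ne (η x) 0 with hηx | hηx
  · simp [hηx, hA₀ x hηx]
  rcases lt_or_ge (dist x y) d with hxd | hxd
  · have hnear : v =ᶠ[𝓝 x] u := by
      filter_upwards [hΩ.mem_nhds (hv.2.2 hxv), isOpen_ball.mem_nhds (mem_ball.2 hxd)] with z h₁ h₂
      exact hvu z h₁ h₂
    simp [lame_congr hnear, hLu x ⟨hv.2.2 hxv, hηU (subset_tsupport η hηx)⟩]
  · simp only [mulVec, dotProduct, hA x hxd, Finset.mul_sum, Pi.smul_apply', Pi.smul_apply,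
      smul_eq_mul]
    exact Finset.sum_congr rfl fun j _ => by ring

/-- Since `Lv = Lu = 0` near `y`, the singularity of `Φ(·-y)` may be cut off there. -/
lemma exists_abs_lameError_le (α : ℝ) (hΩ : IsOpen Ω) (hu : ContDiffOn ℝ ∞ u Ω)
    (hLu : ∀ x ∈ Ω ∩ U, lame α u x = 0) (hη : ContDiff ℝ ∞ η) (hηc : HasCompactSupport η)
    (hηU : tsupport η ⊆ U) (y : E3) (hd : 0 < d) :
    ∃ C > 0, ∀ v, IsTestOn Ω v → (∀ x ∈ Ω, dist x y < d → v x = u x) →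
      IntegrableOn (gradSq (u - v)) Ω → ∀ τ > 0,
      |lameError α η v y| ≤
        C * (τ⁻¹ * (∫ x in Ω, gradSq (u - v) x) + τ * ∫ x in Ω, h1Density v x) := by
  obtain ⟨A, hA, hAc, hA₀, hAΦ⟩ := exists_contDiff_eq_sq_mul_Phi α hη hηc y hd
  obtain ⟨K₁, -, hK₁⟩ := exists_forall_abs_le (f := fun (p : Fin 3 × Fin 3) x => A x p.1 p.2)
    (fun p => (hA p.1 p.2).continuous) fun p => hAc p.1 p.2
  obtain ⟨K₂, -, hK₂⟩ := exists_forall_abs_le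
    (f := fun p : (Fin 3 × Fin 3) × Fin 3 => pd p.2 fun x => A x p.1.1 p.1.2)
    (fun p => (contDiff_pd (hA p.1.1 p.1.2)).continuous) fun p => hasCompactSupport_pd (hAc _ _)
  set K := max K₁ K₂
  refine ⟨9 * (1 + |α|) * (1 + 72 * K ^ 2), by positivity, fun v hv hvu hint τ hτ => ?_⟩
  have hψ := setIntegral_gradSq_mulVec_le hv hA
    (fun i j x => (hK₁ (i, j) x).trans (le_max_left K₁ K₂))
    (fun i j k x => (hK₂ ((i, j), k) x).trans (le_max_right K₁ K₂))
  have hD : 0 ≤ ∫ x in Ω, gradSq (u - v) x := integral_nonneg fun x => gradSq_nonneg _ x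
  have hH : 0 ≤ ∫ x in Ω, h1Density v x := integral_nonneg fun x => h1Density_nonneg _ x
  rw [lameError_eq_integral α hΩ hv hLu hηU hvu hA₀ hAΦ]
  refine (abs_integral_sum_lame_mul_le α hΩ hu hv.1 (hv.mulVec hA)
    (lame_mul_mulVec_eq_zero α hv hLu hηU hA₀) hint hτ).trans ?_
  rw [mul_assoc (9 * (1 + |α|))]
  gcongr
  calc τ⁻¹ * (∫ x in Ω, gradSq (u - v) x) + τ * ∫ x in Ω, gradSq (fun z => A z *ᵥ v z) x
      ≤ τ⁻¹ * (∫ x in Ω, gradSq (u - v) x) + τ * (72 * K ^ 2 * ∫ x in Ω, h1Density v x) := by gcongr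
    _ ≤ (1 + 72 * K ^ 2) *
        (τ⁻¹ * (∫ x in Ω, gradSq (u - v) x) + τ * ∫ x in Ω, h1Density v x) := by
      have hD' : 0 ≤ K ^ 2 * (τ⁻¹ * ∫ x in Ω, gradSq (u - v) x) := by positivity
      have hH' : 0 ≤ τ * ∫ x in Ω, h1Density v x := by positivity
      linarith

end Error

/-! ### Approximation by test fields -/

section Approximation

variable {Ω : Set E3} {u v : E3 → Fin 3 → ℝ} {φ : E3 → ℝ} {x y : E3}

lemma normSq_sub_le (u v : E3 → Fin 3 → ℝ) (x : E3) :
    normSq (u - v) x ≤ 2 * normSq u x + 2 * normSq v x := by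
  simp only [normSq, Finset.mul_sum, ← Finset.sum_add_distrib]
  gcongr with i
  linarith [add_sq_le (a := u x i) (b := -v x i), neg_sq (v x i), show (u - v) x i ^ 2 =
    (u x i + -v x i) ^ 2 by simp [sub_eq_add_neg]]

lemma gradSq_sub_le (hu : ∀ i, DifferentiableAt ℝ (fun z => u z i) x)
    (hv : ∀ i, DifferentiableAt ℝ (fun z => v z i) x) :
    gradSq (u - v) x ≤ 2 * gradSq u x + 2 * gradSq v x := by
  simp only [gradSq, Finset.mul_sum, ← Finset.sum_add_distrib]
  gcongr with i _ k
  rw [show pd k (fun z => (u - v) z i) x = _ from pd_sub (hu i) (hv i)]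
  linarith [add_sq_le (a := pd k (fun z => u z i) x) (b := -pd k (fun z => v z i) x),
    neg_sq (pd k (fun z => v z i) x)]

lemma h1Density_sub_le (hu : ∀ i, DifferentiableAt ℝ (fun z => u z i) x)
    (hv : ∀ i, DifferentiableAt ℝ (fun z => v z i) x) :
    h1Density (u - v) x ≤ 2 * h1Density u x + 2 * h1Density v x := by
  unfold h1Density
  linarith [normSq_sub_le u v x, gradSq_sub_le hu hv]

lemma continuousOn_normSq (hu : ContDiffOn ℝ ∞ u Ω) : ContinuousOn (normSq u) Ω :=
  continuousOn_finsetSum _ fun i _ => (contDiffOn_pi.1 hu i).continuousOn.pow 2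

lemma continuousOn_gradSq (hΩ : IsOpen Ω) (hu : ContDiffOn ℝ ∞ u Ω) :
    ContinuousOn (gradSq u) Ω :=
  continuousOn_finsetSum _ fun i _ => continuousOn_finsetSum _ fun _ _ =>
    (contDiffOn_pd hΩ (contDiffOn_pi.1 hu i)).continuousOn.pow 2

lemma integrableOn_normSq (hΩ : IsOpen Ω) (hu : ContDiffOn ℝ ∞ u Ω)
    (hint : IntegrableOn (h1Density u) Ω) : IntegrableOn (normSq u) Ω :=
  hint.mono' ((continuousOn_normSq hu).aestronglyMeasurable hΩ.measurableSet) <|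
    .of_forall fun x => by
      rw [norm_of_nonneg (normSq_nonneg u x)]
      exact normSq_le_h1Density u x

lemma integrableOn_gradSq (hΩ : IsOpen Ω) (hu : ContDiffOn ℝ ∞ u Ω)
    (hint : IntegrableOn (h1Density u) Ω) : IntegrableOn (gradSq u) Ω :=
  hint.mono' ((continuousOn_gradSq hΩ hu).aestronglyMeasurable hΩ.measurableSet) <|
    .of_forall fun x => by
      rw [norm_of_nonneg (gradSq_nonneg u x)]
      exact gradSq_le_h1Density u x

lemma integrableOn_h1Density_sub (hΩ : IsOpen Ω) (hu : ContDiffOn ℝ ∞ u Ω)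
    (hint : IntegrableOn (h1Density u) Ω) (hv : IsTestOn Ω v) :
    IntegrableOn (h1Density (u - v)) Ω := by
  have hd : ContDiffOn ℝ ∞ (u - v) Ω := hu.sub hv.1.contDiffOn
  refine ((hint.const_mul 2).add (hv.integrable_h1Density.integrableOn.const_mul 2)).mono'
    (((continuousOn_normSq hd).add (continuousOn_gradSq hΩ hd)).aestronglyMeasurable
      hΩ.measurableSet) (ae_restrict_of_forall_mem hΩ.measurableSet fun x hx => ?_)
  rw [norm_of_nonneg (h1Density_nonneg _ x)]
  exact h1Density_sub_le (differentiableAt_component hΩ hu hx)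
    (differentiableAt_component hΩ hv.1.contDiffOn hx)

lemma exists_h1Density_one_sub_smul_le (hφ : ContDiff ℝ ∞ φ) (hc : HasCompactSupport φ) :
    ∃ C, ∀ q x, (∀ i, DifferentiableAt ℝ (fun z => q z i) x) →
      h1Density ((1 - φ) • q) x ≤ C * h1Density q x := by
  obtain ⟨K₁, hK₁, hφ₁⟩ := exists_forall_abs_le (f := fun _ : Unit => φ)
    (fun _ => hφ.continuous) fun _ => hc
  obtain ⟨K₂, hK₂, hφ₂⟩ := exists_forall_abs_le (f := fun k => pd k φ)
    (fun k => (contDiff_pd hφ).continuous) fun k => hasCompactSupport_pd hc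
  refine ⟨72 * (1 + K₁ + K₂) ^ 2, fun q x hq => ?_⟩
  have hd : DifferentiableAt ℝ φ x := hφ.differentiable (by simp) x
  have hmul : (1 - φ) • q = fun z => ((1 - φ z) • (1 : Matrix (Fin 3) (Fin 3) ℝ)).mulVec (q z) := by
    ext z i
    simp [Matrix.smul_mulVec]
  have hpd (k : Fin 3) (c : ℝ) : pd k (fun z => (1 - φ z) * c) x = -(pd k φ x * c) := by
    rw [pd_mul (by fun_prop) (by fun_prop), pd_sub (by fun_prop) hd]
    simp [pd]
  have hone (i j : Fin 3) : |(1 : Matrix (Fin 3) (Fin 3) ℝ) i j| ≤ 1 := by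
    rw [Matrix.one_apply]
    split_ifs <;> simp
  rw [hmul]
  refine h1Density_mulVec_le (fun i j => ?_) hq (fun i j => ?_) fun i j k => ?_
  · simp only [Matrix.smul_apply, smul_eq_mul]
    fun_prop
  · have h : |1 - φ x| ≤ 1 + K₁ + K₂ := by
      linarith [abs_sub 1 (φ x), hφ₁ () x, abs_one (α := ℝ)]
    rw [Matrix.smul_apply, smul_eq_mul, abs_mul]
    exact (mul_le_of_le_one_right (abs_nonneg _) (hone i j)).trans h
  · have h : |pd k φ x| ≤ 1 + K₁ + K₂ := by linarith [hφ₂ k x]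
    simp only [Matrix.smul_apply, smul_eq_mul, hpd, abs_neg, abs_mul]
    exact (mul_le_of_le_one_right (abs_nonneg _) (hone i j)).trans h

lemma IsTestOn.add_smul_sub (hv : IsTestOn Ω v) (hΩ : IsOpen Ω) (hu : ContDiffOn ℝ ∞ u Ω)
    (hφ : ContDiff ℝ ∞ φ) (hφc : HasCompactSupport φ) (hφs : tsupport φ ⊆ Ω) :
    IsTestOn Ω (v + φ • (u - v)) := by
  have hsub : tsupport (φ • (u - v)) ⊆ tsupport φ := tsupport_smul_subset_left φ (u - v)
  have hsmooth : ContDiff ℝ ∞ (φ • (u - v)) := by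
    refine contDiff_iff_contDiffAt.2 fun x => ?_
    by_cases hx : x ∈ tsupport (φ • (u - v))
    · exact hφ.contDiffAt.smul
        ((hu.sub hv.1.contDiffOn).contDiffAt (hΩ.mem_nhds (hφs (hsub hx))))
    · exact contDiffAt_const.congr_of_eventuallyEq (notMem_tsupport_iff_eventuallyEq.1 hx)
  exact ⟨hv.1.add hsmooth, hv.2.1.add (hφc.mono' ((subset_tsupport _).trans hsub)),
    (tsupport_add _ _).trans (Set.union_subset hv.2.2 (hsub.trans hφs))⟩

lemma MemH10.exists_isTestOn_tendsto (hΩ : IsOpen Ω) (hu : MemH10 Ω u) (hy : y ∉ frontier Ω) :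
    ∃ d > 0, ∃ v : ℕ → E3 → Fin 3 → ℝ, (∀ n, IsTestOn Ω (v n)) ∧
      (∀ n, ∀ x ∈ Ω, dist x y < d → v n x = u x) ∧
      Tendsto (fun n => ∫ x in Ω, h1Density (u - v n) x) atTop (𝓝 0) := by
  obtain ⟨hu₁, hu₂, v, hv, hlim : Tendsto (fun n => ∫ x in Ω, h1Density (u - v n) x) _ _⟩ := hu
  rcases em (y ∈ Ω) with hyΩ | hyΩ
  swap
  · have hyc : y ∉ closure Ω := fun h => hy ⟨h, by rwa [hΩ.interior_eq]⟩
    obtain ⟨d, hd, hds⟩ := isOpen_iff.1 isClosed_closure.isOpen_compl y hyc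
    exact ⟨d, hd, v, hv, fun n x hx hxd => (hds (mem_ball.2 hxd) (subset_closure hx)).elim, hlim⟩
  obtain ⟨r, hr, hrs⟩ := isOpen_iff.1 hΩ y hyΩ
  let φ : ContDiffBump y := ⟨r / 4, r / 2, by positivity, by linarith⟩
  have hφs : tsupport φ ⊆ Ω :=
    φ.tsupport_eq ▸ (closedBall_subset_ball (half_lt_self hr)).trans hrs
  obtain ⟨C, hCφ⟩ := exists_h1Density_one_sub_smul_le φ.contDiff φ.hasCompactSupport
  refine ⟨r / 4, by positivity, fun n => v n + (φ : E3 → ℝ) • (u - v n),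
    fun n => (hv n).add_smul_sub hΩ hu₁ φ.contDiff φ.hasCompactSupport hφs,
    fun n x _ hx => ?_, ?_⟩
  · simp [φ.one_of_mem_closedBall (mem_closedBall.2 hx.le)]
  have hsub (n : ℕ) : u - (v n + (φ : E3 → ℝ) • (u - v n)) = (1 - (φ : E3 → ℝ)) • (u - v n) := by
    rw [sub_smul, one_smul]; abel
  refine squeeze_zero (fun n => integral_nonneg fun x => h1Density_nonneg _ x) (fun n => ?_)
    (by simpa using hlim.const_mul C)
  simp only [hsub]
  rw [← integral_const_mul]
  refine integral_mono_of_nonneg (.of_forall fun x => h1Density_nonneg _ x)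
    ((integrableOn_h1Density_sub hΩ hu₁ hu₂ (hv n)).const_mul _)
    (ae_restrict_of_forall_mem hΩ.measurableSet fun x hx => hCφ _ x ?_)
  exact differentiableAt_component hΩ (hu₁.sub (hv n).1.contDiffOn) hx

end Approximation

/-! ### The capacitary Hardy inequality -/

section Hardy

variable {Ω : Set E3} {ρ : ℝ} {N : ℕ} {a : ℕ → ℝ} {w : E3 → Fin 3 → ℝ} {f : E3 → ℝ} {y : E3}

lemma dyadicWeight_succ (ρ : ℝ) (N : ℕ) (a : ℕ → ℝ) (x : E3) :
    dyadicWeight ρ (N + 1) a x =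
      dyadicWeight (2 * ρ) N (fun k => a (k + 1)) x +
        (ball 0 (4 * ρ)).indicator (fun _ => a 0) x := by
  have hscale (k : ℕ) : ρ * 2 ^ (k + 1) = 2 * ρ * 2 ^ k := by ring
  simp only [dyadicWeight, Finset.sum_range_succ', hscale, pow_zero, mul_one]

lemma sum_inv_mul_two_pow_le (hρ : 0 ≤ ρ) (N : ℕ) :
    ∑ k ∈ Finset.range N, (ρ * 2 ^ k)⁻¹ ≤ ρ⁻¹ * 2 := by
  simp only [mul_inv, ← Finset.mul_sum, ← inv_pow]
  gcongr
  simpa only [one_div] using sum_geometric_two_le N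

/-- A geometric series starting at the first scale `ρₖ` with `‖x‖ < 4 ρₖ`. -/
lemma dyadicWeight_inv_mul_max_le (hρ : 0 < ρ) (N : ℕ) (x : E3) :
    dyadicWeight ρ N (fun k => (ρ * 2 ^ k)⁻¹) x * max ‖x‖ (4 * ρ) ≤ 8 := by
  induction N generalizing ρ with
  | zero => simp [dyadicWeight]
  | succ N ih =>
    rcases lt_or_ge ‖x‖ (4 * ρ) with hx | hx
    · rw [max_eq_right hx.le]
      calc dyadicWeight ρ (N + 1) (fun k => (ρ * 2 ^ k)⁻¹) x * (4 * ρ)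
          ≤ (∑ k ∈ Finset.range (N + 1), (ρ * 2 ^ k)⁻¹) * (4 * ρ) := by
            unfold dyadicWeight
            gcongr with k
            exact Set.indicator_le_self' (fun _ _ => by positivity) x
        _ ≤ ρ⁻¹ * 2 * (4 * ρ) := by gcongr; exact sum_inv_mul_two_pow_le hρ.le _
        _ = 8 := by field_simp; norm_num
    · have hscale (k : ℕ) : ρ * 2 ^ (k + 1) = 2 * ρ * 2 ^ k := by ring
      have hx' : x ∉ ball (0 : E3) (4 * ρ) := by simpa using hx
      rw [dyadicWeight_succ, Set.indicator_of_notMem hx', add_zero]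
      simp only [hscale]
      refine le_trans ?_ (ih (ρ := 2 * ρ) (by positivity))
      gcongr
      · exact dyadicWeight_nonneg (fun k => by positivity) x
      · linarith

lemma dyadicWeight_inv_le (hy : ‖y‖ < ρ) (N : ℕ) {x : E3} (hxy : x ≠ y) :
    dyadicWeight ρ N (fun k => (ρ * 2 ^ k)⁻¹) x ≤ 10 * ‖x - y‖⁻¹ := by
  have hρ : 0 < ρ := (norm_nonneg y).trans_lt hy
  have hdist : ‖x - y‖ ≤ 5 / 4 * max ‖x‖ (4 * ρ) := by
    linarith [norm_sub_le x y, le_max_left ‖x‖ (4 * ρ), le_max_right ‖x‖ (4 * ρ)]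
  rw [← div_eq_mul_inv, le_div_iff₀ (norm_sub_pos_iff.2 hxy)]
  calc _ ≤ dyadicWeight ρ N (fun k => (ρ * 2 ^ k)⁻¹) x * (5 / 4 * max ‖x‖ (4 * ρ)) := by
        gcongr
        exact dyadicWeight_nonneg (fun k => by positivity) x
    _ ≤ 10 := by linarith [dyadicWeight_inv_mul_max_le hρ N x]

lemma dyadicWeight_mul (ρ : ℝ) (N : ℕ) (a : ℕ → ℝ) (f : E3 → ℝ) (x : E3) :
    dyadicWeight ρ N a x * f x =
      ∑ k ∈ Finset.range N, a k * (ball 0 (4 * (ρ * 2 ^ k))).indicator f x := by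
  simp only [dyadicWeight, Finset.sum_mul]
  refine Finset.sum_congr rfl fun k _ => ?_
  by_cases hx : x ∈ ball 0 (4 * (ρ * 2 ^ k)) <;> simp [hx]

lemma integrable_dyadicWeight_mul (hf : Integrable f) :
    Integrable fun x => dyadicWeight ρ N a x * f x := by
  simp only [dyadicWeight_mul]
  exact integrable_finsetSum _ fun k _ => (hf.indicator measurableSet_ball).const_mul _

lemma integral_dyadicWeight_mul (hf : Integrable f) :
    ∫ x, dyadicWeight ρ N a x * f x =
      ∑ k ∈ Finset.range N, a k * ∫ x in ball 0 (4 * (ρ * 2 ^ k)), f x := by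
  simp only [dyadicWeight_mul]
  rw [integral_finsetSum _ fun k _ => (hf.indicator measurableSet_ball).const_mul _]
  simp only [integral_const_mul, integral_indicator measurableSet_ball]

lemma IsTestOn.integrable_normSq (hw : IsTestOn Ω w) : Integrable (normSq w) :=
  (continuous_normSq hw.1.continuous).integrable_of_hasCompactSupport <|
    .intro hw.2.1 fun _ hx => normSq_eq_zero_of_notMem hx

lemma IsTestOn.integrable_gradSq_mul (hw : IsTestOn Ω w) (y : E3) :
    Integrable fun x => gradSq w x * ‖x - y‖⁻¹ :=
  integrable_mul_norm_sub_inv (by simp) (continuous_gradSq hw.1) (hasCompactSupport_gradSq hw.2.1) y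

lemma exists_capa_mul_setIntegral_normSq_le : ∃ C > 0, ∀ Ω s, 0 < s → ∀ w, IsTestOn Ω w →
    capa (closedBall 0 s \ Ω) * ∫ x in ball 0 (2 * s), normSq w x ≤
      C * s ^ 3 * ∫ x in ball 0 (2 * s), gradSq w x := by
  obtain ⟨C, hC, hpoincare⟩ := exists_capa_mul_setIntegral_sq_le
  refine ⟨C, hC, fun Ω s hs w ⟨hw, _, hwΩ⟩ => ?_⟩
  have hsq (i : Fin 3) : Continuous fun x => w x i ^ 2 := (contDiff_pi.1 hw i).continuous.pow 2
  have hpd (i : Fin 3) : Continuous fun x => ∑ k, pd k (fun z => w z i) x ^ 2 :=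
    continuous_finsetSum _ fun _ _ => (contDiff_pd (contDiff_pi.1 hw i)).continuous.pow 2
  simp only [normSq, gradSq]
  rw [integral_finsetSum _ fun i _ => integrableOn_ball_of_continuous (hsq i) _ _,
    integral_finsetSum _ fun i _ => integrableOn_ball_of_continuous (hpd i) _ _,
    Finset.mul_sum, Finset.mul_sum]
  exact Finset.sum_le_sum fun i _ => hpoincare Ω s hs _ (contDiff_pi.1 hw i)
    ((tsupport_comp_apply_subset w i).trans hwΩ)

/-- The normalized capacity `cap(B̄_{2ρₖ} ∖ Ω) / ρₖ` at the scale `ρₖ = 2ᵏ ρ`, a term of the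
dyadic form of the Wiener integral. -/
def wienerTerm (Ω : Set E3) (ρ : ℝ) (k : ℕ) : ℝ :=
  capa (closedBall 0 (2 * (ρ * 2 ^ k)) \ Ω) / (ρ * 2 ^ k)

lemma wienerTerm_nonneg (Ω : Set E3) (hρ : 0 ≤ ρ) (k : ℕ) : 0 ≤ wienerTerm Ω ρ k :=
  div_nonneg (capa_nonneg _) (by positivity)

lemma exists_wienerTerm_mul_setIntegral_normSq_le : ∃ C > 0, ∀ Ω ρ, 0 < ρ → ∀ k w,
    IsTestOn Ω w →
    wienerTerm Ω ρ k / (ρ * 2 ^ k) ^ 3 * ∫ x in ball 0 (4 * (ρ * 2 ^ k)), normSq w x ≤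
      C * ((ρ * 2 ^ k)⁻¹ * ∫ x in ball 0 (4 * (ρ * 2 ^ k)), gradSq w x) := by
  obtain ⟨C, hC, hpoincare⟩ := exists_capa_mul_setIntegral_normSq_le
  refine ⟨8 * C, by positivity, fun Ω ρ hρ k w hw => ?_⟩
  have h := hpoincare Ω (2 * (ρ * 2 ^ k)) (by positivity) w hw
  rw [show 2 * (2 * (ρ * 2 ^ k)) = 4 * (ρ * 2 ^ k) by ring] at h
  have hscale : 0 < ρ * 2 ^ k := by positivity
  unfold wienerTerm
  set r := ρ * 2 ^ k
  calc _ = (r ^ 4)⁻¹ *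
        (capa (closedBall 0 (2 * r) \ Ω) * ∫ x in ball 0 (4 * r), normSq w x) := by
        field_simp
    _ ≤ (r ^ 4)⁻¹ * (C * (2 * r) ^ 3 * ∫ x in ball 0 (4 * r), gradSq w x) := by gcongr
    _ = _ := by field_simp; ring

lemma exists_integral_dyadicWeight_mul_normSq_le : ∃ C > 0, ∀ Ω ρ N y, ‖y‖ < ρ → ∀ w,
    IsTestOn Ω w →
    ∫ x, dyadicWeight ρ N (fun k => wienerTerm Ω ρ k / (ρ * 2 ^ k) ^ 3) x * normSq w x ≤
      C * ∫ x, gradSq w x * ‖x - y‖⁻¹ := by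
  obtain ⟨C, hC, hterm⟩ := exists_wienerTerm_mul_setIntegral_normSq_le
  refine ⟨C * 10, by positivity, fun Ω ρ N y hy w hw => ?_⟩
  have hρ : 0 < ρ := (norm_nonneg y).trans_lt hy
  have hgrad : Integrable (gradSq w) :=
    (continuous_gradSq hw.1).integrable_of_hasCompactSupport (hasCompactSupport_gradSq hw.2.1)
  have hne : ∀ᵐ x : E3, x ≠ y := by simp [ae_iff]
  calc _ = ∑ k ∈ Finset.range N, wienerTerm Ω ρ k / (ρ * 2 ^ k) ^ 3 *
        ∫ x in ball 0 (4 * (ρ * 2 ^ k)), normSq w x :=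
        integral_dyadicWeight_mul hw.integrable_normSq
    _ ≤ ∑ k ∈ Finset.range N, C * ((ρ * 2 ^ k)⁻¹ *
        ∫ x in ball 0 (4 * (ρ * 2 ^ k)), gradSq w x) :=
        Finset.sum_le_sum fun k _ => hterm Ω ρ hρ k w hw
    _ = C * ∫ x, dyadicWeight ρ N (fun k => (ρ * 2 ^ k)⁻¹) x * gradSq w x := by
        rw [integral_dyadicWeight_mul hgrad, Finset.mul_sum]
    _ ≤ C * ∫ x, 10 * (gradSq w x * ‖x - y‖⁻¹) := by
        refine mul_le_mul_of_nonneg_left (integral_mono_ae (integrable_dyadicWeight_mul hgrad)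
          ((hw.integrable_gradSq_mul y).const_mul _) ?_) hC.le
        filter_upwards [hne] with x hx
        linarith [mul_le_mul_of_nonneg_right (dyadicWeight_inv_le hy N hx) (gradSq_nonneg w x)]
    _ = _ := by rw [integral_const_mul, mul_assoc]

end Hardy

/-! ### The weighted energy estimate -/

section Energy

variable {Ω : Set E3} {η : E3 → ℝ} {v w f : E3 → Fin 3 → ℝ}

lemma continuous_lame (α : ℝ) (hv : ContDiff ℝ ∞ v) (i : Fin 3) :
    Continuous fun x => lame α v x i := by
  have hlap : Continuous (lap fun z => v z i) := continuous_finsetSum _ fun _ _ =>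
    (contDiff_pd (contDiff_pd (contDiff_pi.1 hv i))).continuous
  exact hlap.neg.sub (continuous_const.mul (contDiff_pd (contDiff_divg hv)).continuous)

lemma IsTestOn.smul (hv : IsTestOn Ω v) (hη : ContDiff ℝ ∞ η) : IsTestOn Ω (η • v) :=
  ⟨hη.smul hv.1, hv.2.1.smul_left, (tsupport_smul_subset_right η v).trans hv.2.2⟩

lemma measurable_Phi (α : ℝ) (i j : Fin 3) : Measurable fun z => Phi α z i j := by
  unfold Phi
  fun_prop

lemma integrable_sum_mul_Phi_mul (α : ℝ) (hf : ∀ i, Continuous fun x => f x i)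
    (hw : IsTestOn Ω w) (y : E3) :
    Integrable fun x => ∑ i, ∑ j, f x i * Phi α (x - y) i j * w x j := by
  obtain ⟨C, _, hΦ⟩ := exists_abs_Phi_le α
  refine integrable_finsetSum _ fun i _ => integrable_finsetSum _ fun j _ => ?_
  have hfi := hf i
  have hwj : Continuous fun x => w x j := (contDiff_pi.1 hw.1 j).continuous
  have hmeas : Measurable fun x => Phi α (x - y) i j :=
    (measurable_Phi α i j).comp (measurable_id.sub_const y)
  have hmajorant : Integrable fun x => C * |f x i| * |w x j| * ‖x - y‖⁻¹ := by
    refine integrable_mul_norm_sub_inv (by simp) (by fun_prop) (.intro hw.2.1 fun x hx => ?_) y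
    simp [image_eq_zero_of_notMem_tsupport hx]
  refine hmajorant.mono'
    ((hfi.measurable.mul hmeas).mul hwj.measurable).aestronglyMeasurable (.of_forall fun x => ?_)
  rw [norm_mul, norm_mul, norm_eq_abs, norm_eq_abs, norm_eq_abs]
  calc |f x i| * |Phi α (x - y) i j| * |w x j| ≤ |f x i| * (C * ‖x - y‖⁻¹) * |w x j| := by
        gcongr; exact hΦ ..
    _ = _ := by ring

lemma continuous_lameComm (α : ℝ) (hη : ContDiff ℝ ∞ η) (hv : ContDiff ℝ ∞ v) (i : Fin 3) :
    Continuous fun x => lameComm α η v x i := by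
  simp only [← sub_eq_iff_eq_add'.2 (lame_smul α hη hv _ i)]
  exact (continuous_lame α (hη.smul hv) i).sub (hη.continuous.mul (continuous_lame α hv i))

lemma lameEnergy_smul (α : ℝ) (hη : ContDiff ℝ ∞ η) (hv : IsTestOn Ω v) (y : E3) :
    lameEnergy α (η • v) y =
      (∫ x, ∑ i, ∑ j, lameComm α η v x i * Phi α (x - y) i j * (η • v) x j) +
        lameError α η v y := by
  have hcomm := integrable_sum_mul_Phi_mul α (continuous_lameComm α hη hv.1) (hv.smul hη) y
  have herror := integrable_sum_mul_Phi_mul α (f := fun x i => η x * lame α v x i)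
    (fun i => hη.continuous.mul (continuous_lame α hv.1 i)) (hv.smul hη) y
  unfold lameEnergy lameError
  rw [← integral_add hcomm herror]
  congr with x
  simp only [← Finset.sum_add_distrib, lame_smul α hη hv.1]
  congr! 2
  ring

lemma normSq_smul (η : E3 → ℝ) (v : E3 → Fin 3 → ℝ) (x : E3) :
    normSq (η • v) x = η x ^ 2 * normSq v x := by
  simp [normSq, mul_pow, Finset.mul_sum]

lemma exists_sum_lameComm_agmonCutoff_mul_Phi_le (α B : ℝ) {ε : ℝ} (hε : 0 < ε) :
    ∃ C > 0, ∀ ρ R N b, 0 < ρ → ρ < R → (∀ k, 0 ≤ b k) → (∀ k, b k ≤ B) →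
      (∀ k < N, 4 * (ρ * 2 ^ k) ≤ R) → ∀ x y, ‖y‖ < ρ → ∀ v, ContDiff ℝ ∞ v →
      let w := agmonCutoff ρ R N b • v
      ∑ i, ∑ j, lameComm α (agmonCutoff ρ R N b) v x i * Phi α (x - y) i j * w x j ≤
        ε * (gradSq w x * ‖x - y‖⁻¹) +
          C * (dyadicWeight ρ N (fun k => b k / (ρ * 2 ^ k) ^ 3) x * normSq w x +
            exp (-2 * ∑ k ∈ Finset.range N, b k) / R ^ 3 *
              (ball 0 (2 * R)).indicator (normSq v) x) := by
  obtain ⟨C₁, hC₁, hcomm⟩ := exists_abs_sum_lameComm_mul_Phi_le α hε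
  obtain ⟨C₂, hC₂, hsize⟩ := exists_cutoffSize_agmonCutoff_le B
  refine ⟨C₁ * C₂, by positivity, fun ρ R N b hρ hρR hb0 hbB hN x y hy v hv => ?_⟩
  intro w
  have h := mul_le_mul_of_nonneg_left (hsize ρ R N b hρ hρR hb0 hbB hN x y hy) hC₁.le
  set η := agmonCutoff ρ R N b
  set E := exp (-2 * ∑ k ∈ Finset.range N, b k) / R ^ 3
  set W := dyadicWeight ρ N fun k => b k / (ρ * 2 ^ k) ^ 3
  refine (le_abs_self _).trans <|
    (hcomm η v contDiff_agmonCutoff hv x (agmonCutoff_nonneg ..) y).trans <| add_le_add le_rfl ?_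
  have hindicator : (ball 0 (2 * R)).indicator (fun _ => E) x * normSq v x =
      E * (ball 0 (2 * R)).indicator (normSq v) x := by
    by_cases hx : x ∈ ball 0 (2 * R) <;> simp [hx]
  calc _ ≤ C₁ * (C₂ * (η x ^ 2 * W x + (ball 0 (2 * R)).indicator (fun _ => E) x)) *
        normSq v x := mul_le_mul_of_nonneg_right h (normSq_nonneg v x)
    _ = _ := by rw [normSq_smul, ← hindicator]; ring

lemma exists_integral_lameComm_agmonCutoff_le (α B : ℝ) {ε : ℝ} (hε : 0 < ε) :
    ∃ C > 0, ∀ ρ R N b, 0 < ρ → ρ < R → (∀ k, 0 ≤ b k) → (∀ k, b k ≤ B) →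
      (∀ k < N, 4 * (ρ * 2 ^ k) ≤ R) → ∀ y, ‖y‖ < ρ → ∀ Ω v, IsTestOn Ω v →
      let w := agmonCutoff ρ R N b • v
      ∫ x, ∑ i, ∑ j, lameComm α (agmonCutoff ρ R N b) v x i * Phi α (x - y) i j * w x j ≤
        ε * (∫ x, gradSq w x * ‖x - y‖⁻¹) +
          C * ((∫ x, dyadicWeight ρ N (fun k => b k / (ρ * 2 ^ k) ^ 3) x * normSq w x) +
            exp (-2 * ∑ k ∈ Finset.range N, b k) / R ^ 3 * ∫ x in ball 0 (2 * R), normSq v x) := by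
  obtain ⟨C, hC, hpointwise⟩ := exists_sum_lameComm_agmonCutoff_mul_Phi_le α B hε
  refine ⟨C, hC, fun ρ R N b hρ hρR hb0 hbB hN y hy Ω v hv => ?_⟩
  intro w
  set E := exp (-2 * ∑ k ∈ Finset.range N, b k) / R ^ 3
  set W := dyadicWeight ρ N fun k => b k / (ρ * 2 ^ k) ^ 3
  have hw : IsTestOn Ω w := hv.smul contDiff_agmonCutoff
  have hgrad := (hw.integrable_gradSq_mul y).const_mul ε
  have hweight : Integrable fun x => W x * normSq w x :=
    integrable_dyadicWeight_mul hw.integrable_normSq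
  have hball : Integrable fun x => E * (ball 0 (2 * R)).indicator (normSq v) x :=
    (hv.integrable_normSq.indicator measurableSet_ball).const_mul E
  have hrest : Integrable fun x =>
      C * (W x * normSq w x + E * (ball 0 (2 * R)).indicator (normSq v) x) :=
    (hweight.add hball).const_mul C
  calc _ ≤ ∫ x, ε * (gradSq w x * ‖x - y‖⁻¹) +
        C * (W x * normSq w x + E * (ball 0 (2 * R)).indicator (normSq v) x) :=
        integral_mono (integrable_sum_mul_Phi_mul α
          (continuous_lameComm α contDiff_agmonCutoff hv.1) hw y) (hgrad.add hrest)
          fun x => hpointwise ρ R N b hρ hρR hb0 hbB hN x y hy v hv.1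
    _ = _ := by
        rw [integral_add hgrad hrest, integral_const_mul, integral_const_mul,
          integral_add hweight hball, integral_const_mul, integral_indicator measurableSet_ball]

lemma dyadicWeight_const_mul (ρ : ℝ) (N : ℕ) (c : ℝ) (a : ℕ → ℝ) (x : E3) :
    dyadicWeight ρ N (fun k => c * a k) x = c * dyadicWeight ρ N a x := by
  simp [dyadicWeight, Finset.mul_sum, Set.indicator_const_mul]

lemma exists_wienerTerm_le : ∃ A > 0, ∀ Ω ρ k, 0 < ρ → wienerTerm Ω ρ k ≤ A := by
  obtain ⟨C, hC, hcapa⟩ := exists_capa_le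
  refine ⟨2 * C, by positivity, fun Ω ρ k hρ => ?_⟩
  have hr : 0 < ρ * 2 ^ k := by positivity
  rw [wienerTerm, div_le_iff₀ hr]
  linarith [hcapa _ (2 * (ρ * 2 ^ k)) (by positivity) (Set.sdiff_subset (t := Ω))]

/-- The Agmon cutoff whose exponent is `δ` times the dyadic Wiener series of the complement
of `Ω`. -/
def wienerCutoff (δ : ℝ) (Ω : Set E3) (ρ R : ℝ) (N : ℕ) : E3 → ℝ :=
  agmonCutoff ρ R N fun k => δ * wienerTerm Ω ρ k

lemma exists_integral_lameComm_wienerCutoff_le (α : ℝ) {ε : ℝ} (hε : 0 < ε) :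
    ∃ δ > 0, ∃ C > 0, ∀ Ω ρ R N, ρ < R → (∀ k < N, 4 * (ρ * 2 ^ k) ≤ R) → ∀ y, ‖y‖ < ρ →
      ∀ v, IsTestOn Ω v →
      let η := wienerCutoff δ Ω ρ R N
      ∫ x, ∑ i, ∑ j, lameComm α η v x i * Phi α (x - y) i j * (η • v) x j ≤
        ε * (∫ x, gradSq (η • v) x * ‖x - y‖⁻¹) +
          C / R ^ 3 * exp (-2 * ∑ k ∈ Finset.range N, δ * wienerTerm Ω ρ k) *
            ∫ x in ball 0 (2 * R), normSq v x := by
  obtain ⟨A, _, hwiener⟩ := exists_wienerTerm_le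
  obtain ⟨C, hC, hcomm⟩ := exists_integral_lameComm_agmonCutoff_le α A (half_pos hε)
  obtain ⟨H, hH, hhardy⟩ := exists_integral_dyadicWeight_mul_normSq_le
  set δ := min 1 (ε / (2 * (C * H)))
  have hδ : 0 < δ := lt_min one_pos (by positivity)
  have hδε : C * δ * H ≤ ε / 2 := by
    have : δ ≤ ε / (2 * (C * H)) := min_le_right _ _
    rw [le_div_iff₀ (by positivity)] at this
    linarith
  refine ⟨δ, hδ, C, hC, fun Ω ρ R N hρR hN y hy v hv => ?_⟩
  intro η
  have hρ : 0 < ρ := (norm_nonneg y).trans_lt hy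
  have ha (k : ℕ) : 0 ≤ wienerTerm Ω ρ k := wienerTerm_nonneg Ω hρ.le k
  have hweight (x : E3) : dyadicWeight ρ N (fun k => δ * wienerTerm Ω ρ k / (ρ * 2 ^ k) ^ 3) x *
      normSq (η • v) x = δ * (dyadicWeight ρ N (fun k => wienerTerm Ω ρ k / (ρ * 2 ^ k) ^ 3) x *
        normSq (η • v) x) := by
    simp only [mul_div_assoc, dyadicWeight_const_mul, mul_assoc]
  set I := ∫ x, gradSq (η • v) x * ‖x - y‖⁻¹
  have hI : 0 ≤ I := integral_nonneg fun x => mul_nonneg (gradSq_nonneg _ x) (by positivity)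
  set E := exp (-2 * ∑ k ∈ Finset.range N, δ * wienerTerm Ω ρ k)
  calc _ ≤ _ := hcomm ρ R N (fun k => δ * wienerTerm Ω ρ k) hρ hρR
        (fun k => mul_nonneg hδ.le (ha k))
        (fun k => (mul_le_of_le_one_left (ha k) (min_le_left _ _)).trans (hwiener Ω ρ k hρ))
        hN y hy Ω v hv
    _ = ε / 2 * I + C * (δ * (∫ x, dyadicWeight ρ N
          (fun k => wienerTerm Ω ρ k / (ρ * 2 ^ k) ^ 3) x * normSq (η • v) x) +
          E / R ^ 3 * ∫ x in ball 0 (2 * R), normSq v x) := by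
        rw [← integral_const_mul δ, ← funext hweight]; rfl
    _ ≤ ε / 2 * I + C * (δ * (H * I) + E / R ^ 3 * ∫ x in ball 0 (2 * R), normSq v x) := by
        gcongr
        exact hhardy Ω ρ N y hy _ (hv.smul contDiff_agmonCutoff)
    _ = ε / 2 * I + C * δ * H * I + C / R ^ 3 * E * ∫ x in ball 0 (2 * R), normSq v x := by ring
    _ ≤ ε / 2 * I + ε / 2 * I + C / R ^ 3 * E * ∫ x in ball 0 (2 * R), normSq v x := by gcongr
    _ = _ := by ring

/-- The energy inequality for test fields in `Ω` localized by a cutoff `η`, with poles in `B_ρ` and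
constant `K`; the error `lameError` vanishes in the limit along fields approximating a solution. -/
def EnergyBound (α c₀ K ρ R : ℝ) (Ω : Set E3) (η : E3 → ℝ) : Prop :=
  ∀ y, ‖y‖ < ρ → ∀ v, IsTestOn Ω v →
    1 / 2 * normSq v y + c₀ / 2 * (∫ x, gradSq (η • v) x * ‖x - y‖⁻¹) ≤
      K * (∫ x in ball 0 (2 * R), normSq v x) + |lameError α η v y|

lemma exists_energyBound_wienerCutoff {α c₀ : ℝ} (hc₀ : 0 < c₀) (hQPD : QPDhyp α c₀) :
    ∃ δ > 0, ∃ C > 0, ∀ Ω ρ R N, ρ < R → (∀ k < N, 4 * (ρ * 2 ^ k) ≤ R) →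
      EnergyBound α c₀
        (C / R ^ 3 * exp (-2 * ∑ k ∈ Finset.range N, δ * wienerTerm Ω ρ k)) ρ R Ω
        (wienerCutoff δ Ω ρ R N) := by
  obtain ⟨δ, hδ, C, hC, hcomm⟩ := exists_integral_lameComm_wienerCutoff_le α (half_pos hc₀)
  refine ⟨δ, hδ, C, hC, fun Ω ρ R N hρR hN y hy v hv => ?_⟩
  set η := wienerCutoff δ Ω ρ R N
  have hη : ContDiff ℝ ∞ η := contDiff_agmonCutoff
  have hw : IsTestOn Ω (η • v) := hv.smul hη
  have hηy : normSq (η • v) y = normSq v y := by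
    rw [normSq_smul, show η y = 1 from
      agmonCutoff_eq_one ((norm_nonneg y).trans_lt hy) hρR hy.le, one_pow, one_mul]
  have hqpd : 1 / 2 * normSq v y + c₀ * (∫ x, gradSq (η • v) x * ‖x - y‖⁻¹) ≤
      lameEnergy α (η • v) y := hηy ▸ hQPD (η • v) ⟨hw.1, hw.2.1, Set.subset_univ _⟩ y
  rw [lameEnergy_smul α hη hv] at hqpd
  linarith [hcomm Ω ρ R N hρR hN y hy v hv, le_abs_self (lameError α η v y)]

end Energy

/-! ### Passage to the limit -/

section Limit

lemma tendsto_zero_of_forall_abs_le {ι : Type*} {l : Filter ι} {a b e : ι → ℝ} {B C : ℝ}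
    (hC : 0 < C) (he : ∀ n, ∀ τ > 0, |e n| ≤ C * (τ⁻¹ * a n + τ * b n))
    (ha : Tendsto a l (𝓝 0)) (hb : ∀ᶠ n in l, b n ≤ B) : Tendsto e l (𝓝 0) := by
  refine Metric.tendsto_nhds.2 fun ε hε => ?_
  set τ := ε / (2 * C * (|B| + 1)) with hτ
  have hτ0 : 0 < τ := by positivity
  have hτB : C * (τ * (|B| + 1)) = ε / 2 := by rw [hτ]; field_simp
  have hlim : Tendsto (fun n => C * (τ⁻¹ * a n)) l (𝓝 0) := by
    simpa using (ha.const_mul τ⁻¹).const_mul C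
  filter_upwards [hb, hlim.eventually (gt_mem_nhds (half_pos hε))] with n hbn han
  have hbound : C * (τ * b n) ≤ C * (τ * (|B| + 1)) := by
    gcongr
    linarith [le_abs_self B]
  rw [dist_zero_right, norm_eq_abs]
  linarith [he n τ hτ0]

lemma setIntegral_le_of_forall_sdiff_closedBall_le {E : Type*} [NormedAddCommGroup E]
    [MeasurableSpace E] [OpensMeasurableSpace E] {μ : Measure E} [NullSingletonClass μ] {S : Set E}
    {f : E → ℝ} {B : ℝ} (hf : 0 ≤ f)
    (hint : ∀ s > 0, IntegrableOn f (S \ closedBall 0 s) μ)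
    (hB : ∀ s > 0, ∫ x in S \ closedBall 0 s, f x ∂μ ≤ B) : ∫ x in S, f x ∂μ ≤ B := by
  let φ (n : ℕ) : Set E := (closedBall 0 (1 / ((n : ℝ) + 1)))ᶜ
  have hφ : AECover (μ.restrict S) atTop φ := by
    refine ⟨?_, fun n => measurableSet_closedBall.compl⟩
    filter_upwards [ae_restrict_of_ae (Measure.ae_ne μ 0)] with x hx
    filter_upwards [tendsto_one_div_add_atTop_nhds_zero_nat.eventually
      (gt_mem_nhds (norm_pos_iff.2 hx))] with n hn
    simpa [φ] using hn
  have hrestrict (n : ℕ) : (μ.restrict S).restrict (φ n) =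
      μ.restrict (S \ closedBall 0 (1 / ((n : ℝ) + 1))) := by
    rw [Measure.restrict_restrict measurableSet_closedBall.compl, Set.inter_comm, Set.sdiff_eq]
  have hφint (n : ℕ) : IntegrableOn f (φ n) (μ.restrict S) := by
    rw [IntegrableOn, hrestrict]
    exact hint _ (by positivity)
  have hφB (n : ℕ) : ∫ x in φ n, f x ∂μ.restrict S ≤ B := by
    rw [hrestrict]
    exact hB _ (by positivity)
  have hfS : Integrable f (μ.restrict S) :=
    hφ.integrable_of_integral_bounded_of_nonneg_ae B hφint (.of_forall hf) (.of_forall hφB)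
  exact le_of_tendsto' (hφ.integral_tendsto_of_countably_generated hfS) hφB

variable {α c₀ K ρ R s : ℝ} {Ω : Set E3} {u v : E3 → Fin 3 → ℝ} {η : E3 → ℝ} {x y : E3}

lemma setIntegral_ball_normSq_le (hΩ : IsOpen Ω) (hu : ContDiffOn ℝ ∞ u Ω)
    (hint : IntegrableOn (h1Density u) Ω) (hv : IsTestOn Ω v) (r : ℝ) :
    ∫ x in ball 0 r, normSq v x ≤
      2 * (∫ x in Ω ∩ ball 0 r, normSq u x) + 2 * ∫ x in Ω, h1Density (u - v) x := by
  have hd : ContDiffOn ℝ ∞ (u - v) Ω := hu.sub hv.1.contDiffOn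
  have hdint := integrableOn_h1Density_sub hΩ hu hint hv
  have hsub : Ω ∩ ball 0 r ⊆ Ω := Set.inter_subset_left
  have hu' := (integrableOn_normSq hΩ hu hint).mono_set hsub
  have hd' := (integrableOn_normSq hΩ hd hdint).mono_set hsub
  calc ∫ x in ball 0 r, normSq v x
      = ∫ x in Ω ∩ ball 0 r, normSq v x :=
        setIntegral_eq_of_subset_of_forall_sdiff_eq_zero measurableSet_ball
          Set.inter_subset_right fun x hx => normSq_eq_zero_of_notMem
            fun h => hx.2 ⟨hv.2.2 h, hx.1⟩
    _ ≤ ∫ x in Ω ∩ ball 0 r, 2 * normSq u x + 2 * normSq (u - v) x :=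
        integral_mono hv.integrable_normSq.integrableOn ((hu'.const_mul 2).add (hd'.const_mul 2))
          fun x => by simpa using normSq_sub_le u (u - v) x
    _ = 2 * (∫ x in Ω ∩ ball 0 r, normSq u x) + 2 * ∫ x in Ω ∩ ball 0 r, normSq (u - v) x := by
        rw [integral_add (hu'.const_mul 2) (hd'.const_mul 2), integral_const_mul,
          integral_const_mul]
    _ ≤ _ := by
        gcongr
        exact (integral_mono hd' (hdint.mono_set hsub) fun x => normSq_le_h1Density _ x).trans
          (setIntegral_mono_set hdint (.of_forall fun x => h1Density_nonneg _ x)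
            (.of_forall hsub))

lemma setIntegral_h1Density_le (hΩ : IsOpen Ω) (hu : ContDiffOn ℝ ∞ u Ω)
    (hint : IntegrableOn (h1Density u) Ω) (hv : IsTestOn Ω v) :
    ∫ x in Ω, h1Density v x ≤
      2 * (∫ x in Ω, h1Density u x) + 2 * ∫ x in Ω, h1Density (u - v) x := by
  have hdint := integrableOn_h1Density_sub hΩ hu hint hv
  calc ∫ x in Ω, h1Density v x
      ≤ ∫ x in Ω, 2 * h1Density u x + 2 * h1Density (u - v) x :=
        setIntegral_mono_on hv.integrable_h1Density.integrableOn
          ((hint.const_mul 2).add (hdint.const_mul 2)) hΩ.measurableSet fun x hx => by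
            simpa using h1Density_sub_le (v := u - v) (differentiableAt_component hΩ hu hx)
              (differentiableAt_component hΩ (hu.sub hv.1.contDiffOn) hx)
    _ = _ := by
        rw [integral_add (hint.const_mul 2) (hdint.const_mul 2), integral_const_mul,
          integral_const_mul]

lemma tendsto_lameError {U : Set E3} {d : ℝ} {v : ℕ → E3 → Fin 3 → ℝ} (hΩ : IsOpen Ω)
    (hu : ContDiffOn ℝ ∞ u Ω) (hint : IntegrableOn (h1Density u) Ω)
    (hLu : ∀ x ∈ Ω ∩ U, lame α u x = 0) (hη : ContDiff ℝ ∞ η) (hηc : HasCompactSupport η)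
    (hηU : tsupport η ⊆ U) (hd : 0 < d) (hv : ∀ n, IsTestOn Ω (v n))
    (hvu : ∀ n, ∀ x ∈ Ω, dist x y < d → v n x = u x)
    (hlim : Tendsto (fun n => ∫ x in Ω, h1Density (u - v n) x) atTop (𝓝 0)) :
    Tendsto (fun n => lameError α η (v n) y) atTop (𝓝 0) := by
  obtain ⟨C, hC, herror⟩ := exists_abs_lameError_le α hΩ hu hLu hη hηc hηU y hd
  have hdint (n : ℕ) := integrableOn_h1Density_sub hΩ hu hint (hv n)
  have hgrad (n : ℕ) : IntegrableOn (gradSq (u - v n)) Ω :=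
    integrableOn_gradSq hΩ (hu.sub (hv n).1.contDiffOn) (hdint n)
  refine tendsto_zero_of_forall_abs_le (B := 2 * (∫ x in Ω, h1Density u x) + 2 * 1) hC
    (fun n => herror (v n) (hv n) (hvu n) (hgrad n))
    (squeeze_zero (fun n => integral_nonneg (gradSq_nonneg _))
      (fun n => integral_mono (hgrad n) (hdint n) (gradSq_le_h1Density _)) hlim) ?_
  filter_upwards [hlim.eventually (ge_mem_nhds one_pos)] with n hn
  linarith [setIntegral_h1Density_le hΩ hu hint (hv n)]

lemma EnergyBound.exists_isTestOn_tendsto (h : EnergyBound α c₀ K ρ R Ω η) (hK : 0 ≤ K)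
    (hη : ContDiff ℝ ∞ η) (hηR : tsupport η ⊆ ball 0 (2 * R))
    (hΩ : IsOpen Ω) (hu : MemH10 Ω u) (hLu : ∀ x ∈ Ω ∩ ball 0 (2 * R), lame α u x = 0)
    (hy : ‖y‖ < ρ) (hyΩ : y ∉ frontier Ω) :
    ∃ (v : ℕ → E3 → Fin 3 → ℝ) (b : ℕ → ℝ), (∀ n, IsTestOn Ω (v n)) ∧
      (y ∈ Ω → ∀ n, v n y = u y) ∧
      Tendsto (fun n => ∫ x in Ω, h1Density (u - v n) x) atTop (𝓝 0) ∧
      Tendsto b atTop (𝓝 (2 * K * ∫ x in Ω ∩ ball 0 (2 * R), normSq u x)) ∧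
      ∀ n, 1 / 2 * normSq (v n) y + c₀ / 2 * (∫ x, gradSq (η • v n) x * ‖x - y‖⁻¹) ≤ b n := by
  obtain ⟨d, hd, v, hv, hvu, hlim⟩ := hu.exists_isTestOn_tendsto hΩ hyΩ
  have hηc : HasCompactSupport η := .of_support_subset_isCompact (isCompact_closedBall 0 (2 * R))
    ((subset_tsupport η).trans (hηR.trans ball_subset_closedBall))
  have herror := tendsto_lameError hΩ hu.1 hu.2.1 hLu hη hηc hηR hd hv hvu hlim
  set M := ∫ x in Ω ∩ ball 0 (2 * R), normSq u x
  refine ⟨v, fun n => K * (2 * M + 2 * ∫ x in Ω, h1Density (u - v n) x) +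
    |lameError α η (v n) y|, hv, fun hyΩ n => hvu n y hyΩ (by simpa using hd), hlim, ?_,
    fun n => (h y hy (v n) (hv n)).trans ?_⟩
  · convert (((hlim.const_mul 2).const_add (2 * M)).const_mul K).add herror.abs using 2
    simp
    ring
  · exact add_le_add (mul_le_mul_of_nonneg_left
      (setIntegral_ball_normSq_le hΩ hu.1 hu.2.1 (hv n) _) hK) le_rfl

lemma EnergyBound.normSq_le (h : EnergyBound α c₀ K ρ R Ω η) (hc₀ : 0 ≤ c₀) (hK : 0 ≤ K)
    (hη : ContDiff ℝ ∞ η) (hηR : tsupport η ⊆ ball 0 (2 * R))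
    (hΩ : IsOpen Ω) (hu : MemH10 Ω u) (hLu : ∀ x ∈ Ω ∩ ball 0 (2 * R), lame α u x = 0)
    (hx : x ∈ Ω ∩ ball 0 ρ) :
    normSq u x ≤ 4 * (K * ∫ x in Ω ∩ ball 0 (2 * R), normSq u x) := by
  have hxΩ : x ∉ frontier Ω := fun hmem => hΩ.inter_frontier_eq.subset ⟨hx.1, hmem⟩
  obtain ⟨v, b, -, hvu, -, hb, hvb⟩ :=
    h.exists_isTestOn_tendsto hK hη hηR hΩ hu hLu (mem_ball_zero_iff.1 hx.2) hxΩ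
  have hle : 1 / 2 * normSq u x ≤ 2 * K * ∫ x in Ω ∩ ball 0 (2 * R), normSq u x := by
    refine ge_of_tendsto' hb fun n => (hvb n).trans' ?_
    have hgrad : 0 ≤ ∫ z, gradSq (η • v n) z * ‖z - x‖⁻¹ :=
      integral_nonneg fun z => mul_nonneg (gradSq_nonneg _ z) (by positivity)
    rw [show normSq (v n) x = normSq u x by simp only [normSq, hvu hx.1 n]]
    exact le_add_of_nonneg_right (by positivity)
  linarith

lemma gradSq_congr (h : u =ᶠ[𝓝 x] v) : gradSq u x = gradSq v x := by
  unfold gradSq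
  congr! 3 with i _ k
  exact pd_congr (h.mono fun z hz => congrFun hz i)

lemma gradSq_neg (v : E3 → Fin 3 → ℝ) (x : E3) : gradSq (-v) x = gradSq v x := by
  simp [gradSq, pd, fderiv_fun_neg]

lemma gradSq_mul_norm_inv_le (hu : ∀ i, DifferentiableAt ℝ (fun z => u z i) x)
    (hv : ∀ i, DifferentiableAt ℝ (fun z => v z i) x) (hy : ‖y‖ < s) (hx : s < ‖x‖) :
    gradSq u x * ‖x‖⁻¹ ≤ 4 * (gradSq v x * ‖x - y‖⁻¹) + 2 / s * h1Density (u - v) x := by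
  have hs : 0 < s := (norm_nonneg y).trans_lt hy
  have hxy : 0 < ‖x - y‖ := by linarith [norm_sub_norm_le x y]
  have hinv : ‖x‖⁻¹ ≤ 2 * ‖x - y‖⁻¹ := by
    rw [← div_eq_mul_inv, inv_eq_one_div, div_le_div_iff₀ (hs.trans hx) hxy]
    linarith [norm_sub_le x y]
  have hgrad : gradSq u x ≤ 2 * gradSq v x + 2 * h1Density (u - v) x := by
    have hle : gradSq u x ≤ 2 * gradSq v x + 2 * gradSq (u - v) x := by
      rw [← gradSq_neg (u - v), neg_sub]
      simpa using gradSq_sub_le (v := v - u) hv fun i => (hv i).sub (hu i)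
    linarith [gradSq_le_h1Density (u - v) x]
  have hv0 := gradSq_nonneg v x
  have hd0 := h1Density_nonneg (u - v) x
  calc gradSq u x * ‖x‖⁻¹
      ≤ (2 * gradSq v x + 2 * h1Density (u - v) x) * ‖x‖⁻¹ := by gcongr
    _ = 2 * gradSq v x * ‖x‖⁻¹ + 2 * h1Density (u - v) x * ‖x‖⁻¹ := by ring
    _ ≤ 2 * gradSq v x * (2 * ‖x - y‖⁻¹) + 2 * h1Density (u - v) x * s⁻¹ := by gcongr
    _ = _ := by ring

lemma setIntegral_gradSq_mul_norm_inv_sdiff_le (hΩ : IsOpen Ω) (hu : ContDiffOn ℝ ∞ u Ω)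
    (hint : IntegrableOn (h1Density u) Ω) (hv : IsTestOn Ω v) (hη : ContDiff ℝ ∞ η)
    (hη1 : ∀ x ∈ ball 0 ρ, η x = 1) (hys : ‖y‖ < s) :
    ∫ x in (Ω ∩ ball 0 ρ) \ closedBall 0 s, gradSq u x * ‖x‖⁻¹ ≤
      4 * (∫ x, gradSq (η • v) x * ‖x - y‖⁻¹) + 2 / s * ∫ x in Ω, h1Density (u - v) x := by
  set A := (Ω ∩ ball 0 ρ) \ closedBall 0 s
  have hs : 0 < s := (norm_nonneg y).trans_lt hys
  have hA : MeasurableSet A :=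
    (hΩ.measurableSet.inter measurableSet_ball).diff measurableSet_closedBall
  have hAΩ : A ⊆ Ω := fun x hx => hx.1.1
  have hdint := integrableOn_h1Density_sub hΩ hu hint hv
  have hgint : Integrable fun x => gradSq (η • v) x * ‖x - y‖⁻¹ :=
    (hv.smul hη).integrable_gradSq_mul y
  calc ∫ x in A, gradSq u x * ‖x‖⁻¹
      ≤ ∫ x in A, 4 * (gradSq (η • v) x * ‖x - y‖⁻¹) + 2 / s * h1Density (u - v) x := by
        refine integral_mono_of_nonneg
          (.of_forall fun x => mul_nonneg (gradSq_nonneg u x) (by positivity))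
          ((hgint.integrableOn.const_mul 4).add ((hdint.mono_set hAΩ).const_mul (2 / s)))
          (ae_restrict_of_forall_mem hA fun x hx => ?_)
        have hηv : η • v =ᶠ[𝓝 x] v := by
          filter_upwards [isOpen_ball.mem_nhds hx.1.2] with z hz
          simp [hη1 z hz]
        simpa only [gradSq_congr hηv] using gradSq_mul_norm_inv_le
          (differentiableAt_component hΩ hu (hAΩ hx))
          (differentiableAt_component hΩ hv.1.contDiffOn (hAΩ hx)) hys (by simpa using hx.2)
    _ = 4 * (∫ x in A, gradSq (η • v) x * ‖x - y‖⁻¹) +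
          2 / s * ∫ x in A, h1Density (u - v) x := by
        rw [integral_add (hgint.integrableOn.const_mul 4)
          ((hdint.mono_set hAΩ).const_mul (2 / s)), integral_const_mul, integral_const_mul]
    _ ≤ _ := by
        refine add_le_add (mul_le_mul_of_nonneg_left ?_ (by positivity))
          (mul_le_mul_of_nonneg_left ?_ (by positivity))
        · exact setIntegral_le_integral hgint (.of_forall fun x =>
            mul_nonneg (gradSq_nonneg _ x) (by positivity))
        · exact setIntegral_mono_set hdint (.of_forall fun x => h1Density_nonneg _ x)
            (.of_forall hAΩ)

lemma EnergyBound.setIntegral_gradSq_le (h : EnergyBound α c₀ K ρ R Ω η) (hc₀ : 0 < c₀)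
    (hK : 0 ≤ K) (hη : ContDiff ℝ ∞ η)
    (hηR : tsupport η ⊆ ball 0 (2 * R)) (hη1 : ∀ x ∈ ball 0 ρ, η x = 1) (hΩ : IsOpen Ω)
    (hu : MemH10 Ω u) (hLu : ∀ x ∈ Ω ∩ ball 0 (2 * R), lame α u x = 0) (hys : ‖y‖ < s)
    (hyρ : ‖y‖ < ρ) (hyΩ : y ∉ frontier Ω) :
    ∫ x in (Ω ∩ ball 0 ρ) \ closedBall 0 s, gradSq u x * ‖x‖⁻¹ ≤
      16 / c₀ * (K * ∫ x in Ω ∩ ball 0 (2 * R), normSq u x) := by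
  obtain ⟨v, b, hv, -, hlim, hb, hvb⟩ :=
    h.exists_isTestOn_tendsto hK hη hηR hΩ hu hLu hyρ hyΩ
  set M := ∫ x in Ω ∩ ball 0 (2 * R), normSq u x
  have htendsto : Tendsto (fun n => 4 * (2 / c₀ * b n) +
      2 / s * ∫ x in Ω, h1Density (u - v n) x) atTop (𝓝 (16 / c₀ * (K * M))) := by
    convert ((hb.const_mul (2 / c₀)).const_mul 4).add (hlim.const_mul (2 / s)) using 2
    ring
  refine ge_of_tendsto' htendsto fun n => ?_
  have hgrad : ∫ x, gradSq (η • v n) x * ‖x - y‖⁻¹ ≤ 2 / c₀ * b n := by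
    rw [div_mul_eq_mul_div, le_div_iff₀ hc₀]
    linarith [hvb n, normSq_nonneg (v n) y]
  exact (setIntegral_gradSq_mul_norm_inv_sdiff_le hΩ hu.1 hu.2.1 (hv n) hη hη1 hys).trans
    (by gcongr)

lemma exists_norm_lt_notMem_frontier {E : Type*} [SeminormedAddCommGroup E] {Ω : Set E}
    (hΩ : IsOpen Ω) {r : ℝ} (hr : 0 < r) : ∃ y, ‖y‖ < r ∧ y ∉ frontier Ω := by
  by_contra! hfrontier
  have hball : ball 0 r ⊆ interior (frontier Ω) :=
    interior_maximal (fun y hy => hfrontier y (mem_ball_zero_iff.1 hy)) isOpen_ball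
  rw [← frontier_compl, interior_frontier hΩ.isClosed_compl] at hball
  exact hball (mem_ball_self hr)

lemma integrableOn_mul_norm_inv_sdiff_closedBall {E : Type*} [NormedAddCommGroup E]
    [MeasurableSpace E] [OpensMeasurableSpace E] {μ : Measure E} {S : Set E} {f : E → ℝ}
    (hS : MeasurableSet S) (hf : IntegrableOn f S μ) {s : ℝ} (hs : 0 < s) :
    IntegrableOn (fun x => f x * ‖x‖⁻¹) (S \ closedBall 0 s) μ := by
  refine (hf.mono_set Set.sdiff_subset).mul_bdd (c := s⁻¹) (by fun_prop)
    (ae_restrict_of_forall_mem (hS.diff measurableSet_closedBall) fun x hx => ?_)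
  have hsx : s < ‖x‖ := by simpa using hx.2
  rw [norm_inv, norm_norm]
  gcongr

/-- The origin may lie on `∂Ω`, where no approximating fields agreeing with `u` nearby are
available, so the energy bound is used at poles off `∂Ω` tending to the origin. -/
lemma EnergyBound.setIntegral_gradSq_mul_norm_inv_le (h : EnergyBound α c₀ K ρ R Ω η)
    (hc₀ : 0 < c₀) (hK : 0 ≤ K) (hη : ContDiff ℝ ∞ η)
    (hηR : tsupport η ⊆ ball 0 (2 * R)) (hρ : 0 < ρ) (hη1 : ∀ x ∈ ball 0 ρ, η x = 1)
    (hΩ : IsOpen Ω) (hu : MemH10 Ω u) (hLu : ∀ x ∈ Ω ∩ ball 0 (2 * R), lame α u x = 0) :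
    ∫ x in Ω ∩ ball 0 ρ, gradSq u x * ‖x‖⁻¹ ≤
      16 / c₀ * (K * ∫ x in Ω ∩ ball 0 (2 * R), normSq u x) := by
  refine setIntegral_le_of_forall_sdiff_closedBall_le
    (fun x => mul_nonneg (gradSq_nonneg u x) (by positivity)) (fun s hs => ?_) fun s hs => ?_
  · exact integrableOn_mul_norm_inv_sdiff_closedBall (hΩ.measurableSet.inter measurableSet_ball)
      ((integrableOn_gradSq hΩ hu.1 hu.2.1).mono_set Set.inter_subset_left) hs
  · obtain ⟨y, hy, hyΩ⟩ := exists_norm_lt_notMem_frontier hΩ (lt_min hs hρ)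
    exact h.setIntegral_gradSq_le hc₀ hK hη hηR hη1 hΩ hu hLu (lt_min_iff.1 hy).1
      (lt_min_iff.1 hy).2 hyΩ

lemma exists_setIntegral_gradSq_le_and_normSq_le (hc₀ : 0 < c₀) (hQPD : QPDhyp α c₀) :
    ∃ δ > 0, ∃ C > 0, ∀ Ω ρ R N, IsOpen Ω → 0 < ρ → ρ < R → (∀ k < N, 4 * (ρ * 2 ^ k) ≤ R) →
      ∀ u, MemH10 Ω u → (∀ x ∈ Ω ∩ ball 0 (2 * R), lame α u x = 0) →
      let B := C / R ^ 3 * exp (-2 * ∑ k ∈ Finset.range N, δ * wienerTerm Ω ρ k) *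
        ∫ x in Ω ∩ ball 0 (2 * R), normSq u x
      ∫ x in Ω ∩ ball 0 ρ, gradSq u x * ‖x‖⁻¹ ≤ B ∧ ∀ x ∈ Ω ∩ ball 0 ρ, normSq u x ≤ B := by
  obtain ⟨δ, hδ, C, hC, henergy⟩ := exists_energyBound_wienerCutoff hc₀ hQPD
  refine ⟨δ, hδ, (4 + 16 / c₀) * C, by positivity, fun Ω ρ R N hΩ hρ hρR hN u hu hLu => ?_⟩
  intro B
  have hR : 0 < R := hρ.trans hρR
  have hbound := henergy Ω ρ R N hρR hN
  set K := C / R ^ 3 * exp (-2 * ∑ k ∈ Finset.range N, δ * wienerTerm Ω ρ k)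
  have hK : 0 ≤ K := by positivity
  set M := ∫ x in Ω ∩ ball 0 (2 * R), normSq u x
  have hKM : 0 ≤ K * M := mul_nonneg hK (integral_nonneg (normSq_nonneg u))
  have hB : B = 4 * (K * M) + 16 / c₀ * (K * M) := by ring
  rw [hB]
  refine ⟨le_add_of_nonneg_of_le (by positivity) ?_,
    fun x hx => le_add_of_le_of_nonneg ?_ (by positivity)⟩
  · exact hbound.setIntegral_gradSq_mul_norm_inv_le hc₀ hK contDiff_agmonCutoff
      (tsupport_agmonCutoff_subset hR) hρ
      (fun x hx => agmonCutoff_eq_one hρ hρR (mem_ball_zero_iff.1 hx).le) hΩ hu hLu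
  · exact hbound.normSq_le hc₀.le hK contDiff_agmonCutoff (tsupport_agmonCutoff_subset hR) hΩ hu
      hLu hx

end Limit

/-! ### Comparison of the Wiener integral with its dyadic series -/

section WienerIntegral

variable {a b ρ R : ℝ} {Ω : Set E3}

lemma intervalIntegrable_capa_div_sq (Ω : Set E3) (ha : 0 < a) (hab : a ≤ b) :
    IntervalIntegrable (fun r => capa (closedBall 0 r \ Ω) / r ^ 2) volume a b := by
  have hmono : MonotoneOn (fun r => capa (closedBall 0 r \ Ω)) (Set.uIcc a b) := by
    rw [Set.uIcc_of_le hab]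
    intro r hr s _ hrs
    exact capa_mono ((ha.trans_le hr.1).trans_le hrs) Set.sdiff_subset
      (Set.sdiff_subset_sdiff_left (closedBall_subset_closedBall hrs))
  simp only [div_eq_mul_inv]
  refine hmono.intervalIntegrable.mul_continuousOn (ContinuousOn.inv₀ (by fun_prop) fun r hr => ?_)
  rw [Set.uIcc_of_le hab] at hr
  exact pow_ne_zero 2 (ha.trans_le hr.1).ne'

lemma intervalIntegral_le_mul_of_le {f : ℝ → ℝ} {c : ℝ} (hab : a ≤ b)
    (hf : IntervalIntegrable f volume a b)
    (h : ∀ r ∈ Set.Icc a b, f r ≤ c) : ∫ r in a..b, f r ≤ (b - a) * c := by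
  simpa using intervalIntegral.integral_mono_on hab hf intervalIntegrable_const h

lemma intervalIntegral_capa_le_of_le_two_mul (Ω : Set E3) (ha : 0 < a) (hab : a ≤ b)
    (hb : b ≤ 2 * a) :
    ∫ r in a..b, capa (closedBall 0 r \ Ω) / r ^ 2 ≤ capa (closedBall 0 (2 * a) \ Ω) / a := by
  refine (intervalIntegral_le_mul_of_le (c := capa (closedBall 0 (2 * a) \ Ω) / a ^ 2) hab
    (intervalIntegrable_capa_div_sq Ω ha hab) fun r hr => ?_).trans ?_
  · have hcapa : capa (closedBall 0 r \ Ω) ≤ capa (closedBall 0 (2 * a) \ Ω) :=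
      capa_mono (by positivity) Set.sdiff_subset
        (Set.sdiff_subset_sdiff_left (closedBall_subset_closedBall (hr.2.trans hb)))
    exact div_le_div₀ (capa_nonneg _) hcapa (by positivity) (by gcongr; exact hr.1)
  · have hcapa := capa_nonneg (closedBall 0 (2 * a) \ Ω)
    calc (b - a) * (capa (closedBall 0 (2 * a) \ Ω) / a ^ 2)
        ≤ a * (capa (closedBall 0 (2 * a) \ Ω) / a ^ 2) := by gcongr; linarith
      _ = _ := by field_simp

lemma intervalIntegral_capa_le_sum_wienerTerm (hρ : 0 < ρ) (N : ℕ) :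
    ∫ r in ρ..ρ * 2 ^ N, capa (closedBall 0 r \ Ω) / r ^ 2 ≤
      ∑ k ∈ Finset.range N, wienerTerm Ω ρ k := by
  have hpos (k : ℕ) : 0 < ρ * 2 ^ k := by positivity
  have hdouble (k : ℕ) : ρ * 2 ^ (k + 1) = 2 * (ρ * 2 ^ k) := by ring
  have hle (k : ℕ) : ρ * 2 ^ k ≤ ρ * 2 ^ (k + 1) := by linarith [hpos k, hdouble k]
  have hsum := intervalIntegral.sum_integral_adjacent_intervals (a := fun k => ρ * 2 ^ k) (n := N)
    fun k _ => intervalIntegrable_capa_div_sq Ω (hpos k) (hle k)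
  rw [pow_zero, mul_one] at hsum
  rw [← hsum]
  exact Finset.sum_le_sum fun k _ =>
    intervalIntegral_capa_le_of_le_two_mul Ω (hpos k) (hle k) (hdouble k).le

lemma exists_forall_lt_four_mul_le (hρ : 0 < ρ) (hρR : ρ ≤ R) :
    ∃ N : ℕ, (∀ k < N, 4 * (ρ * 2 ^ k) ≤ R) ∧ ρ * 2 ^ N ≤ R ∧ R < 4 * (ρ * 2 ^ N) := by
  classical
  have hex : ∃ N : ℕ, R < 4 * (ρ * 2 ^ N) := by
    obtain ⟨n, hn⟩ := pow_unbounded_of_one_lt (R / ρ) one_lt_two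
    rw [div_lt_iff₀ hρ] at hn
    exact ⟨n, by linarith [show 0 < ρ * 2 ^ n by positivity]⟩
  have hmin : ∀ k < Nat.find hex, 4 * (ρ * 2 ^ k) ≤ R := fun k hk =>
    not_lt.1 (Nat.find_min hex hk)
  refine ⟨Nat.find hex, hmin, ?_, Nat.find_spec hex⟩
  rcases hN : Nat.find hex with _ | m
  · simpa using hρR
  · have hm := hmin m (hN ▸ Nat.lt_succ_self m)
    rw [pow_succ]
    linarith [show 0 < ρ * 2 ^ m by positivity]

lemma exists_intervalIntegral_capa_le_sum_wienerTerm :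
    ∃ A > 0, ∀ Ω ρ R, 0 < ρ → ρ < R → ∃ N : ℕ, (∀ k < N, 4 * (ρ * 2 ^ k) ≤ R) ∧
      ∫ r in ρ..R, capa (closedBall 0 r \ Ω) / r ^ 2 ≤
        (∑ k ∈ Finset.range N, wienerTerm Ω ρ k) + A := by
  obtain ⟨A, hA, hcapa⟩ := exists_capa_le
  refine ⟨3 * A, by positivity, fun Ω ρ R hρ hρR => ?_⟩
  obtain ⟨N, hN, hNR, hRN⟩ := exists_forall_lt_four_mul_le hρ hρR.le
  have hpos : 0 < ρ * 2 ^ N := by positivity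
  have hlast : ∫ r in ρ * 2 ^ N..R, capa (closedBall 0 r \ Ω) / r ^ 2 ≤
      (R - ρ * 2 ^ N) * (A / (ρ * 2 ^ N)) := by
    refine intervalIntegral_le_mul_of_le hNR (intervalIntegrable_capa_div_sq Ω hpos hNR)
      fun r hr => ?_
    have hr0 : 0 < r := hpos.trans_le hr.1
    calc capa (closedBall 0 r \ Ω) / r ^ 2
        ≤ A * r / r ^ 2 := by gcongr; exact hcapa _ r hr0 Set.sdiff_subset
      _ = A / r := by field_simp
      _ ≤ A / (ρ * 2 ^ N) := by gcongr; exact hr.1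
  refine ⟨N, hN, ?_⟩
  rw [← intervalIntegral.integral_add_adjacent_intervals (intervalIntegrable_capa_div_sq Ω hρ
    (le_mul_of_one_le_right hρ.le (one_le_pow₀ one_le_two)))
    (intervalIntegrable_capa_div_sq Ω hpos hNR)]
  refine add_le_add (intervalIntegral_capa_le_sum_wienerTerm hρ N) (hlast.trans ?_)
  calc (R - ρ * 2 ^ N) * (A / (ρ * 2 ^ N))
      ≤ 3 * (ρ * 2 ^ N) * (A / (ρ * 2 ^ N)) := by gcongr; linarith
    _ = 3 * A := by field_simp

lemma exists_exp_neg_sum_wienerTerm_le {δ : ℝ} (hδ : 0 ≤ δ) :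
    ∃ C > 0, ∀ Ω ρ R, 0 < ρ → ρ < R → ∃ N : ℕ, (∀ k < N, 4 * (ρ * 2 ^ k) ≤ R) ∧
      exp (-2 * ∑ k ∈ Finset.range N, δ * wienerTerm Ω ρ k) ≤
        C * exp (-(2 * δ) * ∫ r in ρ..R, capa (closedBall 0 r \ Ω) / r ^ 2) := by
  obtain ⟨A, -, hA⟩ := exists_intervalIntegral_capa_le_sum_wienerTerm
  refine ⟨exp (2 * δ * A), exp_pos _, fun Ω ρ R hρ hρR => ?_⟩
  obtain ⟨N, hN, hsum⟩ := hA Ω ρ R hρ hρR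
  refine ⟨N, hN, ?_⟩
  rw [← exp_add, exp_le_exp, ← Finset.mul_sum]
  linarith [mul_le_mul_of_nonneg_left hsum (mul_nonneg zero_le_two hδ)]

end WienerIntegral

lemma exists_setIntegral_gradSq_le_and_normSq_le_exp {α c₀ : ℝ} (hc₀ : 0 < c₀)
    (hQPD : QPDhyp α c₀) :
    ∃ c₁ > 0, ∃ c₂ > 0, ∀ Ω ρ R, IsOpen Ω → 0 < ρ → ρ < R → ∀ u, MemH10 Ω u →
      (∀ x ∈ Ω ∩ ball 0 (2 * R), lame α u x = 0) →
      let B := c₁ * MRho Ω (2 * R) u *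
        exp (-c₂ * ∫ r in ρ..R, capa (closedBall 0 r \ Ω) / r ^ 2)
      ∫ x in Ω ∩ ball 0 ρ, gradSq u x * ‖x‖⁻¹ ≤ B ∧ ∀ x ∈ Ω ∩ ball 0 ρ, normSq u x ≤ B := by
  obtain ⟨δ, hδ, C, hC, hestimate⟩ := exists_setIntegral_gradSq_le_and_normSq_le hc₀ hQPD
  obtain ⟨C', hC', hwiener⟩ := exists_exp_neg_sum_wienerTerm_le hδ.le
  refine ⟨8 * (C * C'), by positivity, 2 * δ, by positivity, fun Ω ρ R hΩ hρ hρR u hu hLu => ?_⟩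
  intro B
  have hR : 0 < R := hρ.trans hρR
  obtain ⟨N, hN, hexp⟩ := hwiener Ω ρ R hρ hρR
  obtain ⟨hgrad, hnorm⟩ := hestimate Ω ρ R N hΩ hρ hρR hN u hu hLu
  set M := ∫ x in Ω ∩ ball 0 (2 * R), normSq u x
  have hM : 0 ≤ M := integral_nonneg (normSq_nonneg u)
  set W := ∫ r in ρ..R, capa (closedBall 0 r \ Ω) / r ^ 2
  have hB : C / R ^ 3 * exp (-2 * ∑ k ∈ Finset.range N, δ * wienerTerm Ω ρ k) * M ≤ B :=
    calc _ ≤ C / R ^ 3 * (C' * exp (-(2 * δ) * W)) * M := by gcongr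
      _ = 8 * (C * C') * (((2 * R) ^ 3)⁻¹ * M) * exp (-(2 * δ) * W) := by
        rw [mul_pow]; field_simp; ring
  exact ⟨hgrad.trans hB, fun x hx => (hnorm x hx).trans hB⟩

/-- Under (QPD): if `Lu = 0` on `Ω ∩ B_{2R}` then for all `ρ ∈ (0, R)`,
`sup_{Ω∩B_ρ} |u|² + ∫_{Ω∩B_ρ} |Du(x)|²/|x| dx ≤ c₁ M_{2R}(u) exp(-c₂ ∫_ρ^R cap(B̄_r∖Ω) r⁻² dr)`,
with `c₁, c₂` depending only on `α, c₀`. -/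
theorem lame_decay_estimate
    (α : ℝ) (hα : -1 < α) (c₀ : ℝ) (hc₀ : 0 < c₀) (hQPD : QPDhyp α c₀) :
    ∃ c₁ > (0 : ℝ), ∃ c₂ > (0 : ℝ), ∀ Ω : Set E3, IsOpen Ω → ∀ R : ℝ, 0 < R →
      ∀ u : E3 → Fin 3 → ℝ, MemH10 Ω u →
      (∀ x ∈ Ω ∩ ball (0 : E3) (2 * R), ∀ i, lame α u x i = 0) →
      ∀ ρ : ℝ, 0 < ρ → ρ < R →
        (∫ x in Ω ∩ ball (0 : E3) ρ,
            (∑ i, ∑ k, (pd k (fun z => u z i) x) ^ 2) * ‖x‖⁻¹) ≤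
          c₁ * MRho Ω (2 * R) u *
            Real.exp (-c₂ * ∫ r in ρ..R, capa (closedBall (0 : E3) r \ Ω) / r ^ 2) ∧
        ∀ x₀ ∈ Ω ∩ ball (0 : E3) ρ,
          (∑ i, (u x₀ i) ^ 2) +
              (∫ x in Ω ∩ ball (0 : E3) ρ,
                (∑ i, ∑ k, (pd k (fun z => u z i) x) ^ 2) * ‖x‖⁻¹) ≤
            c₁ * MRho Ω (2 * R) u *
              Real.exp (-c₂ * ∫ r in ρ..R, capa (closedBall (0 : E3) r \ Ω) / r ^ 2) := by
  obtain ⟨c₁, hc₁, c₂, hc₂, hestimate⟩ := exists_setIntegral_gradSq_le_and_normSq_le_exp hc₀ hQPD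
  refine ⟨2 * c₁, by positivity, c₂, hc₂, fun Ω hΩ R _ u hu hLu ρ hρ hρR => ?_⟩
  obtain ⟨hgrad, hnorm⟩ := hestimate Ω ρ R hΩ hρ hρR u hu fun x hx => funext (hLu x hx)
  have hgrad0 : 0 ≤ ∫ x in Ω ∩ ball 0 ρ, gradSq u x * ‖x‖⁻¹ :=
    integral_nonneg fun x => mul_nonneg (gradSq_nonneg u x) (by positivity)
  rw [mul_assoc 2, mul_assoc 2, two_mul]
  exact ⟨hgrad.trans (le_add_of_nonneg_left (hgrad0.trans hgrad)),
    fun x hx => add_le_add (hnorm x hx) hgrad⟩
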